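/- Let p ∈ (1,∞), κ ∈ (0,1) and w ∈ A_p(𝓗^{n-1}), and fix a smooth φ: ℝ → [0,1] with φ ≡ 0 on (−∞,1/2] and φ ≡ 1 on [1,∞). Then there exists a constant C > 0 such that for every f ∈ L^{p,κ}_w(𝓗^{n-1}), ‖𝒞_* f‖_{L^{p,κ}_w(𝓗^{n-1})} + ‖Mf‖_{L^{p,κ}_w(𝓗^{n-1})} ≤ C ‖f‖_{L^{p,κ}_w(𝓗^{n-1})}. -/

import Mathlib

/-!
The quaternionic Heisenberg group with its Korányi-type metric and Lebesgue measure is a metric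
measure space in which every ball of radius `r` has measure `v * r ^ Q`, `Q = 4 * n + 2`.  The four
real components of the truncated Cauchy–Szegő kernels are shown to be Calderón–Zygmund kernels with
bounds independent of the truncation parameter, and everything else is Calderón–Zygmund theory on
such a space, carried out in the namespace `CZ`.

*Kernels.* Homogeneity under the dilations `(t, y) ↦ (s² t, s y)` and compactness of the unit sphere
give the size and Lipschitz bounds.  Cancellation means that the integral of a component against any
radial cutoff supported in an annulus vanishes: imaginary components are odd in `t`, while the real
component is a derivative of positive order, in the real variable `u = |y|²`, of `Re (conj σ / |σ|⁴)`.
After the substitution `t = |y|² τ` and Fubini it remains to see that the integral of such a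
derivative over a slice `{u} × Im ℍ` vanishes (`fk_integral`): by homogeneity the slice integral of
`Re (conj σ / |σ|⁴)` itself does not depend on `u`, so its `u`-derivatives are zero.

*Unweighted bounds.* A truncated kernel is split into dyadic pieces.  Cancellation and smoothness
make the associated operators almost orthogonal (Schur's test applied to the composed kernels), so
the Cotlar–Stein lemma bounds the truncations on `L²`, uniformly in the parameter (`CZF.op_L2`).
Cotlar's inequality controls the truncations at scales `≥ ε` by the maximal functions of `f`, of
`f²`, and of the truncation at scale `ε`, giving weak type (2,2); a Whitney covering of the level set of `Mf` and the corresponding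
Calderón–Zygmund decomposition give weak type (1,1).

*Weights.* Muckenhoupt's theorem for `M` follows from Lerner's pointwise estimate of `Mf` by an
iterated pair of weighted maximal functions, which needs no reverse Hölder inequality.  An `A_p`
weight satisfies `w(E) ≤ (1 - c) w(B)` whenever `E ⊆ B` and `|E| ≤ |B| / 2`, and this quantitative absolute
continuity turns the weak type (1,1) bound into a good-`λ` inequality between `𝒞_*` and `M`, hence
into the weighted `L^p` bound for `𝒞_*`.

*Morrey norms.* On a ball `B`, split `f` into its restriction to an enlarged ball, treated by the
weighted `L^p` bound, and the rest, which is bounded on `B` by a sum of averages of `|f|` over the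
dilates `2^j B`.  Each of these averages is at most a multiple of `‖f‖ w(2^j B)^((κ-1)/p)`; reverse doubling of
`w` and `κ < 1` make the sum geometric.

The defining condition for the weight also admits `w = 0` almost everywhere; both norms then vanish
identically, and otherwise `w > 0` almost everywhere (`weight_dichotomy`).
-/

open MeasureTheory Filter Topology ENNReal NNReal
noncomputable section

namespace QHeis

abbrev G (n : ℕ) := (Fin 3 → ℝ) × (Fin (4*(n-1)) → ℝ)

def bmat : Fin 3 → Fin 4 → Fin 4 → ℝ :=
  ![![![0,1,0,0], ![-1,0,0,0], ![0,0,0,-1], ![0,0,1,0]],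
    ![![0,0,1,0], ![0,0,0,1], ![-1,0,0,0], ![0,-1,0,0]],
    ![![0,0,0,1], ![0,0,-1,0], ![0,1,0,0], ![-1,0,0,0]]]

def idx {n : ℕ} (l : Fin (n-1)) (k : Fin 4) : Fin (4*(n-1)) :=
  ⟨4 * l.1 + k.1, by have h1 := l.2; have h2 := k.2; omega⟩

def mul {n : ℕ} (a b : G n) : G n :=
  (fun α => a.1 α + b.1 α +
      2 * ∑ l : Fin (n-1), ∑ k : Fin 4, ∑ j : Fin 4,
        bmat α k j * a.2 (idx l k) * b.2 (idx l j),
    a.2 + b.2)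

def inv {n : ℕ} (a : G n) : G n := (-a.1, -a.2)

def hnorm {n : ℕ} (g : G n) : ℝ :=
  ((∑ i, (g.2 i)^2)^2 + ∑ α, (g.1 α)^2) ^ ((4:ℝ)⁻¹)

def rho {n : ℕ} (h g : G n) : ℝ := hnorm (mul (inv g) h)

def ball {n : ℕ} (g : G n) (r : ℝ) : Set (G n) := {h | rho h g < r}

def dil {n : ℕ} (r : ℝ) (g : G n) : G n := (fun α => r^2 * g.1 α, fun i => r * g.2 i)

def avg {n : ℕ} (B : Set (G n)) (f : G n → ℝ) : ℝ := (volume B).toReal⁻¹ * ∫ x in B, f x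

def oscB {n : ℕ} (f : G n → ℝ) (g : G n) (r : ℝ) : ℝ :=
  avg (ball g r) (fun x => |f x - avg (ball g r) f|)

def IsLocInt {n : ℕ} (f : G n → ℝ) : Prop :=
  ∀ (g : G n) (r : ℝ), 0 < r → IntegrableOn f (ball g r)

def InBMO {n : ℕ} (b : G n → ℝ) : Prop :=
  IsLocInt b ∧ ∃ C : ℝ, ∀ (g : G n) (r : ℝ), 0 < r → oscB b g r ≤ C

def bmoNorm {n : ℕ} (b : G n → ℝ) : ℝ :=
  sInf {C : ℝ | 0 ≤ C ∧ ∀ (g : G n) (r : ℝ), 0 < r → oscB b g r ≤ C}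

def InVMO {n : ℕ} (b : G n → ℝ) : Prop :=
  InBMO b ∧ ∀ ε : ℝ, 0 < ε → ∃ φ : G n → ℝ, ContDiff ℝ (⊤ : ℕ∞) φ ∧ HasCompactSupport φ ∧
    InBMO (fun x => b x - φ x) ∧ bmoNorm (fun x => b x - φ x) < ε

def wInt {n : ℕ} (w : G n → ℝ) (E : Set (G n)) : ℝ≥0∞ := ∫⁻ x in E, ENNReal.ofReal (w x)

def IsApGt1 {n : ℕ} (p : ℝ) (w : G n → ℝ) : Prop :=
  ∃ C : ℝ, ∀ (g : G n) (r : ℝ), 0 < r →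
    (wInt w (ball g r) / volume (ball g r)) *
      ((∫⁻ x in ball g r, (ENNReal.ofReal (w x)) ^ (-(1/(p-1)))) / volume (ball g r)) ^ (p-1)
      ≤ ENNReal.ofReal C

def IsA1 {n : ℕ} (w : G n → ℝ) : Prop :=
  ∃ C : ℝ, ∀ (g : G n) (r : ℝ), 0 < r →
    wInt w (ball g r) / volume (ball g r)
      ≤ ENNReal.ofReal C * essInf (fun x => ENNReal.ofReal (w x)) (volume.restrict (ball g r))

def IsAp {n : ℕ} (p : ℝ) (w : G n → ℝ) : Prop :=
  Measurable w ∧ (∀ x, 0 ≤ w x) ∧ (∀ (g : G n) (r : ℝ), 0 < r → wInt w (ball g r) < ⊤) ∧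
    ((p = 1 ∧ IsA1 w) ∨ (1 < p ∧ IsApGt1 p w))

def morreyNormE {n : ℕ} (p κ : ℝ) (w : G n → ℝ) (F : G n → ℝ≥0∞) : ℝ≥0∞ :=
  ⨆ (g : G n) (r : ℝ) (_ : 0 < r),
    ((∫⁻ x in ball g r, (F x) ^ p * ENNReal.ofReal (w x)) / (wInt w (ball g r)) ^ κ) ^ (1/p)

def morreyNorm {n : ℕ} (p κ : ℝ) (w f : G n → ℝ) : ℝ≥0∞ :=
  morreyNormE p κ w (fun x => ENNReal.ofReal |f x|)

def MemMorrey {n : ℕ} (p κ : ℝ) (w f : G n → ℝ) : Prop :=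
  Measurable f ∧ morreyNorm p κ w f < ⊤

def lpwNorm {n : ℕ} (p : ℝ) (w f : G n → ℝ) : ℝ≥0∞ :=
  (∫⁻ g, (ENNReal.ofReal |f g|) ^ p * ENNReal.ofReal (w g)) ^ (1/p)

def lpwNormQ {n : ℕ} (p : ℝ) (w : G n → ℝ) (f : G n → Quaternion ℝ) : ℝ≥0∞ :=
  (∫⁻ g, (ENNReal.ofReal ‖f g‖) ^ p * ENNReal.ofReal (w g)) ^ (1/p)

def dre (F : Quaternion ℝ → Quaternion ℝ) (σ : Quaternion ℝ) : Quaternion ℝ :=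
  deriv (fun s : ℝ => F (σ + (s : Quaternion ℝ))) 0

def sker (m : ℕ) (c : ℝ) (σ : Quaternion ℝ) : Quaternion ℝ :=
  c • (dre^[m] (fun τ => ((Quaternion.normSq τ) ^ 2)⁻¹ • star τ)) σ

def toQ {n : ℕ} (g : G n) : Quaternion ℝ := ⟨∑ i, (g.2 i)^2, g.1 0, g.1 1, g.1 2⟩

def Kker {n : ℕ} (c : ℝ) (g : G n) : Quaternion ℝ := sker (2*(n-1)) c (toQ g)

def Kker2 {n : ℕ} (c : ℝ) (g h : G n) : Quaternion ℝ := Kker c (mul (inv h) g)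

def commTendsto {n : ℕ} (c : ℝ) (b f : G n → ℝ) (g : G n) (L : Quaternion ℝ) : Prop :=
  Tendsto (fun ε : ℝ => ∫ h in {h : G n | ε < rho g h}, ((b g - b h) * f h) • Kker2 c g h)
    (nhdsWithin 0 (Set.Ioi 0)) (nhds L)

def commFun {n : ℕ} (c : ℝ) (b f : G n → ℝ) (g : G n) : Quaternion ℝ :=
  limUnder (nhdsWithin (0:ℝ) (Set.Ioi 0))
    (fun ε : ℝ => ∫ h in {h : G n | ε < rho g h}, ((b g - b h) * f h) • Kker2 c g h)

def eT {n : ℕ} (α : Fin 3) : G n := (Pi.single α 1, 0)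
def eY {n : ℕ} (i : Fin (4*(n-1))) : G n := (0, Pi.single i 1)

def pderiv {n : ℕ} (v : G n) (f : G n → ℝ) (g : G n) : ℝ :=
  deriv (fun s : ℝ => f (g + s • v)) 0

def Y {n : ℕ} (l : Fin (n-1)) (j : Fin 4) (f : G n → ℝ) (g : G n) : ℝ :=
  pderiv (eY (idx l j)) f g +
    2 * ∑ α : Fin 3, (∑ k : Fin 4, bmat α k j * g.2 (idx l k)) * pderiv (eT α) f g

def gradHsup {n : ℕ} (b : G n → ℝ) : ℝ :=
  sSup {a : ℝ | ∃ (g : G n) (l : Fin (n-1)) (j : Fin 4), a = |Y l j b g|}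

def maxFunE {n : ℕ} (f : G n → ℝ) (g : G n) : ℝ≥0∞ :=
  ⨆ (g0 : G n) (r : ℝ) (_ : 0 < r) (_ : g ∈ ball g0 r),
    (∫⁻ x in ball g0 r, ENNReal.ofReal |f x|) / volume (ball g0 r)

def Ceta {n : ℕ} (c : ℝ) (φ : ℝ → ℝ) (η : ℝ) (f : G n → ℝ) (g : G n) : Quaternion ℝ :=
  ∫ h, (φ (rho g h / η) * f h) • Kker2 c g h

def commEta {n : ℕ} (c : ℝ) (φ : ℝ → ℝ) (η : ℝ) (b f : G n → ℝ) (g : G n) : Quaternion ℝ :=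
  ∫ h, ((b g - b h) * (φ (rho g h / η) * f h)) • Kker2 c g h

def CstarE {n : ℕ} (c : ℝ) (φ : ℝ → ℝ) (f : G n → ℝ) (g : G n) : ℝ≥0∞ :=
  ⨆ (η : ℝ) (_ : 0 < η), ENNReal.ofReal ‖Ceta c φ η f g‖

def IsCompactComm {n : ℕ} (c p κ : ℝ) (w b : G n → ℝ) : Prop :=
  ∀ F : Set (G n → ℝ), (∀ f ∈ F, MemMorrey p κ w f) →
    (∃ M : ℝ, ∀ f ∈ F, morreyNorm p κ w f ≤ ENNReal.ofReal M) →
    ∀ ε : ℝ, 0 < ε → ∃ T : Set (G n → Quaternion ℝ), T.Finite ∧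
      ∀ f ∈ F, ∃ t ∈ T,
        morreyNormE p κ w (fun g => ENNReal.ofReal ‖commFun c b f g - t g‖) < ENNReal.ofReal ε

end QHeis

set_option linter.unusedSectionVars false

/-! ### Layer cake formula and the maximal function -/

namespace CZ

theorem layer_point {q : ℝ} (hq : 0 < q) (a : ℝ≥0∞) :
    ∫⁻ s in Set.Ioi (0:ℝ), (if ENNReal.ofReal s < a then ENNReal.ofReal (q * s^(q-1)) else 0)
      = a ^ q := by
  have key : ∀ b : ℝ, 0 ≤ b → ∫⁻ s in Set.Ioi (0:ℝ), (if ENNReal.ofReal s < ENNReal.ofReal b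
      then ENNReal.ofReal (q * s^(q-1)) else 0) = (ENNReal.ofReal b) ^ q := by
    intro b hb
    have h := lintegral_rpow_eq_lintegral_meas_lt_mul (Measure.dirac ()) (f := fun _ => b)
      (Eventually.of_forall fun _ => hb) aemeasurable_const hq
    simp only [lintegral_dirac] at h
    rw [ENNReal.ofReal_rpow_of_nonneg hb hq.le, h, ← lintegral_const_mul' _ _ ENNReal.ofReal_ne_top]
    refine setLIntegral_congr_fun measurableSet_Ioi fun s hs => ?_
    have hs' : (0:ℝ) < s := hs
    by_cases hsb : s < b
    · have hb0 : 0 < b := hs'.trans hsb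
      simp [hsb, ENNReal.ofReal_lt_ofReal_iff hb0, ENNReal.ofReal_mul hq.le]
    · have : ¬ (ENNReal.ofReal s < ENNReal.ofReal b) :=
        not_lt.2 (ENNReal.ofReal_le_ofReal (not_lt.1 hsb))
      simp [this, hsb]
  rcases eq_or_ne a ⊤ with rfl | ha
  · rw [ENNReal.top_rpow_of_pos hq]
    refine ENNReal.eq_top_of_forall_nnreal_le fun r => ?_
    have h1 := key ((r:ℝ) ^ (1/q)) (by positivity)
    have e : ENNReal.ofReal ((r:ℝ) ^ (1/q)) ^ q = r := by
      rw [ENNReal.ofReal_rpow_of_nonneg (by positivity) hq.le, ← Real.rpow_mul r.coe_nonneg,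
        one_div_mul_cancel hq.ne', Real.rpow_one, ENNReal.ofReal_coe_nnreal]
    rw [e] at h1
    rw [← h1]
    refine lintegral_mono fun s => ?_
    simp only [ENNReal.ofReal_lt_top, if_true]
    split_ifs
    · exact le_rfl
    · exact zero_le
  · have := key a.toReal ENNReal.toReal_nonneg
    rwa [ENNReal.ofReal_toReal ha] at this

/-- The layer cake formula for functions with values in `ℝ≥0∞`, integrated over real levels. -/
theorem layer_cake {X : Type*} [MeasurableSpace X] (μ : Measure X) [SFinite μ] {q : ℝ} (hq : 0 < q)
    {F : X → ℝ≥0∞} (hF : Measurable F) :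
    ∫⁻ x, F x ^ q ∂μ
      = ∫⁻ s in Set.Ioi (0:ℝ), μ {x | ENNReal.ofReal s < F x} * ENNReal.ofReal (q * s^(q-1)) := by
  simp_rw [← layer_point hq]
  rw [lintegral_lintegral_swap]
  · refine lintegral_congr fun s => ?_
    have : ∀ x, (if ENNReal.ofReal s < F x then ENNReal.ofReal (q * s^(q-1)) else 0)
        = Set.indicator {x | ENNReal.ofReal s < F x}
          (fun _ => ENNReal.ofReal (q * s^(q-1))) x := by
      intro x; simp [Set.indicator]
    simp_rw [this]
    rw [lintegral_indicator_const (measurableSet_lt measurable_const hF), mul_comm]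
  · apply Measurable.aemeasurable
    refine Measurable.ite (measurableSet_lt (by fun_prop) (by fun_prop)) ?_ measurable_const
    fun_prop

variable {X : Type*} [MetricSpace X] [MeasurableSpace X]

/-- The uncentred Hardy–Littlewood maximal function of `F` with respect to `ν`. -/
def maxFn (ν : Measure X) (F : X → ℝ≥0∞) (x : X) : ℝ≥0∞ :=
  ⨆ (x0 : X) (r : ℝ) (_ : 0 < r) (_ : x ∈ Metric.ball x0 r),
    (∫⁻ y in Metric.ball x0 r, F y ∂ν) / ν (Metric.ball x0 r)

/-- `ν` is doubling with constant `D`, and balls have positive finite measure.  The dilation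
factor `6` is the one produced by the Vitali covering lemma. -/
structure Doubling (ν : Measure X) (D : ℝ≥0∞) : Prop where
  pos : ∀ x r, 0 < r → 0 < ν (Metric.ball x r)
  fin : ∀ x r, ν (Metric.ball x r) < ⊤
  dbl : ∀ x r, 0 < r → ν (Metric.ball x (6*r)) ≤ D * ν (Metric.ball x r)
  D_ne_top : D ≠ ⊤

theorem lt_maxFn_iff (ν : Measure X) (F : X → ℝ≥0∞) (x : X) (t : ℝ≥0∞) :
    t < maxFn ν F x ↔ ∃ x0 r, 0 < r ∧ x ∈ Metric.ball x0 r ∧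
      t < (∫⁻ y in Metric.ball x0 r, F y ∂ν) / ν (Metric.ball x0 r) := by
  simp only [maxFn, lt_iSup_iff, exists_prop]

theorem avg_le_maxFn (ν : Measure X) (F : X → ℝ≥0∞) {x x0 : X} {r : ℝ} (hr : 0 < r)
    (hx : x ∈ Metric.ball x0 r) :
    (∫⁻ y in Metric.ball x0 r, F y ∂ν) / ν (Metric.ball x0 r) ≤ maxFn ν F x := by
  unfold maxFn
  exact le_iSup_of_le x0 (le_iSup_of_le r (le_iSup_of_le hr (le_iSup_of_le hx le_rfl)))

theorem isOpen_lt_maxFn (ν : Measure X) (F : X → ℝ≥0∞) (t : ℝ≥0∞) :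
    IsOpen {x | t < maxFn ν F x} := by
  rw [isOpen_iff_forall_mem_open]
  intro x hx
  obtain ⟨x0, r, hr, hx0, h⟩ := (lt_maxFn_iff ν F x t).1 hx
  exact ⟨Metric.ball x0 r, fun y hy => (lt_maxFn_iff ν F y t).2 ⟨x0, r, hr, hy, h⟩,
    Metric.isOpen_ball, hx0⟩

variable [BorelSpace X]

theorem measurable_maxFn (ν : Measure X) (F : X → ℝ≥0∞) : Measurable (maxFn ν F) :=
  measurable_of_Ioi fun t => (isOpen_lt_maxFn ν F t).measurableSet

variable [SecondCountableTopology X]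

/-- Weak type `(1,1)` bound, by the Vitali covering lemma. -/
theorem maxFn_weak {ν : Measure X} {D : ℝ≥0∞} (hν : Doubling ν D) (F : X → ℝ≥0∞) (t : ℝ≥0∞) :
    t * ν {x | t < maxFn ν F x} ≤ D * ∫⁻ x, F x ∂ν := by
  set I : ℕ → Set (X × ℝ) := fun N => {a | 0 < a.2 ∧ a.2 ≤ N ∧
    t < (∫⁻ y in Metric.ball a.1 a.2, F y ∂ν) / ν (Metric.ball a.1 a.2)} with hI
  set U : ℕ → Set X := fun N => ⋃ a ∈ I N, Metric.ball a.1 a.2 with hU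
  have hUU : {x | t < maxFn ν F x} = ⋃ N, U N := by
    ext x
    simp only [Set.mem_ofPred_eq, lt_maxFn_iff, hU, hI, Set.mem_iUnion, Prod.exists, exists_prop]
    constructor
    · rintro ⟨x0, r, hr, hx, h⟩
      obtain ⟨N, hN⟩ := exists_nat_ge r
      exact ⟨N, x0, r, ⟨hr, hN, h⟩, hx⟩
    · rintro ⟨N, x0, r, ⟨hr, hN, h⟩, hx⟩
      exact ⟨x0, r, hr, hx, h⟩
  have hmono : Monotone U := by
    intro N M hNM
    refine Set.biUnion_subset_biUnion_left fun a ha => ⟨ha.1, ha.2.1.trans ?_, ha.2.2⟩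
    exact_mod_cast hNM
  rw [hUU, hmono.measure_iUnion, ENNReal.mul_iSup]
  refine iSup_le fun N => ?_
  obtain ⟨u, hut, hdisj, hcov⟩ := Vitali.exists_disjoint_subfamily_covering_enlargement_closedBall
    (I N) (fun a => a.1) (fun a => a.2) N (fun a ha => ha.2.1) 5 (by norm_num)
  have hdisj' : u.PairwiseDisjoint fun a => Metric.ball a.1 a.2 :=
    hdisj.mono fun a => Metric.ball_subset_closedBall
  have hcount : u.Countable := hdisj'.countable_of_isOpen (fun a _ => Metric.isOpen_ball)
    (fun a ha => ⟨a.1, Metric.mem_ball_self (hut ha).1⟩)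
  have hsub : U N ⊆ ⋃ a ∈ u, Metric.ball a.1 (6 * a.2) := by
    refine Set.iUnion₂_subset fun a ha => ?_
    obtain ⟨b, hb, hab⟩ := hcov a ha
    refine (Metric.ball_subset_closedBall.trans (hab.trans ?_)).trans
      (Set.subset_biUnion_of_mem (u := fun a : X × ℝ => Metric.ball a.1 (6 * a.2)) hb)
    exact Metric.closedBall_subset_ball (by linarith [(hut hb).1])
  calc t * ν (U N) ≤ t * ∑' a : u, ν (Metric.ball a.1.1 (6 * a.1.2)) := by
        gcongr
        exact (measure_mono hsub).trans (measure_biUnion_le _ hcount _)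
    _ ≤ t * ∑' a : u, D * ν (Metric.ball a.1.1 a.1.2) := by
        gcongr with a
        exact hν.dbl _ _ (hut a.2).1
    _ = D * ∑' a : u, t * ν (Metric.ball a.1.1 a.1.2) := by
        rw [ENNReal.tsum_mul_left, ENNReal.tsum_mul_left, mul_left_comm]
    _ ≤ D * ∑' a : u, ∫⁻ y in Metric.ball a.1.1 a.1.2, F y ∂ν := by
        gcongr with a
        have h := (hut a.2).2.2
        exact (ENNReal.le_div_iff_mul_le (Or.inl (hν.pos _ _ (hut a.2).1).ne')
          (Or.inl (hν.fin _ _).ne)).1 h.le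
    _ = D * ∫⁻ y in ⋃ a ∈ u, Metric.ball a.1 a.2, F y ∂ν := by
        rw [lintegral_biUnion hcount (fun a _ => measurableSet_ball) hdisj']
    _ ≤ D * ∫⁻ x, F x ∂ν := by
        gcongr
        exact Measure.restrict_le_self

/-- Strong type `(q,q)` bound for `q > 1`. -/
theorem maxFn_strong {ν : Measure X} [SFinite ν] {D : ℝ≥0∞} (hν : Doubling ν D) {q : ℝ}
    (hq : 1 < q) {F : X → ℝ≥0∞} (hF : Measurable F) :
    ∫⁻ x, maxFn ν F x ^ q ∂ν
      ≤ (2 * D * ENNReal.ofReal (q/(q-1)) * 2 ^ (q-1)) * ∫⁻ x, F x ^ q ∂ν := by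
  -- truncating `F` at height `s/2` localises the weak type bound to `{F > s/2}`
  have hweak : ∀ s : ℝ, 0 < s → ν {x | ENNReal.ofReal s < maxFn ν F x}
      ≤ (ENNReal.ofReal (1/s)) * (2 * D * ∫⁻ x, (if ENNReal.ofReal s < 2 * F x then F x else 0) ∂ν) := by
    intro s hs
    set F1 : X → ℝ≥0∞ := fun x => if ENNReal.ofReal s < 2 * F x then F x else 0 with hF1
    set h : ℝ≥0∞ := ENNReal.ofReal (s/2) with hh
    have h0 : h ≠ 0 := by simp [hh, hs]
    have hF1m : Measurable F1 := Measurable.ite (measurableSet_lt (by fun_prop) (by fun_prop)) hF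
      measurable_const
    have h2 : ENNReal.ofReal s = h + h := by
      rw [hh, ← ENNReal.ofReal_add (by positivity) (by positivity)]; congr 1; ring
    have hle : ∀ x, F x ≤ F1 x + h := by
      intro x
      simp only [hF1]
      split_ifs with hc
      · exact le_self_add
      · rw [zero_add]
        rw [not_lt, h2, ← two_mul] at hc
        exact (ENNReal.mul_le_mul_iff_right (by norm_num) (by norm_num)).1 hc
    have hM : ∀ x, maxFn ν F x ≤ maxFn ν F1 x + h := by
      intro x
      unfold maxFn
      refine iSup_le fun x0 => iSup_le fun r => iSup_le fun hr => iSup_le fun hx => ?_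
      refine le_trans ?_ (add_le_add_left (avg_le_maxFn ν F1 hr hx) h)
      rw [ENNReal.div_le_iff (hν.pos _ _ hr).ne' (hν.fin _ _).ne, add_mul,
        ENNReal.div_mul_cancel (hν.pos _ _ hr).ne' (hν.fin _ _).ne]
      calc ∫⁻ y in Metric.ball x0 r, F y ∂ν ≤ ∫⁻ y in Metric.ball x0 r, (F1 y + h) ∂ν :=
            lintegral_mono hle
        _ = _ := by rw [lintegral_add_right _ measurable_const, setLIntegral_const]
    have hsub : {x | ENNReal.ofReal s < maxFn ν F x} ⊆ {x | h < maxFn ν F1 x} := by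
      intro x hx
      have := lt_of_lt_of_le (show ENNReal.ofReal s < maxFn ν F x from hx) (hM x)
      rw [h2] at this
      exact (ENNReal.add_lt_add_iff_right ENNReal.ofReal_ne_top).1 this
    have hw := maxFn_weak hν F1 h
    have e : ENNReal.ofReal (1/s) * 2 = h⁻¹ := by
      rw [hh, ← ENNReal.ofReal_inv_of_pos (by positivity), show (2:ℝ≥0∞) = ENNReal.ofReal 2 by simp,
        ← ENNReal.ofReal_mul (by positivity)]
      congr 1; field_simp
    rw [← mul_assoc, ← mul_assoc, e, mul_assoc]
    refine (measure_mono hsub).trans ?_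
    rw [← ENNReal.mul_le_iff_le_inv h0 ENNReal.ofReal_ne_top]
    exact hw
  rw [layer_cake ν (by linarith) (measurable_maxFn ν F)]
  have step1 : ∫⁻ s in Set.Ioi (0:ℝ), ν {x | ENNReal.ofReal s < maxFn ν F x} * ENNReal.ofReal (q * s^(q-1))
      ≤ ∫⁻ s in Set.Ioi (0:ℝ), (2 * D * ENNReal.ofReal (q/(q-1))) * ∫⁻ x, F x * (if ENNReal.ofReal s < 2 * F x then ENNReal.ofReal ((q-1)*s^((q-1)-1)) else 0) ∂ν := by
    refine setLIntegral_mono' measurableSet_Ioi fun s hs => ?_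
    have hs : 0 < s := hs
    have hq1 : 0 < q - 1 := by linarith
    refine (mul_le_mul_left (hweak s hs) _).trans (le_of_eq ?_)
    have e1 : ENNReal.ofReal (q * s^(q-1)) * ENNReal.ofReal (1/s)
        = ENNReal.ofReal (q/(q-1)) * ENNReal.ofReal ((q-1)*s^((q-1)-1)) := by
      rw [← ENNReal.ofReal_mul (by positivity), ← ENNReal.ofReal_mul (by positivity)]
      congr 1
      rw [Real.rpow_sub_one hs.ne' (q-1)]
      field_simp
    have e2 : ∀ x, F x * (if ENNReal.ofReal s < 2 * F x then ENNReal.ofReal ((q-1)*s^((q-1)-1)) else 0)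
        = ENNReal.ofReal ((q-1)*s^((q-1)-1)) * (if ENNReal.ofReal s < 2 * F x then F x else 0) := by
      intro x; split_ifs <;> simp [mul_comm]
    simp_rw [e2]
    rw [lintegral_const_mul' _ _ ENNReal.ofReal_ne_top]
    calc _ = (ENNReal.ofReal (q * s^(q-1)) * ENNReal.ofReal (1/s)) * (2 * D * ∫⁻ x, (if ENNReal.ofReal s < 2 * F x then F x else 0) ∂ν) := by ring
      _ = _ := by rw [e1]; ring
  refine step1.trans ?_
  have hm : Measurable (Function.uncurry fun (s : ℝ) (x : X) =>
      F x * (if ENNReal.ofReal s < 2 * F x then ENNReal.ofReal ((q-1)*s^((q-1)-1)) else 0)) := by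
    refine Measurable.mul (by fun_prop) (Measurable.ite (measurableSet_lt (by fun_prop) (by fun_prop)) ?_ measurable_const)
    fun_prop
  rw [lintegral_const_mul _ (Measurable.lintegral_prod_right hm), lintegral_lintegral_swap hm.aemeasurable]
  rw [mul_assoc _ (2 ^ (q-1))]
  refine mul_le_mul_right (le_of_eq ?_) _
  rw [← lintegral_const_mul _ (by fun_prop)]
  refine lintegral_congr fun x => ?_
  rw [lintegral_const_mul _ (by exact Measurable.ite (measurableSet_lt (by fun_prop) (by fun_prop)) (by fun_prop) measurable_const), layer_point (by linarith),
    ENNReal.mul_rpow_of_nonneg _ _ (by linarith)]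
  have : F x ^ q = F x * F x ^ (q-1) := by
    conv_lhs => rw [show q = 1 + (q-1) by ring, ENNReal.rpow_add_of_nonneg _ _ (by norm_num) (by linarith), ENNReal.rpow_one]
  rw [this]; ring

end CZ

/-! ### `A_p` weights and Muckenhoupt's theorem -/

namespace CZ

variable {X : Type*} [MetricSpace X] [MeasurableSpace X]

/-- Ahlfors regularity of dimension `Q`: every ball of radius `r` has measure `v * r ^ Q`. -/
structure Reg (μ : Measure X) (v : ℝ) (Q : ℕ) : Prop where
  vpos : 0 < v
  vol : ∀ (x : X) (r : ℝ), 0 < r → μ (Metric.ball x r) = ENNReal.ofReal (v * r ^ Q)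

theorem Reg.pos {μ : Measure X} {v : ℝ} {Q : ℕ} (h : Reg μ v Q) (x : X) {r : ℝ} (hr : 0 < r) :
    0 < μ (Metric.ball x r) := by
  rw [h.vol x r hr, ENNReal.ofReal_pos]
  have := h.vpos
  positivity

theorem Reg.fin {μ : Measure X} {v : ℝ} {Q : ℕ} (h : Reg μ v Q) (x : X) (r : ℝ) :
    μ (Metric.ball x r) < ⊤ := by
  rcases le_or_gt r 0 with hr | hr
  · simp [Metric.ball_eq_empty.2 hr]
  · rw [h.vol x r hr]; exact ENNReal.ofReal_lt_top

theorem Reg.scale {μ : Measure X} {v : ℝ} {Q : ℕ} (h : Reg μ v Q) (x y : X) {r c : ℝ} (hr : 0 < r)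
    (hc : 0 < c) : μ (Metric.ball x (c * r)) = ENNReal.ofReal (c ^ Q) * μ (Metric.ball y r) := by
  rw [h.vol x _ (by positivity), h.vol y r hr, ← ENNReal.ofReal_mul (by positivity)]
  congr 1; ring

theorem Reg.doubling {μ : Measure X} {v : ℝ} {Q : ℕ} (h : Reg μ v Q) :
    Doubling μ (ENNReal.ofReal (6 ^ Q)) where
  pos x _ hr := h.pos x hr
  fin := h.fin
  dbl x _ hr := (h.scale x x hr (by norm_num)).le
  D_ne_top := ENNReal.ofReal_ne_top

/-- The Muckenhoupt condition, with the normalization by `μ (ball x r)` cleared. -/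
structure Ap (μ : Measure X) (p : ℝ) (W : X → ℝ≥0∞) (C : ℝ≥0∞) : Prop where
  meas : Measurable W
  ne_zero : ∀ᵐ x ∂μ, W x ≠ 0
  ne_top : ∀ᵐ x ∂μ, W x ≠ ⊤
  fin : ∀ x r, ∫⁻ y in Metric.ball x r, W y ∂μ < ⊤
  ap : ∀ x r, 0 < r → (∫⁻ y in Metric.ball x r, W y ∂μ) *
    (∫⁻ y in Metric.ball x r, W y ^ (-(1/(p-1))) ∂μ) ^ (p-1) ≤ C * μ (Metric.ball x r) ^ p
  C_ne_top : C ≠ ⊤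

theorem Ap.sigma_fin {μ : Measure X} {v : ℝ} {Q : ℕ} (hμ : Reg μ v Q) {p : ℝ} (hp : 1 < p)
    {W : X → ℝ≥0∞} {C : ℝ≥0∞} (hW : Ap μ p W C) (x : X) (r : ℝ) :
    ∫⁻ y in Metric.ball x r, W y ^ (-(1/(p-1))) ∂μ < ⊤ := by
  rcases le_or_gt r 0 with hr | hr
  · simp [Metric.ball_eq_empty.2 hr]
  by_contra! h
  have h1 := hW.ap x r hr
  rw [top_le_iff] at h
  rw [h, ENNReal.top_rpow_of_pos (by linarith), ENNReal.mul_top] at h1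
  · exact absurd (top_le_iff.1 h1) (ENNReal.mul_ne_top hW.C_ne_top
      (ENNReal.rpow_ne_top_of_nonneg (by linarith) (hμ.fin x r).ne))
  · rw [Ne, lintegral_eq_zero_iff hW.meas]
    intro h0
    have h3 : ∀ᵐ y ∂μ.restrict (Metric.ball x r), False := by
      filter_upwards [h0, ae_restrict_of_ae hW.ne_zero] with y hy hy'
      exact hy' hy
    rw [ae_iff] at h3
    simp at h3
    exact (hμ.pos x hr).ne' h3

/-- The dual weight `W ^ (-1/(p-1))` is an `A_{p'}` weight, `p' = p/(p-1)`. -/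
theorem Ap.dual {μ : Measure X} {v : ℝ} {Q : ℕ} (hμ : Reg μ v Q) {p : ℝ} (hp : 1 < p)
    {W : X → ℝ≥0∞} {C : ℝ≥0∞} (hW : Ap μ p W C) :
    Ap μ (p/(p-1)) (fun x => W x ^ (-(1/(p-1)))) (C ^ (1/(p-1))) where
  meas := hW.meas.pow_const _
  ne_zero := by
    filter_upwards [hW.ne_zero, hW.ne_top] with x h0 h1
    exact (ENNReal.rpow_pos (pos_iff_ne_zero.2 h0) h1).ne'
  ne_top := by
    filter_upwards [hW.ne_zero, hW.ne_top] with x h0 h1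
    exact fun h => by simp [ENNReal.rpow_eq_top_iff, h0, h1] at h
  fin := hW.sigma_fin hμ hp
  ap x r hr := by
    have hp1 : 0 < p - 1 := by linarith
    have e : p/(p-1) - 1 = 1/(p-1) := by field_simp; ring
    have e2 : ∫⁻ y in Metric.ball x r, (W y ^ (-(1/(p-1)))) ^ (-(1/(p/(p-1)-1))) ∂μ
        = ∫⁻ y in Metric.ball x r, W y ∂μ := by
      refine lintegral_congr fun y => ?_
      rw [← ENNReal.rpow_mul, e]
      have : -(1/(p-1)) * -(1/(1/(p-1))) = 1 := by field_simp
      rw [this, ENNReal.rpow_one]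
    rw [e2, e]
    have h := ENNReal.rpow_le_rpow (hW.ap x r hr) (z := 1/(p-1)) (by positivity)
    rw [ENNReal.mul_rpow_of_nonneg _ _ (by positivity), ENNReal.mul_rpow_of_nonneg _ _ (by positivity),
      ← ENNReal.rpow_mul, ← ENNReal.rpow_mul, mul_one_div_cancel hp1.ne', ENNReal.rpow_one, mul_one_div] at h
    rwa [mul_comm]
  C_ne_top := ENNReal.rpow_ne_top_of_nonneg (by have : 0 < p - 1 := by linarith
                                                positivity) hW.C_ne_top

theorem Ap.holder {μ : Measure X} {p : ℝ} (hp : 1 < p)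
    {W : X → ℝ≥0∞} {C : ℝ≥0∞} (hW : Ap μ p W C) {F : X → ℝ≥0∞} (hF : Measurable F) (B : Set X) :
    (∫⁻ y in B, F y ∂μ) ^ p
      ≤ (∫⁻ y in B, F y ^ p * W y ∂μ) * (∫⁻ y in B, W y ^ (-(1/(p-1))) ∂μ) ^ (p-1) := by
  have hp0 : 0 < p := by linarith
  have hp1 : 0 < p - 1 := by linarith
  have hc := Real.HolderConjugate.conjExponent hp
  have h := ENNReal.lintegral_mul_le_Lp_mul_Lq (μ.restrict B) hc
    (f := fun y => F y * W y ^ (1/p)) (g := fun y => W y ^ (-(1/p)))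
    (by have := hW.meas; fun_prop) (by have := hW.meas; fun_prop)
  have e1 : ∫⁻ y in B, ((fun y => F y * W y ^ (1/p)) * fun y => W y ^ (-(1/p))) y ∂μ
      = ∫⁻ y in B, F y ∂μ := by
    refine lintegral_congr_ae ?_
    filter_upwards [ae_restrict_of_ae hW.ne_zero, ae_restrict_of_ae hW.ne_top] with y h0 h1
    simp only [Pi.mul_apply]
    rw [mul_assoc, ← ENNReal.rpow_add _ _ h0 h1]
    simp
  have e2 : ∀ y, (F y * W y ^ (1/p)) ^ p = F y ^ p * W y := by
    intro y
    rw [ENNReal.mul_rpow_of_nonneg _ _ hp0.le, ← ENNReal.rpow_mul, one_div_mul_cancel hp0.ne',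
      ENNReal.rpow_one]
  have e3 : ∀ y, (W y ^ (-(1/p))) ^ (p.conjExponent) = W y ^ (-(1/(p-1))) := by
    intro y
    rw [← ENNReal.rpow_mul, Real.conjExponent]
    congr 1; field_simp
  rw [e1] at h
  simp_rw [e2, e3] at h
  have h2 := ENNReal.rpow_le_rpow h hp0.le
  rw [ENNReal.mul_rpow_of_nonneg _ _ hp0.le, ← ENNReal.rpow_mul, ← ENNReal.rpow_mul,
    one_div_mul_cancel hp0.ne', ENNReal.rpow_one] at h2
  have : 1 / p.conjExponent * p = p - 1 := by rw [Real.conjExponent]; field_simp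
  rwa [this] at h2

/-- The `A_p` condition tested on a function `F`; this is how the weight enters most estimates. -/
theorem Ap.test {μ : Measure X} {p : ℝ} (hp : 1 < p)
    {W : X → ℝ≥0∞} {C : ℝ≥0∞} (hW : Ap μ p W C) {F : X → ℝ≥0∞} (hF : Measurable F) (x : X) {r : ℝ}
    (hr : 0 < r) :
    (∫⁻ y in Metric.ball x r, W y ∂μ) * (∫⁻ y in Metric.ball x r, F y ∂μ) ^ p
      ≤ C * μ (Metric.ball x r) ^ p * ∫⁻ y in Metric.ball x r, F y ^ p * W y ∂μ := by
  calc _ ≤ (∫⁻ y in Metric.ball x r, W y ∂μ) * ((∫⁻ y in Metric.ball x r, F y ^ p * W y ∂μ) *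
        (∫⁻ y in Metric.ball x r, W y ^ (-(1/(p-1))) ∂μ) ^ (p-1)) := by
        gcongr; exact hW.holder hp hF _
    _ = ((∫⁻ y in Metric.ball x r, W y ∂μ) *
        (∫⁻ y in Metric.ball x r, W y ^ (-(1/(p-1))) ∂μ) ^ (p-1)) * (∫⁻ y in Metric.ball x r, F y ^ p * W y ∂μ) := by ring
    _ ≤ _ := by exact mul_le_mul_left (hW.ap x r hr) _

/-- A subset of a ball of large relative `μ`-measure has large relative weight. -/
theorem Ap.subset {μ : Measure X} {p : ℝ} (hp : 1 < p)
    {W : X → ℝ≥0∞} {C : ℝ≥0∞} (hW : Ap μ p W C) {E : Set X} (hE : MeasurableSet E) (x : X) {r : ℝ}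
    (hr : 0 < r) (hEB : E ⊆ Metric.ball x r) :
    (∫⁻ y in Metric.ball x r, W y ∂μ) * μ E ^ p
      ≤ C * μ (Metric.ball x r) ^ p * ∫⁻ y in E, W y ∂μ := by
  have h := hW.test hp (F := E.indicator 1) (measurable_one.indicator hE) x hr
  have hp0 : 0 < p := by linarith
  have e1 : ∫⁻ y in Metric.ball x r, E.indicator 1 y ∂μ = μ E := by
    rw [lintegral_indicator_one hE, Measure.restrict_apply hE, Set.inter_eq_left.2 hEB]
  have e2 : ∫⁻ y in Metric.ball x r, (E.indicator 1 y : ℝ≥0∞) ^ p * W y ∂μ = ∫⁻ y in E, W y ∂μ := by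
    have : ∀ y, (E.indicator 1 y : ℝ≥0∞) ^ p * W y = E.indicator W y := by
      intro y
      by_cases hy : y ∈ E <;> simp [hy, hp0]
    simp_rw [this]
    rw [lintegral_indicator hE, Measure.restrict_restrict hE, Set.inter_eq_left.2 hEB]
  rwa [e1, e2] at h

theorem Ap.pos {μ : Measure X} {v : ℝ} {Q : ℕ} (hμ : Reg μ v Q) {p : ℝ}
    {W : X → ℝ≥0∞} {C : ℝ≥0∞} (hW : Ap μ p W C) (x : X) {r : ℝ} (hr : 0 < r) :
    0 < ∫⁻ y in Metric.ball x r, W y ∂μ := by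
  rw [pos_iff_ne_zero, Ne, lintegral_eq_zero_iff hW.meas]
  intro h0
  have h3 : ∀ᵐ y ∂μ.restrict (Metric.ball x r), False := by
    filter_upwards [h0, ae_restrict_of_ae hW.ne_zero] with y hy hy'
    exact hy' hy
  rw [ae_iff] at h3
  simp at h3
  exact (hμ.pos x hr).ne' h3

variable [BorelSpace X]

theorem Ap.scale {μ : Measure X} {v : ℝ} {Q : ℕ} (hμ : Reg μ v Q) {p : ℝ} (hp : 1 < p)
    {W : X → ℝ≥0∞} {C : ℝ≥0∞} (hW : Ap μ p W C) (x : X) {r c : ℝ} (hr : 0 < r) (hc : 1 ≤ c) :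
    ∫⁻ y in Metric.ball x (c*r), W y ∂μ
      ≤ (C * ENNReal.ofReal (c ^ Q) ^ p) * ∫⁻ y in Metric.ball x r, W y ∂μ := by
  have hp0 : 0 < p := by linarith
  have h := hW.subset hp (E := Metric.ball x r) Metric.isOpen_ball.measurableSet x (r := c*r) (by positivity)
    (Metric.ball_subset_ball (by nlinarith))
  rw [hμ.scale x x hr (by linarith), ENNReal.mul_rpow_of_nonneg _ _ hp0.le] at h
  have h0 : μ (Metric.ball x r) ^ p ≠ 0 := (ENNReal.rpow_pos (hμ.pos x hr) (hμ.fin x r).ne).ne'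
  have h1 : μ (Metric.ball x r) ^ p ≠ ⊤ := ENNReal.rpow_ne_top_of_nonneg hp0.le (hμ.fin x r).ne
  rw [← ENNReal.mul_le_mul_iff_left h0 h1]
  refine h.trans (le_of_eq (by ring))

theorem Ap.doubling {μ : Measure X} {v : ℝ} {Q : ℕ} (hμ : Reg μ v Q) {p : ℝ} (hp : 1 < p)
    {W : X → ℝ≥0∞} {C : ℝ≥0∞} (hW : Ap μ p W C) :
    Doubling (μ.withDensity W) (C * ENNReal.ofReal (6 ^ Q) ^ p) where
  pos x r hr := by rw [withDensity_apply _ measurableSet_ball]; exact hW.pos hμ x hr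
  fin x r := by rw [withDensity_apply _ measurableSet_ball]; exact hW.fin x r
  dbl x r hr := by
    rw [withDensity_apply _ measurableSet_ball, withDensity_apply _ measurableSet_ball]
    exact hW.scale hμ hp x hr (by norm_num)
  D_ne_top := ENNReal.mul_ne_top hW.C_ne_top
    (ENNReal.rpow_ne_top_of_nonneg (by linarith) ENNReal.ofReal_ne_top)

variable [SecondCountableTopology X]

/-- Muckenhoupt's theorem, by Lerner's pointwise bound of the maximal function by a composition
of the maximal functions of the two (doubling) measures `W dμ` and `W ^ (-1/(p-1)) dμ`. -/
theorem Ap.maxFn_bound {μ : Measure X} [SFinite μ] {v : ℝ} {Q : ℕ} (hμ : Reg μ v Q) {p : ℝ} (hp : 1 < p)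
    {W : X → ℝ≥0∞} {C : ℝ≥0∞} (hW : Ap μ p W C) :
    ∃ A : ℝ≥0∞, A ≠ ⊤ ∧ ∀ F : X → ℝ≥0∞, Measurable F →
      ∫⁻ x, maxFn μ F x ^ p * W x ∂μ ≤ A * ∫⁻ x, F x ^ p * W x ∂μ := by
  have hp0 : 0 < p := by linarith
  have hp1 : 0 < p - 1 := by linarith
  set p' := p/(p-1) with hp'
  have hp'1 : 1 < p' := by rw [hp', lt_div_iff₀ hp1]; linarith
  have hp'0 : 0 < p' := by linarith
  set S : X → ℝ≥0∞ := fun x => W x ^ (-(1/(p-1))) with hS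
  have hSm : Measurable S := hW.meas.pow_const _
  have hdW := hW.doubling hμ hp
  have hdS := (hW.dual hμ hp).doubling hμ hp'1
  set A1 := (2 * (C * ENNReal.ofReal (6 ^ Q) ^ p) * ENNReal.ofReal (p'/(p'-1)) * 2 ^ (p'-1)) with hA1
  set A2 := (2 * (C ^ (1/(p-1)) * ENNReal.ofReal (6 ^ Q) ^ p') * ENNReal.ofReal (p/(p-1)) * 2 ^ (p-1)) with hA2
  refine ⟨C ^ p' * A1 * A2, ?_, fun F hF => ?_⟩
  · have h2 : ∀ q : ℝ, (2:ℝ≥0∞) ^ q ≠ ⊤ := fun q h => by simp [ENNReal.rpow_eq_top_iff] at h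
    refine ENNReal.mul_ne_top (ENNReal.mul_ne_top (ENNReal.rpow_ne_top_of_nonneg hp'0.le hW.C_ne_top) ?_) ?_
    · exact ENNReal.mul_ne_top (ENNReal.mul_ne_top (ENNReal.mul_ne_top (by norm_num) hdW.D_ne_top) ENNReal.ofReal_ne_top) (h2 _)
    · exact ENNReal.mul_ne_top (ENNReal.mul_ne_top (ENNReal.mul_ne_top (by norm_num) hdS.D_ne_top) ENNReal.ofReal_ne_top) (h2 _)
  set G : X → ℝ≥0∞ := fun x => F x * (S x)⁻¹ with hG
  have hGm : Measurable G := hF.mul hSm.inv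
  set M1 := maxFn (μ.withDensity S) G with hM1
  have hM1m : Measurable M1 := measurable_maxFn _ _
  set H : X → ℝ≥0∞ := fun x => M1 x ^ (p-1) * (W x)⁻¹ with hH
  have hHm : Measurable H := (hM1m.pow_const _).mul hW.meas.inv
  -- Lerner's pointwise bound
  have hpt : ∀ x, maxFn μ F x ^ p ≤ C ^ p' * maxFn (μ.withDensity W) H x ^ p' := by
    intro x
    have hmain : maxFn μ F x ≤ (C * maxFn (μ.withDensity W) H x) ^ (1/(p-1)) := by
      refine iSup_le fun x0 => iSup_le fun r => iSup_le fun hr => iSup_le fun hx => ?_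
      set B := Metric.ball x0 r with hB
      have hBm : MeasurableSet B := measurableSet_ball
      have hμ0 : μ B ≠ 0 := (hμ.pos x0 hr).ne'
      have hμt : μ B ≠ ⊤ := (hμ.fin x0 r).ne
      have hW0 : ∫⁻ y in B, W y ∂μ ≠ 0 := (hW.pos hμ x0 hr).ne'
      have hWt : ∫⁻ y in B, W y ∂μ ≠ ⊤ := (hW.fin x0 r).ne
      have hS0 : ∫⁻ y in B, S y ∂μ ≠ 0 := ((hW.dual hμ hp).pos hμ x0 hr).ne'
      have hSt : ∫⁻ y in B, S y ∂μ ≠ ⊤ := ((hW.dual hμ hp).fin x0 r).ne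
      have a1 : ∫⁻ y in B, F y ∂μ = ∫⁻ y in B, G y ∂(μ.withDensity S) := by
        rw [setLIntegral_withDensity_eq_setLIntegral_mul _ hSm hGm hBm]
        refine lintegral_congr_ae ?_
        filter_upwards [ae_restrict_of_ae (hW.dual hμ hp).ne_zero, ae_restrict_of_ae (hW.dual hμ hp).ne_top] with y h0 h1
        simp only [Pi.mul_apply, hG]
        rw [mul_left_comm, ENNReal.mul_inv_cancel h0 h1, mul_one]
      have a2 : ∀ z ∈ B, ∫⁻ y in B, F y ∂μ ≤ (∫⁻ y in B, S y ∂μ) * M1 z := by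
        intro z hz
        have := avg_le_maxFn (μ.withDensity S) G hr hz
        rw [← hB, ← a1, withDensity_apply _ hBm, ENNReal.div_le_iff hS0 hSt] at this
        rwa [mul_comm]
      have a3 : (∫⁻ y in B, F y ∂μ) ^ (p-1) * μ B ≤ (∫⁻ y in B, S y ∂μ) ^ (p-1) * ∫⁻ z in B, M1 z ^ (p-1) ∂μ := by
        rw [← setLIntegral_const, ← lintegral_const_mul _ (hM1m.pow_const _)]
        refine setLIntegral_mono' hBm fun z hz => ?_
        rw [← ENNReal.mul_rpow_of_nonneg _ _ hp1.le]
        exact ENNReal.rpow_le_rpow (a2 z hz) hp1.le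
      have a4 : ∫⁻ z in B, M1 z ^ (p-1) ∂μ = ∫⁻ z in B, H z ∂(μ.withDensity W) := by
        rw [setLIntegral_withDensity_eq_setLIntegral_mul _ hW.meas hHm hBm]
        refine lintegral_congr_ae ?_
        filter_upwards [ae_restrict_of_ae hW.ne_zero, ae_restrict_of_ae hW.ne_top] with y h0 h1
        simp only [Pi.mul_apply, hH]
        rw [mul_left_comm, ENNReal.mul_inv_cancel h0 h1, mul_one]
      have a5 : ∫⁻ z in B, H z ∂(μ.withDensity W) ≤ (∫⁻ y in B, W y ∂μ) * maxFn (μ.withDensity W) H x := by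
        have := avg_le_maxFn (μ.withDensity W) H hr hx
        rw [← hB, withDensity_apply _ hBm, ENNReal.div_le_iff hW0 hWt] at this
        rwa [mul_comm]
      have a6 : (∫⁻ y in B, F y ∂μ) ^ (p-1) * μ B ≤ (C * maxFn (μ.withDensity W) H x) * μ B ^ p := by
        calc _ ≤ (∫⁻ y in B, S y ∂μ) ^ (p-1) * ((∫⁻ y in B, W y ∂μ) * maxFn (μ.withDensity W) H x) := by
              refine a3.trans ?_; rw [a4]; gcongr
          _ = ((∫⁻ y in B, W y ∂μ) * (∫⁻ y in B, S y ∂μ) ^ (p-1)) * maxFn (μ.withDensity W) H x := by ring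
          _ ≤ (C * μ B ^ p) * maxFn (μ.withDensity W) H x := by exact mul_le_mul_left (hW.ap x0 r hr) _
          _ = _ := by ring
      have e : μ B ^ p = μ B ^ (p-1) * μ B := by
        conv_lhs => rw [show p = (p-1) + 1 by ring, ENNReal.rpow_add _ _ hμ0 hμt, ENNReal.rpow_one]
      rw [e, ← mul_assoc, ENNReal.mul_le_mul_iff_left hμ0 hμt] at a6
      rw [one_div, ENNReal.le_rpow_inv_iff hp1, ENNReal.div_rpow_of_nonneg _ _ hp1.le]
      exact ENNReal.div_le_of_le_mul a6
    calc maxFn μ F x ^ p ≤ ((C * maxFn (μ.withDensity W) H x) ^ (1/(p-1))) ^ p := by gcongr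
      _ = _ := by
        rw [← ENNReal.rpow_mul, ← ENNReal.mul_rpow_of_nonneg _ _ hp'0.le, one_div_mul_eq_div]
  calc ∫⁻ x, maxFn μ F x ^ p * W x ∂μ ≤ ∫⁻ x, C ^ p' * (W x * maxFn (μ.withDensity W) H x ^ p') ∂μ := by
        refine lintegral_mono fun x => ?_
        rw [mul_left_comm, mul_comm (W x)]
        exact mul_le_mul_left (hpt x) _ |>.trans (le_of_eq (by ring))
    _ = C ^ p' * ∫⁻ x, maxFn (μ.withDensity W) H x ^ p' ∂(μ.withDensity W) := by
        rw [lintegral_withDensity_eq_lintegral_mul _ hW.meas ((measurable_maxFn _ _).pow_const _)]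
        exact lintegral_const_mul _ (hW.meas.mul ((measurable_maxFn _ _).pow_const _))
    _ ≤ C ^ p' * (A1 * ∫⁻ x, H x ^ p' ∂(μ.withDensity W)) := by
        gcongr; exact maxFn_strong hdW hp'1 hHm
    _ = C ^ p' * (A1 * ∫⁻ x, M1 x ^ p ∂(μ.withDensity S)) := by
        congr 2
        rw [lintegral_withDensity_eq_lintegral_mul _ hW.meas (hHm.pow_const _),
          lintegral_withDensity_eq_lintegral_mul _ hSm (hM1m.pow_const _)]
        refine lintegral_congr_ae ?_
        filter_upwards [hW.ne_zero, hW.ne_top] with y h0 h1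
        simp only [Pi.mul_apply, hH, hS]
        rw [ENNReal.mul_rpow_of_nonneg _ _ hp'0.le, ← ENNReal.rpow_mul, ← ENNReal.rpow_neg_one (W y), ← ENNReal.rpow_mul,
          mul_left_comm, mul_comm]
        congr 1
        · conv_lhs => rw [show W y = W y ^ (1:ℝ) by simp, ← ENNReal.rpow_mul, ← ENNReal.rpow_add _ _ h0 h1]
          congr 1; rw [hp']; field_simp; ring
        · congr 1; rw [hp']; field_simp
    _ ≤ C ^ p' * (A1 * (A2 * ∫⁻ x, G x ^ p ∂(μ.withDensity S))) := by
        gcongr; exact maxFn_strong hdS hp hGm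
    _ = C ^ p' * A1 * A2 * ∫⁻ x, F x ^ p * W x ∂μ := by
        rw [← mul_assoc, ← mul_assoc]
        congr 1
        rw [lintegral_withDensity_eq_lintegral_mul _ hSm (hGm.pow_const _)]
        refine lintegral_congr_ae ?_
        filter_upwards [hW.ne_zero, hW.ne_top] with y h0 h1
        simp only [Pi.mul_apply, hG, hS]
        rw [ENNReal.mul_rpow_of_nonneg _ _ hp0.le, ← ENNReal.rpow_neg_one, ← ENNReal.rpow_mul, ← ENNReal.rpow_mul,
          mul_left_comm, ← ENNReal.rpow_add _ _ h0 h1]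
        have : -(1 / (p - 1)) + -(1 / (p - 1)) * (-1 * p) = 1 := by field_simp; ring
        rw [this, ENNReal.rpow_one]

end CZ

/-! ### The Cotlar–Stein lemma -/

namespace CZ

section CotlarStein

variable {H : Type*} [NormedAddCommGroup H] [InnerProductSpace ℝ H] [CompleteSpace H] {N : ℕ}

/-- The alternating product `T i₁ (T i₂)⋆ T i₃ ⋯` along a word (starting with an adjoint when the
flag is `true`). -/
def altProd (T : Fin N → H →L[ℝ] H) : Bool → List (Fin N) → (H →L[ℝ] H)
  | _, [] => 1
  | b, i :: l => (if b then star (T i) else T i) * altProd T (!b) l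

/-- The sum of `F` over all words of length `k`. -/
def wordSum {E : Type*} [AddCommMonoid E] (N : ℕ) : ℕ → (List (Fin N) → E) → E
  | 0, F => F []
  | k+1, F => ∑ i, wordSum N k (fun l => F (i :: l))

theorem norm_wordSum_le {E : Type*} [SeminormedAddCommGroup E] (k : ℕ) (F : List (Fin N) → E) :
    ‖wordSum N k F‖ ≤ wordSum N k (fun l => ‖F l‖) := by
  induction k generalizing F with
  | zero => exact le_rfl
  | succ k ih => exact (norm_sum_le _ _).trans (Finset.sum_le_sum fun i _ => ih _)

theorem wordSum_mono (k : ℕ) {F F' : List (Fin N) → ℝ} (h : ∀ l, F l ≤ F' l) :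
    wordSum N k F ≤ wordSum N k F' := by
  induction k generalizing F F' with
  | zero => exact h _
  | succ k ih => exact Finset.sum_le_sum fun i _ => ih fun l => h _

theorem wordSum_mul {R : Type*} [NonUnitalNonAssocSemiring R] (k : ℕ) (c : R) (F : List (Fin N) → R) :
    wordSum N k (fun l => c * F l) = c * wordSum N k F := by
  induction k generalizing F with
  | zero => rfl
  | succ k ih =>
    simp only [wordSum, Finset.mul_sum]
    exact Finset.sum_congr rfl fun i _ => ih _

/-- The bound for an alternating product obtained by grouping its factors in pairs. -/
def pairBd (a : Fin N → Fin N → ℝ) (A : ℝ) : List (Fin N) → ℝ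
  | [] => 1
  | [_] => A
  | i :: j :: l => a i j ^ 2 * pairBd a A l

/-- The product of `a` over consecutive pairs of letters. -/
def chain (a : Fin N → Fin N → ℝ) : List (Fin N) → ℝ
  | [] => 1
  | [_] => 1
  | i :: j :: l => a i j * chain a (j :: l)

theorem pairBd_nonneg (a : Fin N → Fin N → ℝ) {A : ℝ} (hA : 0 < A) : ∀ l, 0 ≤ pairBd a A l
  | [] => zero_le_one
  | [_] => hA.le
  | _ :: _ :: l => mul_nonneg (sq_nonneg _) (pairBd_nonneg a hA l)

theorem chain_nonneg {a : Fin N → Fin N → ℝ} (ha : ∀ i j, 0 ≤ a i j) : ∀ l, 0 ≤ chain a l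
  | [] => zero_le_one
  | [_] => zero_le_one
  | _ :: j :: l => mul_nonneg (ha _ _) (chain_nonneg ha (j :: l))

theorem pairBd_mul (a : Fin N → Fin N → ℝ) (A : ℝ) :
    ∀ (l : List (Fin N)) (i : Fin N), pairBd a A (i :: l) * pairBd a A l = A * chain a (i :: l) ^ 2
  | [], i => by simp [pairBd, chain]
  | j :: l, i => by
    have := pairBd_mul a A l j
    simp only [pairBd, chain]
    rw [mul_pow]
    linear_combination a i j ^ 2 * this

theorem norm_altProd_le_pairBd {T : Fin N → H →L[ℝ] H} {a : Fin N → Fin N → ℝ} {A : ℝ}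
    (hT : ∀ i, ‖T i‖ ≤ A) (h1 : ∀ i j, ‖T i * star (T j)‖ ≤ a i j ^ 2)
    (h2 : ∀ i j, ‖star (T i) * T j‖ ≤ a i j ^ 2) :
    ∀ (l : List (Fin N)) (b : Bool), ‖altProd T b l‖ ≤ pairBd a A l
  | [], b => by
    simp only [altProd, pairBd]
    exact ContinuousLinearMap.norm_id_le
  | [i], b => by
    simp only [altProd, pairBd, mul_one]
    split_ifs
    · rw [ContinuousLinearMap.star_eq_adjoint, LinearIsometryEquiv.norm_map]; exact hT i
    · exact hT i
  | i :: j :: l, b => by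
    have ih := norm_altProd_le_pairBd hT h1 h2 l b
    simp only [altProd, pairBd, Bool.not_not]
    rw [← mul_assoc]
    refine (norm_mul_le _ _).trans (mul_le_mul ?_ ih (norm_nonneg _) (sq_nonneg _))
    cases b
    · simpa using h1 i j
    · simpa using h2 i j

theorem norm_altProd_le {T : Fin N → H →L[ℝ] H} {a : Fin N → Fin N → ℝ} {A : ℝ} (hA : 0 < A)
    (ha : ∀ i j, 0 ≤ a i j)
    (hT : ∀ i, ‖T i‖ ≤ A) (h1 : ∀ i j, ‖T i * star (T j)‖ ≤ a i j ^ 2)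
    (h2 : ∀ i j, ‖star (T i) * T j‖ ≤ a i j ^ 2) (l : List (Fin N)) (i : Fin N) (b : Bool) :
    ‖altProd T b (i :: l)‖ ≤ A * chain a (i :: l) := by
  have b1 := norm_altProd_le_pairBd hT h1 h2 (i :: l) b
  have b2 : ‖altProd T b (i :: l)‖ ≤ A * pairBd a A l := by
    simp only [altProd]
    refine (norm_mul_le _ _).trans (mul_le_mul ?_ (norm_altProd_le_pairBd hT h1 h2 l _)
      (norm_nonneg _) hA.le)
    split_ifs
    · rw [ContinuousLinearMap.star_eq_adjoint, LinearIsometryEquiv.norm_map]; exact hT i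
    · exact hT i
  have hc := chain_nonneg ha (i :: l)
  refine le_of_sq_le_sq ?_ (mul_nonneg hA.le hc)
  calc _ = ‖altProd T b (i :: l)‖ * ‖altProd T b (i :: l)‖ := sq _
    _ ≤ pairBd a A (i :: l) * (A * pairBd a A l) :=
      mul_le_mul b1 b2 (norm_nonneg _) (pairBd_nonneg a hA _)
    _ = A * (pairBd a A (i :: l) * pairBd a A l) := by ring
    _ = _ := by rw [pairBd_mul]; ring

theorem wordSum_chain_le {a : Fin N → Fin N → ℝ} {A : ℝ} (hA : 0 < A) (ha : ∀ i j, 0 ≤ a i j)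
    (hsum : ∀ i, ∑ j, a i j ≤ A) (k : ℕ) (i : Fin N) :
    wordSum N k (fun l => chain a (i :: l)) ≤ A ^ k := by
  induction k generalizing i with
  | zero => simp [wordSum, chain]
  | succ k ih =>
    simp only [wordSum, chain]
    calc ∑ j, wordSum N k (fun l => a i j * chain a (j :: l))
        = ∑ j, a i j * wordSum N k (fun l => chain a (j :: l)) :=
          Finset.sum_congr rfl fun j _ => wordSum_mul k _ _
      _ ≤ ∑ j, a i j * A ^ k :=
          Finset.sum_le_sum fun j _ => mul_le_mul_of_nonneg_left (ih j) (ha i j)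
      _ = (∑ j, a i j) * A ^ k := by rw [Finset.sum_mul]
      _ ≤ A * A ^ k := mul_le_mul_of_nonneg_right (hsum i) (by positivity)
      _ = A ^ (k+1) := by ring

theorem wordSum_altProd (T : Fin N → H →L[ℝ] H) (m : ℕ) :
    wordSum N (2*m) (altProd T false) = ((∑ i, T i) * star (∑ i, T i)) ^ m := by
  induction m with
  | zero => rfl
  | succ m ih =>
    rw [show 2 * (m+1) = (2*m + 1) + 1 by ring]
    simp only [wordSum, altProd]
    simp only [wordSum_mul, Bool.not_false, Bool.not_true, if_true, Bool.false_eq_true, if_false]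
    rw [ih, pow_succ', star_sum, Finset.sum_mul, Finset.sum_mul]
    simp only [Finset.sum_mul, Finset.mul_sum, mul_assoc]

/-- The **Cotlar–Stein lemma** for finitely many operators. -/
theorem cotlar_stein (T : Fin N → H →L[ℝ] H) {a : Fin N → Fin N → ℝ} {A : ℝ} (hA : 0 < A)
    (ha : ∀ i j, 0 ≤ a i j) (h1 : ∀ i j, ‖T i * star (T j)‖ ≤ a i j ^ 2)
    (h2 : ∀ i j, ‖star (T i) * T j‖ ≤ a i j ^ 2) (hsum : ∀ i, ∑ j, a i j ≤ A) :
    ‖∑ i, T i‖ ≤ A := by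
  have hT : ∀ i, ‖T i‖ ≤ A := by
    intro i
    have h := h1 i i
    have e : ‖T i * star (T i)‖ = ‖T i‖ * ‖T i‖ := CStarRing.norm_self_mul_star
    rw [e, ← sq] at h
    have h3 := le_of_sq_le_sq h (ha i i)
    exact h3.trans ((Finset.single_le_sum (fun j _ => ha i j) (Finset.mem_univ i)).trans (hsum i))
  set S := ∑ i, T i with hS
  have hpow : ∀ k : ℕ, ‖S‖ ^ (2 * 2^k) ≤ N * A ^ (2 * 2^k) := by
    intro k
    have hsa : IsSelfAdjoint (S * star S) := IsSelfAdjoint.mul_star_self S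
    have e1 : ‖(S * star S) ^ (2^k)‖ = ‖S‖ ^ (2 * 2^k) := by
      have := IsSelfAdjoint.nnnorm_pow_two_pow (E := H →L[ℝ] H) (x := S * star S) hsa k
      have e : ‖S * star S‖ = ‖S‖ * ‖S‖ := CStarRing.norm_self_mul_star
      have h' : ‖(S * star S) ^ (2^k)‖ = ‖S * star S‖ ^ (2^k) := congrArg NNReal.toReal this
      rw [h', e, ← sq, ← pow_mul]
    rw [← e1, ← wordSum_altProd]
    refine (norm_wordSum_le _ _).trans ?_
    have hk : 1 ≤ 2 * 2^k := by have := Nat.one_le_two_pow (n := k); omega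
    obtain ⟨K, hK⟩ := Nat.exists_eq_add_of_le' hk
    rw [hK]
    simp only [wordSum]
    calc ∑ i, wordSum N K (fun l => ‖altProd T false (i :: l)‖)
        ≤ ∑ i, wordSum N K (fun l => A * chain a (i :: l)) :=
          Finset.sum_le_sum fun i _ => wordSum_mono K fun l => norm_altProd_le hA ha hT h1 h2 l i _
      _ = ∑ i, A * wordSum N K (fun l => chain a (i :: l)) :=
          Finset.sum_congr rfl fun i _ => wordSum_mul K _ _
      _ ≤ ∑ _i : Fin N, A * A ^ K := Finset.sum_le_sum fun i _ =>
          mul_le_mul_of_nonneg_left (wordSum_chain_le hA ha hsum K i) hA.le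
      _ = N * A ^ (K+1) := by rw [Finset.sum_const, Finset.card_univ, Fintype.card_fin, nsmul_eq_mul]; ring
  by_contra! hlt
  -- powers of the ratio `‖S‖ / A > 1` would stay bounded by `N`
  have hr : 1 < ‖S‖ / A := (one_lt_div hA).2 hlt
  obtain ⟨m, hm⟩ := pow_unbounded_of_one_lt (N:ℝ) hr
  have h2m : m ≤ 2 * 2^m := by have := (Nat.lt_two_pow_self (n := m)); omega
  have h3 := pow_le_pow_right₀ hr.le h2m
  have h4 : (‖S‖ / A) ^ (2 * 2^m) ≤ N := by
    rw [div_pow, div_le_iff₀ (by positivity)]; exact hpow m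
  linarith

end CotlarStein
end CZ

/-! ### Integral operators and Schur's test -/

namespace CZ

section KernelOperators

variable {X : Type*} [MetricSpace X] [MeasurableSpace X] [BorelSpace X] [SecondCountableTopology X]

/-- Bounded measurable kernels supported in a bounded neighbourhood of the diagonal. -/
structure BK (k : X → X → ℝ) : Prop where
  meas : Measurable (Function.uncurry k)
  bdd : ∃ M, 0 ≤ M ∧ ∀ x y, |k x y| ≤ M
  supp : ∃ R, 0 < R ∧ ∀ x y, R ≤ dist x y → k x y = 0

/-- Schur's test, with the row and column integrals of the kernel bounded by `A`. -/
structure Schur (μ : Measure X) (k : X → X → ℝ) (A : ℝ≥0∞) : Prop where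
  row : ∀ x, ∫⁻ y, ‖k x y‖ₑ ∂μ ≤ A
  col : ∀ y, ∫⁻ x, ‖k x y‖ₑ ∂μ ≤ A

theorem BK.swap {k : X → X → ℝ} (h : BK k) : BK (fun x y => k y x) where
  meas := h.meas.comp measurable_swap
  bdd := by obtain ⟨M, h0, hM⟩ := h.bdd; exact ⟨M, h0, fun x y => hM y x⟩
  supp := by obtain ⟨M, h0, hM⟩ := h.supp; exact ⟨M, h0, fun x y hxy => hM y x (by rwa [dist_comm])⟩

theorem Schur.swap {μ : Measure X} {k : X → X → ℝ} {A : ℝ≥0∞} (h : Schur μ k A) :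
    Schur μ (fun x y => k y x) A := ⟨h.col, h.row⟩

theorem BK.meas_row {k : X → X → ℝ} (h : BK k) (x : X) : Measurable (k x) :=
  h.meas.comp measurable_prodMk_left

theorem BK.meas_col {k : X → X → ℝ} (h : BK k) (y : X) : Measurable (fun x => k x y) :=
  h.meas.comp measurable_prodMk_right

variable {μ : Measure X} {v : ℝ} {Q : ℕ}

theorem BK.memLp {k : X → X → ℝ} (h : BK k) (hμ : Reg μ v Q) (x : X) (p : ℝ≥0∞) :
    MemLp (k x) p μ := by
  obtain ⟨M, h0, hM⟩ := h.bdd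
  obtain ⟨R, hR, hs⟩ := h.supp
  have : k x = (Metric.ball x R).indicator (k x) := by
    funext y
    by_cases hy : y ∈ Metric.ball x R
    · rw [Set.indicator_of_mem hy]
    · rw [Set.indicator_of_notMem hy, hs]
      rw [Metric.mem_ball, not_lt, dist_comm] at hy
      exact hy
  rw [this, memLp_indicator_iff_restrict measurableSet_ball]
  have : IsFiniteMeasure (μ.restrict (Metric.ball x R)) :=
    ⟨by rw [Measure.restrict_apply_univ]; exact hμ.fin x R⟩
  exact MemLp.of_bound (h.meas_row x).aestronglyMeasurable M (ae_of_all _ fun y => hM x y)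

/-- Every `BK` kernel passes Schur's test. -/
theorem BK.schur {k : X → X → ℝ} (h : BK k) (hμ : Reg μ v Q) {M R : ℝ}
    (hR : 0 < R) (hM : ∀ x y, |k x y| ≤ M) (hs : ∀ x y, R ≤ dist x y → k x y = 0) :
    Schur μ k (ENNReal.ofReal (M * (v * R ^ Q))) := by
  have key : ∀ (k' : X → X → ℝ), BK k' → (∀ x y, |k' x y| ≤ M) →
      (∀ x y, R ≤ dist x y → k' x y = 0) → ∀ x, ∫⁻ y, ‖k' x y‖ₑ ∂μ ≤ ENNReal.ofReal (M * (v * R^Q)) := by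
    intro k' hk hM hs x
    have hM0 : 0 ≤ M := (abs_nonneg _).trans (hM x x)
    calc ∫⁻ y, ‖k' x y‖ₑ ∂μ
        ≤ ∫⁻ y, (Metric.ball x R).indicator (fun _ => ENNReal.ofReal M) y ∂μ := by
          refine lintegral_mono fun y => ?_
          by_cases hy : y ∈ Metric.ball x R
          · rw [Set.indicator_of_mem hy, ← ofReal_norm]
            exact ENNReal.ofReal_le_ofReal (hM x y)
          · rw [Set.indicator_of_notMem hy, hs]
            · simp
            · rw [Metric.mem_ball, not_lt, dist_comm] at hy
              exact hy
      _ = ENNReal.ofReal M * μ (Metric.ball x R) := by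
          rw [lintegral_indicator measurableSet_ball, setLIntegral_const]
      _ = _ := by rw [hμ.vol x R hR, ← ENNReal.ofReal_mul hM0]
  exact ⟨key k h hM hs, key _ h.swap (fun x y => hM y x) (fun x y hxy => hs y x (by rwa [dist_comm]))⟩

theorem BK.schur' {k : X → X → ℝ} (h : BK k) (hμ : Reg μ v Q) : ∃ A ≠ ⊤, Schur μ k A := by
  obtain ⟨M, h0, hM⟩ := h.bdd
  obtain ⟨R, hR, hs⟩ := h.supp
  exact ⟨_, ENNReal.ofReal_ne_top, h.schur hμ hR hM hs⟩

theorem schur_lintegral [SFinite μ] {k : X → X → ℝ} (h : Measurable (Function.uncurry k))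
    {A : ℝ≥0∞} (hA : Schur μ k A)
    {F : X → ℝ≥0∞} (hF : AEMeasurable F μ) :
    ∫⁻ x, (∫⁻ y, ‖k x y‖ₑ * F y ∂μ) ^ 2 ∂μ ≤ A ^ 2 * ∫⁻ y, F y ^ 2 ∂μ := by
  wlog hFm : Measurable F generalizing F
  · have := this (F := hF.mk F) hF.measurable_mk.aemeasurable hF.measurable_mk
    have e : F =ᵐ[μ] hF.mk F := hF.ae_eq_mk
    calc _ = ∫⁻ x, (∫⁻ y, ‖k x y‖ₑ * hF.mk F y ∂μ) ^ 2 ∂μ := by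
          congr 1; funext x; congr 1
          exact lintegral_congr_ae (by filter_upwards [e] with y hy; rw [hy])
      _ ≤ _ := this
      _ = _ := by
          congr 1
          exact lintegral_congr_ae (by filter_upwards [e] with y hy; rw [hy])
  have hk : Measurable (fun z : X × X => ‖k z.1 z.2‖ₑ) := h.enorm
  have hkx : ∀ x, Measurable (fun y => ‖k x y‖ₑ) := fun x => hk.comp measurable_prodMk_left
  have hky : ∀ y, Measurable (fun x => ‖k x y‖ₑ) := fun x => hk.comp measurable_prodMk_right
  have pt : ∀ x, (∫⁻ y, ‖k x y‖ₑ * F y ∂μ) ^ 2 ≤ A * ∫⁻ y, ‖k x y‖ₑ * F y ^ 2 ∂μ := by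
    intro x
    have hh := ENNReal.lintegral_mul_le_Lp_mul_Lq μ Real.HolderConjugate.two_two
      (f := fun y => ‖k x y‖ₑ ^ (1/2:ℝ)) (g := fun y => ‖k x y‖ₑ ^ (1/2:ℝ) * F y)
      (((hkx x).pow_const _).aemeasurable) ((((hkx x).pow_const _).mul hFm).aemeasurable)
    have e1 : ∀ a : ℝ≥0∞, a ^ (1/2:ℝ) * a ^ (1/2:ℝ) = a := fun a => by
      rw [← ENNReal.rpow_add_of_nonneg _ _ (by norm_num) (by norm_num)]; norm_num
    have e2 : ∀ a : ℝ≥0∞, (a ^ (1/2:ℝ)) ^ (2:ℝ) = a := fun a => by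
      rw [← ENNReal.rpow_mul]; norm_num
    simp only [Pi.mul_apply, ← mul_assoc, e1, ENNReal.mul_rpow_of_nonneg _ _ (zero_le_two (α := ℝ)), e2] at hh
    calc _ ≤ ((∫⁻ y, ‖k x y‖ₑ ∂μ) ^ (1/2:ℝ) * (∫⁻ y, ‖k x y‖ₑ * F y ^ (2:ℝ) ∂μ) ^ (1/2:ℝ)) ^ 2 := by
          gcongr
      _ = (∫⁻ y, ‖k x y‖ₑ ∂μ) * ∫⁻ y, ‖k x y‖ₑ * F y ^ (2:ℝ) ∂μ := by
          rw [mul_pow, sq, sq, e1, e1]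
      _ ≤ _ := by
          simp only [ENNReal.rpow_two]
          exact mul_le_mul_left (hA.row x) _
  calc _ ≤ ∫⁻ x, A * ∫⁻ y, ‖k x y‖ₑ * F y ^ 2 ∂μ ∂μ := lintegral_mono pt
    _ = A * ∫⁻ x, ∫⁻ y, ‖k x y‖ₑ * F y ^ 2 ∂μ ∂μ := by
        rw [lintegral_const_mul]
        exact Measurable.lintegral_prod_right' (f := fun z : X × X => ‖k z.1 z.2‖ₑ * F z.2 ^ 2)
          (hk.mul ((hFm.comp measurable_snd).pow_const _))
    _ = A * ∫⁻ y, ∫⁻ x, ‖k x y‖ₑ * F y ^ 2 ∂μ ∂μ := by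
        rw [lintegral_lintegral_swap]
        exact (hk.mul ((hFm.comp measurable_snd).pow_const _)).aemeasurable
    _ ≤ A * ∫⁻ y, A * F y ^ 2 ∂μ := by
        gcongr with y
        rw [lintegral_mul_const _ (hky y)]
        exact mul_le_mul_left (hA.col y) _
    _ = _ := by
        rw [lintegral_const_mul _ (hFm.pow_const _), sq, mul_assoc]

/-- The integral operator with kernel `k`. -/
def op (μ : Measure X) (k : X → X → ℝ) (f : X → ℝ) (x : X) : ℝ := ∫ y, k x y * f y ∂μ

theorem BK.integrable {k : X → X → ℝ} (h : BK k) (hμ : Reg μ v Q) {f : X → ℝ} (hf : MemLp f 2 μ)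
    (x : X) : Integrable (fun y => k x y * f y) μ :=
  (h.memLp hμ x 2).integrable_mul hf

theorem enorm_op_le (k : X → X → ℝ) (f : X → ℝ) (x : X) :
    ‖op μ k f x‖ₑ ≤ ∫⁻ y, ‖k x y‖ₑ * ‖f y‖ₑ ∂μ := by
  refine (enorm_integral_le_lintegral_enorm _).trans (lintegral_mono fun y => ?_)
  rw [enorm_mul]

theorem op_aesm [SFinite μ] {k : X → X → ℝ} (h : Measurable (Function.uncurry k)) {f : X → ℝ}
    (hf : AEStronglyMeasurable f μ) : AEStronglyMeasurable (op μ k f) μ := by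
  unfold op
  have : AEStronglyMeasurable (fun z : X × X => k z.1 z.2 * f z.2) (μ.prod μ) :=
    h.aestronglyMeasurable.mul hf.comp_snd
  exact this.integral_prod_right'

theorem op_sq_le [SFinite μ] {k : X → X → ℝ} (h : Measurable (Function.uncurry k))
    {A : ℝ≥0∞} (hA : Schur μ k A) {f : X → ℝ} (hf : AEStronglyMeasurable f μ) :
    ∫⁻ x, ‖op μ k f x‖ₑ ^ 2 ∂μ ≤ A ^ 2 * ∫⁻ y, ‖f y‖ₑ ^ 2 ∂μ := by
  refine (lintegral_mono fun x => ?_).trans (schur_lintegral h hA hf.enorm)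
  exact pow_le_pow_left' (enorm_op_le k f x) 2

theorem eLpNorm_two_sq {f : X → ℝ} : eLpNorm f 2 μ ^ 2 = ∫⁻ x, ‖f x‖ₑ ^ 2 ∂μ := by
  have := eLpNorm_nnreal_pow_eq_lintegral (f := f) (μ := μ) (p := 2) (by norm_num)
  simpa using this

theorem op_eLpNorm_le [SFinite μ] {k : X → X → ℝ} (h : Measurable (Function.uncurry k))
    {A : ℝ≥0∞} (hA : Schur μ k A) {f : X → ℝ} (hf : AEStronglyMeasurable f μ) :
    eLpNorm (op μ k f) 2 μ ≤ A * eLpNorm f 2 μ := by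
  have h := op_sq_le h hA hf
  rw [← eLpNorm_two_sq, ← eLpNorm_two_sq, ← mul_pow] at h
  exact (ENNReal.pow_le_pow_left_iff two_ne_zero).1 h

theorem BK.op_memLp [SFinite μ] {k : X → X → ℝ} (h : BK k) (hμ : Reg μ v Q) {f : X → ℝ} (hf : MemLp f 2 μ) :
    MemLp (op μ k f) 2 μ := by
  obtain ⟨A, hA, hS⟩ := h.schur' hμ
  exact ⟨op_aesm h.meas hf.1, (op_eLpNorm_le h.meas hS hf.1).trans_lt
    (ENNReal.mul_lt_top hA.lt_top hf.2)⟩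

/-- The operator of `op`, on `L²`. -/
def opL [SFinite μ] (hμ : Reg μ v Q) (k : X → X → ℝ) (h : BK k) : Lp ℝ 2 μ →L[ℝ] Lp ℝ 2 μ :=
  LinearMap.mkContinuousOfExistsBound
    { toFun := fun f => (h.op_memLp hμ (Lp.memLp f)).toLp (op μ k f)
      map_add' := fun f g => by
        rw [← MemLp.toLp_add]
        refine MemLp.toLp_congr _ _ (ae_of_all _ fun x => ?_)
        simp only [op, Pi.add_apply]
        rw [← integral_add (h.integrable hμ (Lp.memLp f) x) (h.integrable hμ (Lp.memLp g) x)]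
        refine integral_congr_ae ?_
        filter_upwards [Lp.coeFn_add f g] with y hy
        rw [hy, Pi.add_apply, mul_add]
      map_smul' := fun c f => by
        rw [RingHom.id_apply, ← MemLp.toLp_const_smul]
        refine MemLp.toLp_congr _ _ (ae_of_all _ fun x => ?_)
        simp only [op, Pi.smul_apply, smul_eq_mul]
        rw [← integral_const_mul]
        refine integral_congr_ae ?_
        filter_upwards [Lp.coeFn_smul c f] with y hy
        rw [hy, Pi.smul_apply, smul_eq_mul]; ring }
    (by
      obtain ⟨A, hA, hS⟩ := h.schur' hμ
      refine ⟨A.toReal, fun f => ?_⟩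
      simp only [LinearMap.coe_mk, AddHom.coe_mk]
      rw [Lp.norm_toLp, Lp.norm_def, ← ENNReal.toReal_mul]
      exact ENNReal.toReal_mono (ENNReal.mul_ne_top hA (Lp.memLp f).2.ne)
        (op_eLpNorm_le h.meas hS (Lp.memLp f).1))

theorem opL_coe [SFinite μ] (hμ : Reg μ v Q) {k : X → X → ℝ} (h : BK k) (f : Lp ℝ 2 μ) :
    opL hμ k h f =ᵐ[μ] op μ k f := (h.op_memLp hμ (Lp.memLp f)).coeFn_toLp

theorem opL_norm_le [SFinite μ] (hμ : Reg μ v Q) {k : X → X → ℝ} (h : BK k) {A : ℝ} (hA : 0 ≤ A)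
    (hS : Schur μ k (ENNReal.ofReal A)) : ‖opL hμ k h‖ ≤ A := by
  refine ContinuousLinearMap.opNorm_le_bound _ hA fun f => ?_
  rw [Lp.norm_def, Lp.norm_def, eLpNorm_congr_ae (opL_coe hμ h f), ← ENNReal.toReal_ofReal hA,
    ← ENNReal.toReal_mul]
  exact ENNReal.toReal_mono (ENNReal.mul_ne_top ENNReal.ofReal_ne_top (Lp.memLp f).2.ne)
        (op_eLpNorm_le h.meas hS (Lp.memLp f).1)

end KernelOperators
end CZ

/-! ### Almost orthogonal pieces -/

namespace CZ

section KernelAlgebra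

variable {X : Type*} [MetricSpace X] [MeasurableSpace X] [BorelSpace X] [SecondCountableTopology X]
variable {μ : Measure X} {v : ℝ} {Q : ℕ}

theorem BK.bil_integrable [SFinite μ] (hμ : Reg μ v Q) {l : X → X → ℝ} (h : BK l) {u f : X → ℝ}
    (hu : MemLp u 2 μ) (hf : MemLp f 2 μ) :
    Integrable (fun z : X × X => u z.1 * (l z.1 z.2 * f z.2)) (μ.prod μ) := by
  have hm : AEStronglyMeasurable (fun z : X × X => l z.1 z.2 * f z.2) (μ.prod μ) :=
    h.meas.aestronglyMeasurable.mul hf.1.comp_snd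
  refine ⟨hu.1.comp_fst.mul hm, ?_⟩
  obtain ⟨A, hA, hS⟩ := h.schur' hμ
  set F : X → ℝ≥0∞ := fun y => ∫⁻ z, ‖l y z‖ₑ * ‖f z‖ₑ ∂μ with hF
  have hFm : AEMeasurable F μ := by
    have := hm.enorm.lintegral_prod_right'
    simpa only [enorm_mul] using this
  have hF2 : ∫⁻ y, F y ^ 2 ∂μ < ⊤ := by
    refine (schur_lintegral h.meas hS hf.1.enorm).trans_lt ?_
    rw [← eLpNorm_two_sq]
    exact ENNReal.mul_lt_top (ENNReal.pow_lt_top hA.lt_top) (ENNReal.pow_lt_top hf.2)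
  have hu2 : ∫⁻ y, ‖u y‖ₑ ^ 2 ∂μ < ⊤ := by
    rw [← eLpNorm_two_sq]; exact ENNReal.pow_lt_top hu.2
  have hm2 : AEStronglyMeasurable (fun z : X × X => u z.1 * (l z.1 z.2 * f z.2)) (μ.prod μ) :=
    hu.1.comp_fst.mul hm
  rw [hasFiniteIntegral_iff_enorm, lintegral_prod _ hm2.enorm]
  calc _ = ∫⁻ y, ‖u y‖ₑ * F y ∂μ := by
        refine lintegral_congr fun y => ?_
        simp only [enorm_mul]
        rw [lintegral_const_mul' _ _ enorm_ne_top]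
    _ ≤ (∫⁻ y, ‖u y‖ₑ ^ (2:ℝ) ∂μ) ^ (1/2:ℝ) * (∫⁻ y, F y ^ (2:ℝ) ∂μ) ^ (1/2:ℝ) :=
        ENNReal.lintegral_mul_le_Lp_mul_Lq μ Real.HolderConjugate.two_two hu.1.enorm hFm
    _ < ⊤ := by
        simp only [ENNReal.rpow_two]
        exact ENNReal.mul_lt_top (ENNReal.rpow_lt_top_of_nonneg (by norm_num) hu2.ne)
          (ENNReal.rpow_lt_top_of_nonneg (by norm_num) hF2.ne)

theorem BK.op_dual [SFinite μ] (hμ : Reg μ v Q) {l : X → X → ℝ} (h : BK l) {u f : X → ℝ}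
    (hu : MemLp u 2 μ) (hf : MemLp f 2 μ) :
    ∫ y, u y * op μ l f y ∂μ = ∫ z, op μ (fun x y => l y x) u z * f z ∂μ := by
  have hi := h.bil_integrable hμ hu hf
  have := integral_integral_swap (f := fun y z => u y * (l y z * f z)) hi
  simp only [op]
  simp_rw [← integral_const_mul, ← integral_mul_const]
  rw [this]
  congr 1; funext z; congr 1; funext y; ring

/-- The kernel of a composition. -/
def kcomp (μ : Measure X) (k l : X → X → ℝ) (x z : X) : ℝ := ∫ y, k x y * l y z ∂μ

theorem kcomp_bound (hμ : Reg μ v Q) {k l : X → X → ℝ} {M R : ℝ} (x z : X)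
    (hR : 0 < R) (hM : ∀ y, |k x y * l y z| ≤ M) (hs : ∀ y, R ≤ dist x y → k x y * l y z = 0) :
    |kcomp μ k l x z| ≤ M * (v * R ^ Q) := by
  have hM0 : 0 ≤ M := (abs_nonneg _).trans (hM x)
  have e : kcomp μ k l x z = ∫ y in Metric.ball x R, k x y * l y z ∂μ := by
    unfold kcomp
    rw [setIntegral_eq_integral_of_forall_compl_eq_zero]
    intro y hy
    rw [Metric.mem_ball, not_lt, dist_comm] at hy
    exact hs y hy
  rw [e, ← Real.norm_eq_abs]
  refine (norm_setIntegral_le_of_norm_le_const (hμ.fin x R) fun y _ => hM y).trans (le_of_eq ?_)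
  rw [Measure.real, hμ.vol x R hR, ENNReal.toReal_ofReal (mul_nonneg hμ.vpos.le (by positivity))]

theorem BK.kcomp [SFinite μ] (hμ : Reg μ v Q) {k l : X → X → ℝ} (hk : BK k) (hl : BK l) :
    BK (kcomp μ k l) where
  meas := by
    have h1 : Measurable (fun q : (X × X) × X => k q.1.1 q.2 * l q.2 q.1.2) :=
      (hk.meas.comp ((measurable_fst.comp measurable_fst).prodMk measurable_snd)).mul
        (hl.meas.comp (measurable_snd.prodMk (measurable_snd.comp measurable_fst)))
    exact (StronglyMeasurable.integral_prod_right' (ν := μ) h1.stronglyMeasurable).measurable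
  bdd := by
    obtain ⟨M, h0, hM⟩ := hk.bdd
    obtain ⟨M', h0', hM'⟩ := hl.bdd
    obtain ⟨R, hR, hs⟩ := hk.supp
    refine ⟨M * M' * (v * R ^ Q), mul_nonneg (mul_nonneg h0 h0')
      (mul_nonneg hμ.vpos.le (by positivity)), fun x z => kcomp_bound hμ x z hR (fun y => ?_)
      (fun y hy => by rw [hs x y hy, zero_mul])⟩
    rw [abs_mul]
    exact mul_le_mul (hM _ _) (hM' _ _) (abs_nonneg _) h0
  supp := by
    obtain ⟨R, hR, hs⟩ := hk.supp
    obtain ⟨R', hR', hs'⟩ := hl.supp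
    refine ⟨R + R', by positivity, fun x z hxz => ?_⟩
    unfold CZ.kcomp
    have : ∀ y, k x y * l y z = 0 := fun y => by
      rcases le_or_gt R (dist x y) with h | h
      · rw [hs x y h, zero_mul]
      · rw [hs' y z, mul_zero]
        have := dist_triangle x y z
        linarith
    simp [this]

theorem opL_star [SFinite μ] (hμ : Reg μ v Q) {k : X → X → ℝ} (hk : BK k) :
    star (opL hμ k hk) = opL hμ (fun x y => k y x) hk.swap := by
  rw [ContinuousLinearMap.star_eq_adjoint]
  symm
  rw [ContinuousLinearMap.eq_adjoint_iff]
  intro f g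
  rw [L2.inner_def, L2.inner_def]
  have h1 : ∀ᵐ a ∂μ, inner ℝ (opL hμ (fun x y => k y x) hk.swap f a) (g a)
      = op μ (fun x y => k y x) f a * g a := by
    filter_upwards [opL_coe hμ hk.swap f] with a ha
    rw [ha]; simp [mul_comm]
  have h2 : ∀ᵐ a ∂μ, inner ℝ (f a) (opL hμ k hk g a) = f a * op μ k g a := by
    filter_upwards [opL_coe hμ hk g] with a ha
    rw [ha]; simp [mul_comm]
  rw [integral_congr_ae h1, integral_congr_ae h2]
  exact (hk.op_dual hμ (Lp.memLp f) (Lp.memLp g)).symm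

theorem opL_mul [SFinite μ] (hμ : Reg μ v Q) {k l : X → X → ℝ} (hk : BK k) (hl : BK l) :
    opL hμ k hk * opL hμ l hl = opL hμ (kcomp μ k l) (hk.kcomp hμ hl) := by
  ext1 f
  apply Lp.ext
  change opL hμ k hk (opL hμ l hl f) =ᵐ[μ] _
  have h1 := opL_coe hμ hk (opL hμ l hl f)
  have h2 := opL_coe hμ (hk.kcomp hμ hl) f
  have h3 : op μ k (opL hμ l hl f) = op μ k (op μ l f) := by
    funext x
    refine integral_congr_ae ?_
    filter_upwards [opL_coe hμ hl f] with y hy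
    rw [hy]
  rw [h3] at h1
  refine h1.trans (EventuallyEq.trans (ae_of_all _ fun x => ?_) h2.symm)
  have := hl.op_dual hμ (hk.memLp hμ x 2) (Lp.memLp f)
  simp only [op, CZ.kcomp] at this ⊢
  rw [this]
  congr 1; funext z; congr 2; funext y; ring

/-- A mean zero kernel living at distances at most `2 * s` from the diagonal, with size and
smoothness normalized to the scale `s`. -/
structure Piece (μ : Measure X) (Q : ℕ) (A s : ℝ) (k : X → X → ℝ) : Prop where
  meas : Measurable (Function.uncurry k)
  size : ∀ x y, |k x y| ≤ A / s ^ Q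
  supp : ∀ x y, 2 * s ≤ dist x y → k x y = 0
  lipl : ∀ x x' y, |k x y - k x' y| ≤ A * dist x x' / s ^ (Q+1)
  lipr : ∀ x y y', |k x y - k x y'| ≤ A * dist y y' / s ^ (Q+1)
  intr : ∀ x, ∫ y, k x y ∂μ = 0
  intl : ∀ y, ∫ x, k x y ∂μ = 0

theorem Piece.swap {A s : ℝ} {k : X → X → ℝ} (h : Piece μ Q A s k) :
    Piece μ Q A s (fun x y => k y x) where
  meas := h.meas.comp measurable_swap
  size x y := h.size y x
  supp x y hxy := h.supp y x (by rwa [dist_comm])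
  lipl x x' y := h.lipr y x x'
  lipr x y y' := h.lipl y y' x
  intr := h.intl
  intl := h.intr

theorem Piece.bk {A s : ℝ} (hs : 0 < s) {k : X → X → ℝ} (h : Piece μ Q A s k) : BK k where
  meas := h.meas
  bdd := by
    by_cases hX : Nonempty X
    · obtain ⟨x⟩ := hX
      exact ⟨_, (abs_nonneg _).trans (h.size x x), h.size⟩
    · exact ⟨0, le_rfl, fun x => (hX ⟨x⟩).elim⟩
  supp := ⟨2 * s, by positivity, h.supp⟩

theorem Piece.orth_aux [SFinite μ] (hμ : Reg μ v Q) {A s t : ℝ} (hA : 0 ≤ A) (hs : 0 < s)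
    (hst : s ≤ t) {k l : X → X → ℝ} (hk : Piece μ Q A s k) (hl : Piece μ Q A t l) :
    Schur μ (CZ.kcomp μ k l) (ENNReal.ofReal (2 * A^2 * v^2 * 8^Q * (s / t))) := by
  have ht : 0 < t := hs.trans_le hst
  have hkb := hk.bk hs
  have hlb := hl.bk ht
  have hv := hμ.vpos
  -- the cancellation of the small-scale kernel against the Lipschitz bound of the large-scale one
  -- yields the gain `s/t`
  have hb : ∀ x z, |CZ.kcomp μ k l x z| ≤ 2 * A^2 * v * 2^Q * (s/t) / t^Q := by
    intro x z
    have e : CZ.kcomp μ k l x z = CZ.kcomp μ k (fun y z => l y z - l x z) x z := by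
      unfold CZ.kcomp
      simp only [mul_sub]
      have i1 : Integrable (fun y => k x y * l y z) μ :=
        (hkb.memLp hμ x 2).integrable_mul (hlb.swap.memLp hμ z 2)
      have i2 : Integrable (fun y => k x y) μ := memLp_one_iff_integrable.1 (hkb.memLp hμ x 1)
      rw [integral_sub i1 (i2.mul_const _), integral_mul_const, hk.intr, zero_mul, sub_zero]
    rw [e]
    refine (kcomp_bound hμ (M := A / s^Q * (A * (2 * s) / t^(Q+1))) (R := 2*s) x z (by positivity)
      (fun y => ?_) (fun y hy => by rw [hk.supp x y hy, zero_mul])).trans (le_of_eq ?_)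
    · rcases le_or_gt (2*s) (dist x y) with hy | hy
      · rw [hk.supp x y hy, zero_mul, abs_zero]; positivity
      · rw [abs_mul]
        refine mul_le_mul (hk.size x y) ((hl.lipl y x z).trans ?_) (abs_nonneg _) (by positivity)
        rw [dist_comm] at hy
        gcongr
    · rw [mul_pow, pow_succ]; field_simp
  have hsupp : ∀ x z, 4 * t ≤ dist x z → CZ.kcomp μ k l x z = 0 := by
    intro x z hxz
    unfold CZ.kcomp
    have : ∀ y, k x y * l y z = 0 := fun y => by
      rcases le_or_gt (2*s) (dist x y) with h | h
      · rw [hk.supp x y h, zero_mul]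
      · rw [hl.supp y z, mul_zero]
        have := dist_triangle x y z
        linarith
    simp [this]
  · convert (hkb.kcomp hμ hlb).schur hμ (R := 4 * t) (by positivity) hb hsupp using 2
    rw [mul_pow, show (8:ℝ) = 2 * 4 by norm_num, mul_pow]; field_simp

/-- Almost orthogonality of pieces at different scales. -/
theorem Piece.orth [SFinite μ] (hμ : Reg μ v Q) {A s t : ℝ} (hA : 0 ≤ A) (hs : 0 < s)
    (ht : 0 < t) {k l : X → X → ℝ} (hk : Piece μ Q A s k) (hl : Piece μ Q A t l) :
    Schur μ (CZ.kcomp μ k l) (ENNReal.ofReal (2 * A^2 * v^2 * 8^Q * (min s t / max s t))) := by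
  rcases le_total s t with h | h
  · rw [min_eq_left h, max_eq_right h]
    exact Piece.orth_aux hμ hA hs h hk hl
  · rw [min_eq_right h, max_eq_left h]
    have := (Piece.orth_aux hμ hA ht h hl.swap hk.swap).swap
    convert this using 3 with x z
    unfold CZ.kcomp
    congr 1; funext y; ring

/-- A finite sum of pieces at dyadic scales is bounded on `L²`, uniformly in the number of scales. -/
theorem Piece.sum_bound [SFinite μ] (hμ : Reg μ v Q) {A ε : ℝ} (hA : 0 < A) (hε : 0 < ε)
    {k : ℕ → X → X → ℝ} (hk : ∀ j, Piece μ Q A (2^j * ε) (k j)) (N : ℕ) {f : X → ℝ}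
    (hf : MemLp f 2 μ) :
    eLpNorm (fun x => ∑ j ∈ Finset.range N, op μ (k j) f x) 2 μ
      ≤ ENNReal.ofReal (8 * Real.sqrt (2 * A^2 * v^2 * 8^Q)) * eLpNorm f 2 μ := by
  set C := 2 * A^2 * v^2 * 8^Q with hC
  have hv := hμ.vpos
  have hC0 : 0 < C := by positivity
  have hb : ∀ j, BK (k j) := fun j => (hk j).bk (by positivity)
  set T : Fin N → Lp ℝ 2 μ →L[ℝ] Lp ℝ 2 μ := fun i => opL hμ (k i) (hb i) with hT
  -- natural subtraction is exact here: `d i j = |i - j|`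
  set d : Fin N → Fin N → ℕ := fun i j => max i.1 j.1 - min i.1 j.1 with hd
  -- `(3/4)^2 > 1/2`, so the square root of the gain `2^(-|i-j|)` is dominated by a rational ratio
  set a : Fin N → Fin N → ℝ := fun i j => Real.sqrt C * (3/4)^(d i j) with ha
  have hscale : ∀ i j : Fin N, C * (min (2^i.1*ε) (2^j.1*ε) / max (2^i.1*ε) (2^j.1*ε)) ≤ a i j ^ 2 := by
    intro i j
    have e : min (2^i.1*ε) (2^j.1*ε) / max (2^i.1*ε) (2^j.1*ε) = (1/2)^(d i j) := by
      simp only [hd]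
      rcases le_total i.1 j.1 with h | h
      · have h2 : (2:ℝ)^i.1*ε ≤ 2^j.1*ε := by gcongr; norm_num
        rw [min_eq_left h2, max_eq_right h2, min_eq_left h, max_eq_right h]
        obtain ⟨m, hm⟩ := Nat.exists_eq_add_of_le h
        rw [hm, Nat.add_sub_cancel_left, pow_add, one_div, inv_pow]; field_simp
      · have h2 : (2:ℝ)^j.1*ε ≤ 2^i.1*ε := by gcongr; norm_num
        rw [min_eq_right h2, max_eq_left h2, min_eq_right h, max_eq_left h]
        obtain ⟨m, hm⟩ := Nat.exists_eq_add_of_le h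
        rw [hm, Nat.add_sub_cancel_left, pow_add, one_div, inv_pow]; field_simp
    rw [e, ha]
    simp only
    rw [mul_pow, Real.sq_sqrt hC0.le, ← pow_mul, mul_comm (d i j) 2, pow_mul]
    gcongr
    norm_num
  have hA' : 0 < 8 * Real.sqrt C := by positivity
  have h1 : ∀ i j, ‖T i * star (T j)‖ ≤ a i j ^ 2 := by
    intro i j
    simp only [hT]
    rw [opL_star, opL_mul]
    refine (opL_norm_le hμ _ (by positivity) (Piece.orth hμ hA.le (by positivity) (by positivity)
      (hk i) (hk j).swap)).trans (hscale i j)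
  have h2 : ∀ i j, ‖star (T i) * T j‖ ≤ a i j ^ 2 := by
    intro i j
    simp only [hT]
    rw [opL_star, opL_mul]
    refine (opL_norm_le hμ _ (by positivity) (Piece.orth hμ hA.le (by positivity) (by positivity)
      (hk i).swap (hk j))).trans (hscale i j)
  have hsum : ∀ i, ∑ j, a i j ≤ 8 * Real.sqrt C := by
    intro i
    have hg : ∀ M, ∑ m ∈ Finset.range M, (3/4:ℝ)^m ≤ 4 := by
      intro M
      have : Summable (fun m : ℕ => (3/4:ℝ)^m) := summable_geometric_of_lt_one (by norm_num) (by norm_num)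
      refine (this.sum_le_tsum _ (fun _ _ => by positivity)).trans (le_of_eq ?_)
      rw [tsum_geometric_of_lt_one (by norm_num) (by norm_num)]; norm_num
    simp only [ha]
    rw [← Finset.mul_sum, mul_comm (8:ℝ)]
    gcongr
    have h8 : ∑ j : Fin N, (3/4:ℝ)^(d i j) ≤
        ∑ j ∈ Finset.range N, (if j ≤ i.1 then (3/4:ℝ)^(i.1 - j) else 0) +
        ∑ j ∈ Finset.range N, (if i.1 ≤ j then (3/4:ℝ)^(j - i.1) else 0) := by
      rw [← Fin.sum_univ_eq_sum_range (fun j => (if j ≤ i.1 then (3/4:ℝ)^(i.1 - j) else 0)),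
        ← Fin.sum_univ_eq_sum_range (fun j => (if i.1 ≤ j then (3/4:ℝ)^(j - i.1) else 0)),
        ← Finset.sum_add_distrib]
      refine Finset.sum_le_sum fun j _ => ?_
      simp only [hd]
      rcases le_total i.1 j.1 with h | h
      · rw [min_eq_left h, max_eq_right h, if_pos h]
        have : (0:ℝ) ≤ (if j.1 ≤ i.1 then (3/4:ℝ)^(i.1 - j.1) else 0) := by split_ifs <;> positivity
        linarith
      · rw [min_eq_right h, max_eq_left h, if_pos h]
        have : (0:ℝ) ≤ (if i.1 ≤ j.1 then (3/4:ℝ)^(j.1 - i.1) else 0) := by split_ifs <;> positivity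
        linarith
    have e1 : ∑ j ∈ Finset.range N, (if j ≤ i.1 then (3/4:ℝ)^(i.1 - j) else 0) ≤ 4 := by
      refine le_trans (le_of_eq ?_) (hg (i.1+1))
      rw [← Finset.sum_filter, ← Finset.sum_range_reflect]
      refine Finset.sum_congr ?_ fun j hj => ?_
      · ext j; simp only [Finset.mem_filter, Finset.mem_range]; have := i.2; omega
      · congr 1
    have e2 : ∑ j ∈ Finset.range N, (if i.1 ≤ j then (3/4:ℝ)^(j - i.1) else 0) ≤ 4 := by
      refine le_trans (le_of_eq ?_) (hg (N - i.1))
      rw [← Finset.sum_filter]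
      have : Finset.filter (fun j => i.1 ≤ j) (Finset.range N) = Finset.Ico i.1 N := by
        ext j; simp only [Finset.mem_filter, Finset.mem_range, Finset.mem_Ico]; omega
      rw [this, Finset.sum_Ico_eq_sum_range]
      simp
    linarith
  have hcs := cotlar_stein T hA' (fun i j => by positivity) h1 h2 hsum
  have hcoe : (fun x => ∑ j ∈ Finset.range N, op μ (k j) f x) =ᵐ[μ] (∑ i, T i) (hf.toLp f) := by
    rw [sum_apply]
    have h3 : ∀ i : Fin N, (T i) (hf.toLp f) =ᵐ[μ] op μ (k i) f := by
      intro i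
      refine (opL_coe hμ (hb i) _).trans (ae_of_all _ fun x => integral_congr_ae ?_)
      filter_upwards [hf.coeFn_toLp] with y hy
      rw [hy]
    have h4 := Lp.coeFn_finsetSum Finset.univ (fun i : Fin N => (T i) (hf.toLp f))
    have h5 := ae_all_iff.2 h3
    filter_upwards [h4, h5] with x h4 h5
    rw [h4, ← Fin.sum_univ_eq_sum_range (fun j => op μ (k j) f x), Finset.sum_apply]
    exact Finset.sum_congr rfl fun i _ => (h5 i).symm
  rw [eLpNorm_congr_ae hcoe, ← eLpNorm_congr_ae hf.coeFn_toLp]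
  rw [← ENNReal.toReal_le_toReal (Lp.memLp _).2.ne (ENNReal.mul_ne_top ENNReal.ofReal_ne_top (Lp.memLp _).2.ne),
    ENNReal.toReal_mul, ENNReal.toReal_ofReal hA'.le, ← Lp.norm_def, ← Lp.norm_def]
  exact ContinuousLinearMap.le_of_opNorm_le _ hcs _

end KernelAlgebra
end CZ

/-! ### Truncated Calderón–Zygmund kernels and the `L²` bound -/

namespace CZ

section Family

variable {X : Type*} [MetricSpace X] [MeasurableSpace X] [BorelSpace X] [SecondCountableTopology X]

/-- A family of smoothly truncated Calderón–Zygmund kernels `k η`, `η > 0`, satisfying the size and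
smoothness estimates uniformly in `η`, agreeing with each other off the diagonal, and whose
differences have mean zero in both variables. -/
structure CZF (μ : Measure X) (Q : ℕ) (A : ℝ) (k : ℝ → X → X → ℝ) : Prop where
  A_pos : 0 < A
  Q_pos : Q ≠ 0
  meas : ∀ η, 0 < η → Measurable (Function.uncurry (k η))
  size : ∀ η, 0 < η → ∀ x y, |k η x y| ≤ A / max η (dist x y) ^ Q
  lipl : ∀ η, 0 < η → ∀ x x' y, 6 * dist x x' ≤ max η (dist x y) →
    |k η x y - k η x' y| ≤ A * dist x x' / max η (dist x y) ^ (Q+1)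
  lipr : ∀ η, 0 < η → ∀ x y y', 6 * dist y y' ≤ max η (dist x y) →
    |k η x y - k η x y'| ≤ A * dist y y' / max η (dist x y) ^ (Q+1)
  compat : ∀ η η', 0 < η → η ≤ η' → ∀ x y, η' ≤ dist x y → k η x y = k η' x y
  intr : ∀ η η', 0 < η → η ≤ η' → ∀ x, ∫ y, (k η x y - k η' x y) ∂μ = 0
  intl : ∀ η η', 0 < η → η ≤ η' → ∀ y, ∫ x, (k η x y - k η' x y) ∂μ = 0

variable {μ : Measure X} {v : ℝ} {Q : ℕ} {A : ℝ} {k : ℝ → X → X → ℝ}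

theorem CZF.size' (hk : CZF μ Q A k) {η : ℝ} (hη : 0 < η) (x y : X) : |k η x y| ≤ A / η ^ Q := by
  refine (hk.size η hη x y).trans ?_
  have := hk.A_pos
  gcongr
  exact le_max_left _ _

theorem CZF.size_dist (hk : CZF μ Q A k) {η : ℝ} (hη : 0 < η) (x y : X) (h : 0 < dist x y) :
    |k η x y| ≤ A / dist x y ^ Q := by
  refine (hk.size η hη x y).trans ?_
  have := hk.A_pos
  gcongr
  exact le_max_right _ _

theorem CZF.swap (hk : CZF μ Q A k) : CZF μ Q A (fun η x y => k η y x) where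
  A_pos := hk.A_pos
  Q_pos := hk.Q_pos
  meas η hη := (hk.meas η hη).comp measurable_swap
  size η hη x y := by rw [dist_comm]; exact hk.size η hη y x
  lipl η hη x x' y h := by
    rw [dist_comm x y] at h ⊢; exact hk.lipr η hη y x x' h
  lipr η hη x y y' h := by
    rw [dist_comm x y] at h ⊢; exact hk.lipl η hη y y' x h
  compat η η' hη h x y hxy := hk.compat η η' hη h y x (by rwa [dist_comm])
  intr := hk.intl
  intl := hk.intr

theorem CZF.lipl_global (hk : CZF μ Q A k) {η : ℝ} (hη : 0 < η) (x x' y : X) :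
    |k η x y - k η x' y| ≤ 12 * A * dist x x' / η ^ (Q+1) := by
  have hA := hk.A_pos
  rcases le_or_gt (6 * dist x x') (max η (dist x y)) with h | h
  · calc _ ≤ A * dist x x' / max η (dist x y) ^ (Q+1) := hk.lipl η hη x x' y h
      _ ≤ A * dist x x' / η ^ (Q+1) := by
          gcongr
          exact le_max_left _ _
      _ ≤ _ := by
          gcongr
          linarith
  · have h1 : η < 6 * dist x x' := (le_max_left _ _).trans_lt h
    calc _ ≤ |k η x y| + |k η x' y| := abs_sub _ _
      _ ≤ A / η ^ Q + A / η ^ Q := add_le_add (hk.size' hη _ _) (hk.size' hη _ _)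
      _ = 2 * A * η / η ^ (Q+1) := by rw [pow_succ]; field_simp; ring
      _ ≤ 2 * A * (6 * dist x x') / η ^ (Q+1) := by gcongr
      _ = _ := by ring

theorem CZF.lipr_global (hk : CZF μ Q A k) {η : ℝ} (hη : 0 < η) (x y y' : X) :
    |k η x y - k η x y'| ≤ 12 * A * dist y y' / η ^ (Q+1) :=
  hk.swap.lipl_global hη y y' x

theorem CZF.piece (hk : CZF μ Q A k) {η : ℝ} (hη : 0 < η) :
    Piece μ Q (24 * A) η (fun x y => k η x y - k (2*η) x y) := by
  have hA := hk.A_pos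
  have h2 : 0 < 2 * η := by positivity
  have hle : η ≤ 2 * η := by linarith
  have hlip : ∀ d : ℝ, 0 ≤ d → 12 * A * d / (2*η)^(Q+1) ≤ 12 * A * d / η^(Q+1) := by
    intro d hd
    gcongr
  exact {
    meas := (hk.meas η hη).sub (hk.meas _ h2)
    size := fun x y => by
      calc _ ≤ |k η x y| + |k (2*η) x y| := abs_sub _ _
        _ ≤ A / η ^ Q + A / (2*η) ^ Q := add_le_add (hk.size' hη _ _) (hk.size' h2 _ _)
        _ ≤ A / η ^ Q + A / η ^ Q := by gcongr
        _ ≤ _ := by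
          rw [← two_mul, ← mul_div_assoc]
          gcongr
          norm_num
    supp := fun x y hxy => by rw [hk.compat η (2*η) hη hle x y hxy, sub_self]
    lipl := fun x x' y => by
      calc _ = |(k η x y - k η x' y) - (k (2*η) x y - k (2*η) x' y)| := by ring_nf
        _ ≤ _ := abs_sub _ _
        _ ≤ 12 * A * dist x x' / η^(Q+1) + 12 * A * dist x x' / (2*η)^(Q+1) :=
          add_le_add (hk.lipl_global hη _ _ _) (hk.lipl_global h2 _ _ _)
        _ ≤ _ := by
          have := hlip (dist x x') dist_nonneg
          calc _ ≤ _ := add_le_add_right this _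
            _ = _ := by ring
    lipr := fun x y y' => by
      calc _ = |(k η x y - k η x y') - (k (2*η) x y - k (2*η) x y')| := by ring_nf
        _ ≤ _ := abs_sub _ _
        _ ≤ 12 * A * dist y y' / η^(Q+1) + 12 * A * dist y y' / (2*η)^(Q+1) :=
          add_le_add (hk.lipr_global hη _ _ _) (hk.lipr_global h2 _ _ _)
        _ ≤ _ := by
          have := hlip (dist y y') dist_nonneg
          calc _ ≤ _ := add_le_add_right this _
            _ = _ := by ring
    intr := hk.intr η _ hη hle
    intl := hk.intl η _ hη hle }

theorem CZF.integrable (hk : CZF μ Q A k) {η : ℝ} (hη : 0 < η) {f : X → ℝ} (hf : Integrable f μ)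
    (x : X) : Integrable (fun y => k η x y * f y) μ :=
  hf.bdd_mul (c := A / η^Q) ((hk.meas η hη).comp measurable_prodMk_left).aestronglyMeasurable
    (ae_of_all _ fun y => hk.size' hη x y)

theorem CZF.op_le (hk : CZF μ Q A k) {η : ℝ} (hη : 0 < η) {f : X → ℝ} (hf : Integrable f μ)
    (x : X) : |op μ (k η) f x| ≤ A / η^Q * ∫ y, |f y| ∂μ := by
  unfold op
  rw [← integral_const_mul]
  refine abs_integral_le_integral_abs.trans (integral_mono_of_nonneg (ae_of_all _ fun y => abs_nonneg _)
    (hf.abs.const_mul _) (ae_of_all _ fun y => ?_))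
  simp only
  rw [abs_mul]
  exact mul_le_mul_of_nonneg_right (hk.size' hη x y) (abs_nonneg _)

/-- The uniform `L²` bound. -/
theorem CZF.op_L2 [SFinite μ] (hμ : Reg μ v Q) (hk : CZF μ Q A k) {η : ℝ} (hη : 0 < η) {f : X → ℝ}
    (hf : Integrable f μ) (hf2 : MemLp f 2 μ) :
    eLpNorm (op μ (k η) f) 2 μ
      ≤ ENNReal.ofReal (8 * Real.sqrt (2 * (24*A)^2 * v^2 * 8^Q)) * eLpNorm f 2 μ := by
  have hA := hk.A_pos
  set K : ℕ → X → X → ℝ := fun j x y => k (2^j*η) x y - k (2*(2^j*η)) x y with hK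
  have hη' : ∀ j : ℕ, 0 < 2^j * η := fun j => by positivity
  have hKp : ∀ j, Piece μ Q (24*A) (2^j*η) (K j) := fun j => hk.piece (hη' j)
  -- the dyadic differences telescope, and the truncations at scale `2^N η` tend to zero pointwise
  have htel : ∀ N x, ∑ j ∈ Finset.range N, op μ (K j) f x = op μ (k η) f x - op μ (k (2^N*η)) f x := by
    intro N x
    induction N with
    | zero => simp
    | succ N ih =>
      rw [Finset.sum_range_succ, ih]
      have : op μ (K N) f x = op μ (k (2^N*η)) f x - op μ (k (2^(N+1)*η)) f x := by
        unfold op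
        rw [← integral_sub (hk.integrable (hη' N) hf x) (hk.integrable (hη' _) hf x)]
        congr 1; funext y
        simp only [hK]
        rw [show (2:ℝ)^(N+1)*η = 2*(2^N*η) by ring]; ring
      rw [this]; ring
  have hlim : ∀ x, Tendsto (fun N => ∑ j ∈ Finset.range N, op μ (K j) f x) atTop (𝓝 (op μ (k η) f x)) := by
    intro x
    simp_rw [htel]
    have h0 : Tendsto (fun N : ℕ => op μ (k (2^N*η)) f x) atTop (𝓝 0) := by
      apply squeeze_zero_norm (a := fun N : ℕ => (A / η^Q * ∫ y, |f y| ∂μ) * (1/2)^N)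
      · intro N
        refine (hk.op_le (hη' N) hf x).trans ?_
        have hi : 0 ≤ ∫ y, |f y| ∂μ := integral_nonneg fun y => abs_nonneg _
        calc A / (2^N*η)^Q * ∫ y, |f y| ∂μ ≤ A / (2^N * η^Q) * ∫ y, |f y| ∂μ := by
              rw [mul_pow]
              gcongr
              exact le_self_pow₀ (one_le_pow₀ (by norm_num)) hk.Q_pos
          _ = _ := by rw [one_div, inv_pow]; field_simp
      · rw [← mul_zero (A / η^Q * ∫ y, |f y| ∂μ)]
        exact (_root_.tendsto_pow_atTop_nhds_zero_of_lt_one (by norm_num) (by norm_num)).const_mul _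
    simpa using (tendsto_const_nhds (x := op μ (k η) f x)).sub h0
  refine (Lp.eLpNorm_lim_le_liminf_eLpNorm (f := fun N x => ∑ j ∈ Finset.range N, op μ (K j) f x)
    (fun N => ?_) _ (ae_of_all _ hlim)).trans ?_
  · exact Finset.aestronglyMeasurable_fun_sum _ fun j _ => op_aesm (hKp j).meas hf.1
  · refine liminf_le_of_le (by isBoundedDefault) fun b hb => ?_
    obtain ⟨N, hN⟩ := hb.exists
    exact hN.trans (Piece.sum_bound hμ (by positivity) hη hKp N hf2)

end Family
end CZ

/-! ### Cotlar's inequality -/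

namespace CZ

section Cotlar

variable {X : Type*} [MetricSpace X] [MeasurableSpace X] [BorelSpace X] [SecondCountableTopology X]
variable {μ : Measure X} {v : ℝ} {Q : ℕ} {A : ℝ} {k : ℝ → X → X → ℝ}

/-- Integrals of `F / dist x · ^ (Q+1)` away from `x` are controlled by the averages of `F` over
large balls. -/
theorem tail_le (hμ : Reg μ v Q) (F : X → ℝ≥0∞) (x : X) {r : ℝ} (hr : 0 < r) {m : ℝ≥0∞}
    (hm : ∀ ρ, r ≤ ρ → ∫⁻ y in Metric.ball x ρ, F y ∂μ ≤ m * μ (Metric.ball x ρ)) :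
    ∫⁻ y in (Metric.ball x r)ᶜ, ENNReal.ofReal (1 / dist x y ^ (Q+1)) * F y ∂μ
      ≤ ENNReal.ofReal (2^(Q+1) * v / r) * m := by
  have hv := hμ.vpos
  set S : ℕ → Set X := fun j => Metric.ball x (2^(j+1) * r) \ Metric.ball x (2^j * r) with hS
  have hcov : (Metric.ball x r)ᶜ ⊆ ⋃ j, S j := by
    intro y hy
    rw [Set.mem_compl_iff, Metric.mem_ball, not_lt] at hy
    obtain ⟨j, hj1, hj2⟩ := exists_nat_pow_near ((one_le_div hr).2 hy) one_lt_two
    rw [le_div_iff₀ hr] at hj1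
    rw [div_lt_iff₀ hr] at hj2
    exact Set.mem_iUnion.2 ⟨j, Metric.mem_ball.2 hj2, fun h => absurd (Metric.mem_ball.1 h) (not_lt.2 hj1)⟩
  have hj : ∀ j, ∫⁻ y in S j, ENNReal.ofReal (1 / dist x y ^ (Q+1)) * F y ∂μ
      ≤ ENNReal.ofReal (2^Q * v / r) * m * (2⁻¹)^j := by
    intro j
    have hρ : 0 < 2^j * r := by positivity
    have hρ' : 0 < 2^(j+1) * r := by positivity
    have hSm : MeasurableSet (S j) := measurableSet_ball.diff measurableSet_ball
    calc _ ≤ ∫⁻ y in S j, ENNReal.ofReal (1 / (2^j * r) ^ (Q+1)) * F y ∂μ := by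
          refine setLIntegral_mono' hSm fun y hy => ?_
          have h2 : 2^j * r ≤ dist x y := by
            have := hy.2
            rw [Metric.mem_ball, not_lt, dist_comm] at this
            exact this
          gcongr
      _ ≤ ENNReal.ofReal (1 / (2^j * r) ^ (Q+1)) * ∫⁻ y in Metric.ball x (2^(j+1)*r), F y ∂μ := by
          rw [lintegral_const_mul' _ _ ENNReal.ofReal_ne_top]
          gcongr
          exact Set.sdiff_subset
      _ ≤ ENNReal.ofReal (1 / (2^j * r) ^ (Q+1)) * (m * ENNReal.ofReal (v * (2^(j+1)*r)^Q)) := by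
          rw [← hμ.vol x _ hρ']
          gcongr
          exact hm _ (le_mul_of_one_le_left hr.le (one_le_pow₀ one_le_two))
      _ = ENNReal.ofReal (2^Q * v / r * (2⁻¹)^j) * m := by
          rw [mul_comm m, ← mul_assoc, ← ENNReal.ofReal_mul (by positivity)]
          congr 2
          rw [show (2:ℝ)^(j+1)*r = (2^j*r)*2 by ring, mul_pow (2^j*r), pow_succ (2^j*r), inv_pow]
          field_simp
      _ = _ := by
          rw [ENNReal.ofReal_mul (by positivity), ENNReal.ofReal_pow (by positivity),
            ENNReal.ofReal_inv_of_pos two_pos, ENNReal.ofReal_ofNat]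
          ring
  calc _ ≤ ∫⁻ y in ⋃ j, S j, ENNReal.ofReal (1 / dist x y ^ (Q+1)) * F y ∂μ := lintegral_mono_set hcov
    _ ≤ ∑' j, ∫⁻ y in S j, ENNReal.ofReal (1 / dist x y ^ (Q+1)) * F y ∂μ := lintegral_iUnion_le _ _
    _ ≤ ∑' j, ENNReal.ofReal (2^Q * v / r) * m * (2⁻¹)^j := ENNReal.tsum_le_tsum hj
    _ = ENNReal.ofReal (2^Q * v / r) * m * 2 := by
        rw [ENNReal.tsum_mul_left, ENNReal.tsum_geometric]
        congr 1
        rw [ENNReal.one_sub_inv_two, inv_inv]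
    _ = _ := by
        rw [show (2:ℝ)^(Q+1) * v / r = 2^Q * v / r * 2 by ring, ENNReal.ofReal_mul (by positivity),
          ENNReal.ofReal_ofNat]
        ring

theorem enorm_op_indicator_le (κ : X → X → ℝ) (f : X → ℝ) {E : Set X} (hE : MeasurableSet E) (x : X) :
    ‖op μ κ (E.indicator f) x‖ₑ ≤ ∫⁻ y in E, ‖κ x y‖ₑ * ‖f y‖ₑ ∂μ := by
  refine (enorm_op_le κ _ x).trans ?_
  rw [← lintegral_indicator hE]
  refine lintegral_mono fun y => ?_
  by_cases hy : y ∈ E <;> simp [hy]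

/-- Oscillation of the far part of a singular integral. -/
theorem CZF.op_diff_le (hμ : Reg μ v Q) (hk : CZF μ Q A k) {η : ℝ} (hη : 0 < η) {f : X → ℝ}
    (hf : Integrable f μ) (x x' : X) {r : ℝ} (hr : 0 < r) (hxr : 6 * dist x x' ≤ r) {m : ℝ≥0∞}
    (hm : ∀ ρ, r ≤ ρ → ∫⁻ y in Metric.ball x ρ, ‖f y‖ₑ ∂μ ≤ m * μ (Metric.ball x ρ)) :
    ‖op μ (k η) ((Metric.ball x r)ᶜ.indicator f) x - op μ (k η) ((Metric.ball x r)ᶜ.indicator f) x'‖ₑ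
      ≤ ENNReal.ofReal (A * 2^(Q+1) * v) * m := by
  have hA := hk.A_pos
  have hv := hμ.vpos
  have hE : MeasurableSet (Metric.ball x r)ᶜ := measurableSet_ball.compl
  have hi := hf.indicator hE
  have e : op μ (k η) ((Metric.ball x r)ᶜ.indicator f) x - op μ (k η) ((Metric.ball x r)ᶜ.indicator f) x'
      = op μ (fun _ y => k η x y - k η x' y) ((Metric.ball x r)ᶜ.indicator f) x := by
    unfold op
    rw [← integral_sub (hk.integrable hη hi x) (hk.integrable hη hi x')]
    congr 1; funext y; ring
  rw [e]
  refine (enorm_op_indicator_le _ f hE x).trans ?_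
  calc _ ≤ ∫⁻ y in (Metric.ball x r)ᶜ, ENNReal.ofReal (A * dist x x') *
        (ENNReal.ofReal (1 / dist x y ^ (Q+1)) * ‖f y‖ₑ) ∂μ := by
        refine setLIntegral_mono' hE fun y hy => ?_
        rw [Set.mem_compl_iff, Metric.mem_ball, not_lt, dist_comm] at hy
        rw [← mul_assoc, ← ENNReal.ofReal_mul (by positivity)]
        refine mul_le_mul_left ?_ _
        rw [← ofReal_norm, Real.norm_eq_abs]
        apply ENNReal.ofReal_le_ofReal
        refine (hk.lipl η hη x x' y (hxr.trans (hy.trans (le_max_right _ _)))).trans ?_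
        rw [mul_one_div]
        have : 0 < dist x y := hr.trans_le hy
        gcongr
        exact le_max_right _ _
    _ ≤ ENNReal.ofReal (A * dist x x') * (ENNReal.ofReal (2^(Q+1) * v / r) * m) := by
        rw [lintegral_const_mul' _ _ ENNReal.ofReal_ne_top]
        gcongr
        exact tail_le hμ _ x hr hm
    _ ≤ _ := by
        rw [← mul_assoc, ← ENNReal.ofReal_mul (by positivity)]
        refine mul_le_mul_left (ENNReal.ofReal_le_ofReal ?_) _
        have h1 : dist x x' ≤ r := by have := dist_nonneg (x := x) (y := x'); linarith
        calc A * dist x x' * (2^(Q+1) * v / r) ≤ A * r * (2^(Q+1) * v / r) := by gcongr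
          _ = _ := by field_simp

theorem setLIntegral_ball_le_maxFn (hμ : Reg μ v Q) (F : X → ℝ≥0∞) {z x : X} {ρ : ℝ} (hρ : 0 < ρ)
    (hz : z ∈ Metric.ball x ρ) :
    ∫⁻ y in Metric.ball x ρ, F y ∂μ ≤ maxFn μ F z * μ (Metric.ball x ρ) := by
  rw [← ENNReal.div_le_iff (hμ.pos x hρ).ne' (hμ.fin x ρ).ne]
  exact avg_le_maxFn μ F hρ hz

theorem CZF.op_near_le (hk : CZF μ Q A k) {η : ℝ} (hη : 0 < η) (f : X → ℝ) {E : Set X}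
    (hE : MeasurableSet E) (x : X) :
    ‖op μ (k η) (E.indicator f) x‖ₑ ≤ ENNReal.ofReal (A / η^Q) * ∫⁻ y in E, ‖f y‖ₑ ∂μ := by
  refine (enorm_op_indicator_le _ f hE x).trans ?_
  rw [← lintegral_const_mul' _ _ ENNReal.ofReal_ne_top]
  refine lintegral_mono fun y => mul_le_mul_left ?_ _
  rw [← ofReal_norm, Real.norm_eq_abs]
  exact ENNReal.ofReal_le_ofReal (hk.size' hη x y)

theorem CZF.op_lip (hk : CZF μ Q A k) {η : ℝ} (hη : 0 < η) {f : X → ℝ} (hf : Integrable f μ) :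
    Continuous (op μ (k η) f) := by
  have hA := hk.A_pos
  refine (LipschitzWith.of_dist_le_mul (K := Real.toNNReal (12 * A / η^(Q+1) * ∫ y, |f y| ∂μ)) fun x x' => ?_).continuous
  have h0 : 0 ≤ ∫ y, |f y| ∂μ := integral_nonneg fun y => abs_nonneg _
  rw [Real.coe_toNNReal _ (by positivity), Real.dist_eq]
  unfold op
  rw [← integral_sub (hk.integrable hη hf x) (hk.integrable hη hf x')]
  calc _ ≤ ∫ y, 12 * A / η^(Q+1) * dist x x' * |f y| ∂μ := by
        refine abs_integral_le_integral_abs.trans (integral_mono_of_nonneg (ae_of_all _ fun y => abs_nonneg _)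
          (hf.abs.const_mul _) (ae_of_all _ fun y => ?_))
        simp only
        rw [← sub_mul, abs_mul]
        refine mul_le_mul_of_nonneg_right ((hk.lipl_global hη x x' y).trans (le_of_eq ?_)) (abs_nonneg _)
        ring
    _ = _ := by rw [integral_const_mul]; ring

/-- The maximal truncated operator. -/
def Tst (μ : Measure X) (k : ℝ → X → X → ℝ) (f : X → ℝ) (x : X) : ℝ≥0∞ :=
  ⨆ (η : ℝ) (_ : 0 < η), ‖op μ (k η) f x‖ₑ

theorem op_add_indicator (hk : CZF μ Q A k) {η : ℝ} (hη : 0 < η) {f : X → ℝ} (hf : Integrable f μ)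
    {E : Set X} (hE : MeasurableSet E) (x : X) :
    op μ (k η) f x = op μ (k η) (E.indicator f) x + op μ (k η) (Eᶜ.indicator f) x := by
  unfold op
  rw [← integral_add (hk.integrable hη (hf.indicator hE) x) (hk.integrable hη (hf.indicator hE.compl) x)]
  congr 1; funext y
  rw [← mul_add, Set.indicator_self_add_compl_apply]

theorem CZF.op_far_eq (hk : CZF μ Q A k) {ε η : ℝ} (hε : 0 < ε) (h : ε ≤ η) (f : X → ℝ) (x : X)
    {r : ℝ} (hr : η ≤ r) :
    op μ (k ε) ((Metric.ball x r)ᶜ.indicator f) x = op μ (k η) ((Metric.ball x r)ᶜ.indicator f) x := by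
  unfold op
  congr 1; funext y
  by_cases hy : y ∈ Metric.ball x r
  · simp [hy]
  · rw [hk.compat ε η hε h]
    rw [Metric.mem_ball, not_lt, dist_comm] at hy
    exact hr.trans hy

/-- **Cotlar's inequality**, with an `L²` maximal function. -/
theorem CZF.cotlar [SFinite μ] (hμ : Reg μ v Q) (hk : CZF μ Q A k) : ∃ C : ℝ, 0 < C ∧
    ∀ (ε η : ℝ), 0 < ε → ε ≤ η → ∀ f : X → ℝ, Integrable f μ → MemLp f 2 μ → ∀ x,
    ‖op μ (k η) f x‖ₑ ≤ ENNReal.ofReal C * maxFn μ (fun y => ‖f y‖ₑ) x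
      + maxFn μ (fun y => ‖op μ (k ε) f y‖ₑ) x
      + ENNReal.ofReal C * (maxFn μ (fun y => ‖f y‖ₑ ^ 2) x) ^ (1/2:ℝ) := by
  have hA := hk.A_pos
  have hv := hμ.vpos
  set D := 8 * Real.sqrt (2 * (24*A)^2 * v^2 * 8^Q) with hD
  have hD0 : 0 < D := by positivity
  refine ⟨A * v + A * 2^(Q+1) * v + D * Real.sqrt (6^Q), by positivity, ?_⟩
  intro ε η hε hεη f hf hf2 x
  have hη := hε.trans_le hεη
  set M := maxFn μ (fun y => ‖f y‖ₑ) x with hM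
  set M2 := maxFn μ (fun y => ‖f y‖ₑ ^ 2) x with hM2
  set MT := maxFn μ (fun y => ‖op μ (k ε) f y‖ₑ) x with hMT
  set B := Metric.ball x η with hB
  set B' := Metric.ball x (η/6) with hB'
  have hBm : MeasurableSet B := measurableSet_ball
  have hB'm : MeasurableSet B' := measurableSet_ball
  have hB'0 : μ B' ≠ 0 := (hμ.pos x (by positivity)).ne'
  have hB't : μ B' ≠ ⊤ := (hμ.fin x _).ne
  have hBB' : μ B = ENNReal.ofReal (6^Q) * μ B' := by
    rw [hB, hB', ← hμ.scale x x (r := η/6) (c := 6) (by positivity) (by norm_num)]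
    congr 2; ring
  -- the part of `f` in the ball of radius `η` is handled by the size bound alone
  have near : ‖op μ (k η) (B.indicator f) x‖ₑ ≤ ENNReal.ofReal (A * v) * M := by
    refine (hk.op_near_le hη f hBm x).trans ?_
    calc _ ≤ ENNReal.ofReal (A / η^Q) * (M * μ B) := by
          gcongr
          exact setLIntegral_ball_le_maxFn hμ _ hη (Metric.mem_ball_self hη)
      _ = _ := by
          rw [hB, hμ.vol x η hη, mul_comm M, ← mul_assoc, ← ENNReal.ofReal_mul (by positivity)]
          congr 2; field_simp
  -- far part, compared with the values at nearby points
  set a := ‖op μ (k ε) (Bᶜ.indicator f) x‖ₑ with ha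
  have far : ∀ z ∈ B', a ≤ ENNReal.ofReal (A * 2^(Q+1) * v) * M + ‖op μ (k ε) f z‖ₑ
      + ‖op μ (k ε) (B.indicator f) z‖ₑ := by
    intro z hz
    have h1 := hk.op_diff_le hμ hε hf x z hη (m := M) (by
      rw [hB', Metric.mem_ball, dist_comm] at hz; linarith)
      (fun ρ hρ => setLIntegral_ball_le_maxFn hμ _ (hη.trans_le hρ) (Metric.mem_ball_self (hη.trans_le hρ)))
    have e : op μ (k ε) (Bᶜ.indicator f) x = (op μ (k ε) (Bᶜ.indicator f) x - op μ (k ε) (Bᶜ.indicator f) z)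
        + op μ (k ε) f z - op μ (k ε) (B.indicator f) z := by
      rw [op_add_indicator hk hε hf hBm z]; ring
    rw [ha, e]
    exact enorm_sub_le.trans (add_le_add_left ((enorm_add_le _ _).trans (add_le_add_left h1 _)) _)
  have hfB2 : MemLp (B.indicator f) 2 μ := hf2.indicator hBm
  have hTm : Measurable (fun z => ‖op μ (k ε) f z‖ₑ) := (hk.op_lip hε hf).measurable.enorm
  have hT1m : Measurable (fun z => ‖op μ (k ε) (B.indicator f) z‖ₑ) :=
    (hk.op_lip hε (hf.indicator hBm)).measurable.enorm
  have i2 : ∫⁻ z in B', ‖op μ (k ε) (B.indicator f) z‖ₑ ∂μ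
      ≤ ENNReal.ofReal (D * Real.sqrt (6^Q)) * M2 ^ (1/2:ℝ) * μ B' := by
    have s1 : ∫⁻ z, ‖op μ (k ε) (B.indicator f) z‖ₑ ^ 2 ∂μ ≤ ENNReal.ofReal D ^ 2 * (M2 * μ B) := by
      have h := hk.op_L2 hμ hε (hf.indicator hBm) hfB2
      have h := pow_le_pow_left' h 2
      rw [mul_pow, eLpNorm_two_sq, eLpNorm_two_sq] at h
      refine h.trans (mul_le_mul_right ?_ _)
      refine le_trans (le_of_eq ?_) (setLIntegral_ball_le_maxFn hμ _ hη (Metric.mem_ball_self hη))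
      rw [← lintegral_indicator hBm]
      congr 1; funext y
      by_cases hy : y ∈ B <;> simp [hy]
    have s2 := ENNReal.lintegral_mul_le_Lp_mul_Lq (μ.restrict B') Real.HolderConjugate.two_two
      (f := fun z => ‖op μ (k ε) (B.indicator f) z‖ₑ) (g := fun _ => 1) hT1m.aemeasurable
      aemeasurable_const
    simp only [Pi.mul_apply, mul_one, ENNReal.rpow_two] at s2
    calc _ ≤ _ := s2
      _ ≤ (ENNReal.ofReal D ^ 2 * (M2 * μ B)) ^ (1/2:ℝ) * (μ B') ^ (1/2:ℝ) := by
          gcongr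
          · exact (setLIntegral_le_lintegral _ _).trans s1
          · simp
      _ = _ := by
          have h2 : (0:ℝ) ≤ 1/2 := by norm_num
          rw [hBB', ENNReal.mul_rpow_of_nonneg _ _ h2, ENNReal.mul_rpow_of_nonneg _ _ h2,
            ENNReal.mul_rpow_of_nonneg _ _ h2, ← ENNReal.rpow_natCast, ← ENNReal.rpow_mul,
            ENNReal.ofReal_rpow_of_nonneg (by positivity) h2, ← Real.sqrt_eq_rpow,
            ENNReal.ofReal_mul hD0.le]
          have e3 : (μ B') ^ (1/2:ℝ) * (μ B') ^ (1/2:ℝ) = μ B' := by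
            rw [← ENNReal.rpow_add_of_nonneg _ _ h2 h2]; norm_num
          have e4 : ENNReal.ofReal D ^ (((2:ℕ):ℝ) * (1/2)) = ENNReal.ofReal D := by norm_num
          rw [e4]
          calc _ = ENNReal.ofReal D * ENNReal.ofReal (Real.sqrt (6^Q)) * M2 ^ (1/2:ℝ) *
                ((μ B') ^ (1/2:ℝ) * (μ B') ^ (1/2:ℝ)) := by ring
            _ = _ := by rw [e3]
  have i1 : ∫⁻ z in B', ‖op μ (k ε) f z‖ₑ ∂μ ≤ MT * μ B' :=
    setLIntegral_ball_le_maxFn hμ _ (by positivity) (Metric.mem_ball_self (by positivity))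
  -- average the estimate over `z` in the small ball
  have havg : a ≤ ENNReal.ofReal (A * 2^(Q+1) * v) * M + MT
      + ENNReal.ofReal (D * Real.sqrt (6^Q)) * M2 ^ (1/2:ℝ) := by
    rw [← ENNReal.mul_le_mul_iff_left hB'0 hB't]
    calc a * μ B' = ∫⁻ _z in B', a ∂μ := by rw [setLIntegral_const]
      _ ≤ ∫⁻ z in B', (ENNReal.ofReal (A * 2^(Q+1) * v) * M + ‖op μ (k ε) f z‖ₑ
          + ‖op μ (k ε) (B.indicator f) z‖ₑ) ∂μ := setLIntegral_mono' hB'm far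
      _ = ENNReal.ofReal (A * 2^(Q+1) * v) * M * μ B' + ∫⁻ z in B', ‖op μ (k ε) f z‖ₑ ∂μ
          + ∫⁻ z in B', ‖op μ (k ε) (B.indicator f) z‖ₑ ∂μ := by
          rw [lintegral_add_right _ hT1m, lintegral_add_right _ hTm, setLIntegral_const]
      _ ≤ _ := by
          rw [add_mul, add_mul]
          exact add_le_add (add_le_add le_rfl i1) i2
  calc ‖op μ (k η) f x‖ₑ
      ≤ ‖op μ (k η) (B.indicator f) x‖ₑ + a := by
        rw [op_add_indicator hk hη hf hBm x, ha, hk.op_far_eq hε hεη f x le_rfl]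
        exact enorm_add_le _ _
    _ ≤ ENNReal.ofReal (A * v) * M + (ENNReal.ofReal (A * 2^(Q+1) * v) * M + MT
      + ENNReal.ofReal (D * Real.sqrt (6^Q)) * M2 ^ (1/2:ℝ)) := add_le_add near havg
    _ = (ENNReal.ofReal (A * v) + ENNReal.ofReal (A * 2^(Q+1) * v)) * M + MT
      + ENNReal.ofReal (D * Real.sqrt (6^Q)) * M2 ^ (1/2:ℝ) := by ring
    _ ≤ _ := by
        rw [← ENNReal.ofReal_add (by positivity) (by positivity)]
        have h1 : 0 ≤ D * Real.sqrt (6^Q) := by positivity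
        have h2 : 0 ≤ A * v + A * 2^(Q+1) * v := by positivity
        refine add_le_add (add_le_add (mul_le_mul_left (ENNReal.ofReal_le_ofReal ?_) _) le_rfl)
          (mul_le_mul_left (ENNReal.ofReal_le_ofReal ?_) _) <;> linarith

end Cotlar
end CZ

/-! ### Weak type (2,2) of the maximal truncation -/

namespace CZ

section WeakTwo

variable {X : Type*} [MetricSpace X] [MeasurableSpace X] [BorelSpace X] [SecondCountableTopology X]
variable {μ : Measure X} {v : ℝ} {Q : ℕ} {A : ℝ} {k : ℝ → X → X → ℝ}

theorem CZF.isOpen_Tst (hk : CZF μ Q A k) {f : X → ℝ} (hf : Integrable f μ) (t : ℝ≥0∞) :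
    IsOpen {x | t < Tst μ k f x} := by
  have : {x | t < Tst μ k f x} = ⋃ (η : ℝ) (_ : 0 < η), {x | t < ‖op μ (k η) f x‖ₑ} := by
    ext x; simp [Tst, lt_iSup_iff]
  rw [this]
  exact isOpen_iUnion fun η => isOpen_iUnion fun hη =>
    isOpen_lt continuous_const (hk.op_lip hη hf).enorm

theorem CZF.measurable_Tst (hk : CZF μ Q A k) {f : X → ℝ} (hf : Integrable f μ) :
    Measurable (Tst μ k f) :=
  measurable_of_Ioi fun t => (hk.isOpen_Tst hf t).measurableSet

theorem lt_add3 {t a b c : ℝ≥0∞} (h : t < a + b + c) : t / 3 < a ∨ t / 3 < b ∨ t / 3 < c := by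
  by_contra! hc
  obtain ⟨h1, h2, h3⟩ := hc
  refine absurd h (not_lt.2 ?_)
  calc a + b + c ≤ t/3 + t/3 + t/3 := add_le_add (add_le_add h1 h2) h3
    _ = t := ENNReal.add_thirds t

/-- The maximal truncation is of weak type `(2,2)`: a consequence of Cotlar's inequality. -/
theorem CZF.weak_two [SFinite μ] (hμ : Reg μ v Q) (hk : CZF μ Q A k) : ∃ C : ℝ≥0∞, C ≠ ⊤ ∧
    ∀ f : X → ℝ, Integrable f μ → MemLp f 2 μ → Measurable f → ∀ t : ℝ≥0∞,
    t ^ 2 * μ {x | t < Tst μ k f x} ≤ C * ∫⁻ x, ‖f x‖ₑ ^ 2 ∂μ := by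
  obtain ⟨C, hC, hcot⟩ := hk.cotlar hμ
  have hdb := hμ.doubling
  set c := ENNReal.ofReal C with hc
  have hc0 : c ≠ 0 := by simpa [hc] using hC
  have hct : c ≠ ⊤ := ENNReal.ofReal_ne_top
  set D := ENNReal.ofReal (6^Q) with hD
  have hDt : D ≠ ⊤ := ENNReal.ofReal_ne_top
  set S : ℝ≥0∞ := 2 * D * ENNReal.ofReal (2/(2-1)) * 2^((2:ℝ)-1) with hS
  have hSt : S ≠ ⊤ := by
    refine ENNReal.mul_ne_top (ENNReal.mul_ne_top (ENNReal.mul_ne_top (by simp) hDt) ENNReal.ofReal_ne_top) ?_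
    norm_num
  set L := ENNReal.ofReal (8 * Real.sqrt (2 * (24*A)^2 * v^2 * 8^Q)) with hL
  have hLt : L ≠ ⊤ := ENNReal.ofReal_ne_top
  have strong : ∀ F : X → ℝ≥0∞, Measurable F → ∫⁻ x, maxFn μ F x ^ 2 ∂μ ≤ S * ∫⁻ x, F x ^ 2 ∂μ := by
    intro F hF
    have := maxFn_strong hdb (q := 2) (by norm_num) hF
    simpa only [ENNReal.rpow_two] using this
  refine ⟨9 * c^2 * S + 9 * (S * L^2) + 9 * c^2 * D, by finiteness, ?_⟩
  intro f hf hf2 hfm t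
  set I := ∫⁻ x, ‖f x‖ₑ ^ 2 ∂μ with hI
  have key : ∀ ε : ℝ, 0 < ε → t^2 * μ {x | ∃ η, ε ≤ η ∧ t < ‖op μ (k η) f x‖ₑ}
      ≤ (9 * c^2 * S + 9 * (S * L^2) + 9 * c^2 * D) * I := by
    intro ε hε
    set M := maxFn μ (fun y => ‖f y‖ₑ) with hM
    set M2 := maxFn μ (fun y => ‖f y‖ₑ ^ 2) with hM2
    set MT := maxFn μ (fun y => ‖op μ (k ε) f y‖ₑ) with hMT
    have hTm : Measurable (fun z => ‖op μ (k ε) f z‖ₑ) := (hk.op_lip hε hf).measurable.enorm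
    have hsub : {x | ∃ η, ε ≤ η ∧ t < ‖op μ (k η) f x‖ₑ} ⊆
        ({x | t^2 ≤ 9 * c^2 * M x ^ 2} ∪ {x | t^2 ≤ 9 * MT x ^ 2}) ∪ {x | t^2 / (9 * c^2) < M2 x} := by
      rintro x ⟨η, hη, hx⟩
      have h := hx.trans_le (hcot ε η hε hη f hf hf2 x)
      have sq : ∀ a : ℝ≥0∞, t / 3 < a → t^2 < 9 * a^2 := by
        intro a ha
        have h3 : t < 3 * a := by
          rwa [ENNReal.div_lt_iff (by simp) (by simp), mul_comm] at ha
        calc t^2 < (3 * a)^2 := by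
              gcongr
          _ = _ := by rw [mul_pow]; norm_num
      rcases lt_add3 h with h | h | h
      · left; left
        have := (sq _ h).le
        rw [mul_pow, ← mul_assoc] at this
        exact this
      · left; right; exact (sq _ h).le
      · right
        have := sq _ h
        rw [mul_pow, ← mul_assoc] at this
        show t^2 / (9 * c^2) < M2 x
        rw [ENNReal.div_lt_iff (by simp [hc0]) (by left; finiteness), mul_comm]
        convert this using 2
        rw [← ENNReal.rpow_natCast, ← ENNReal.rpow_mul]; norm_num [hM2]
    have m1 : t^2 * μ {x | t^2 ≤ 9 * c^2 * M x ^ 2} ≤ 9 * c^2 * S * I := by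
      refine (mul_meas_ge_le_lintegral ?_ _).trans ?_
      · exact ((measurable_maxFn μ _).pow_const 2).const_mul _
      rw [lintegral_const_mul _ ((measurable_maxFn μ _).pow_const 2)]
      rw [mul_assoc (9*c^2) S]
      exact mul_le_mul_right (strong _ hfm.enorm) _
    have m2 : t^2 * μ {x | t^2 ≤ 9 * MT x ^ 2} ≤ 9 * (S * L^2) * I := by
      refine (mul_meas_ge_le_lintegral ?_ _).trans ?_
      · exact ((measurable_maxFn μ _).pow_const 2).const_mul _
      rw [lintegral_const_mul _ ((measurable_maxFn μ _).pow_const 2), mul_assoc, mul_assoc]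
      refine mul_le_mul_right ((strong _ hTm).trans (mul_le_mul_right ?_ _)) _
      have h := pow_le_pow_left' (hk.op_L2 hμ hε hf hf2) 2
      rwa [mul_pow, eLpNorm_two_sq, eLpNorm_two_sq] at h
    have m3 : t^2 * μ {x | t^2 / (9 * c^2) < M2 x} ≤ 9 * c^2 * D * I := by
      have := maxFn_weak hdb (fun y => ‖f y‖ₑ ^ 2) (t^2/(9*c^2))
      calc t^2 * μ {x | t^2 / (9 * c^2) < M2 x}
          = 9 * c^2 * (t^2/(9*c^2) * μ {x | t^2 / (9 * c^2) < M2 x}) := by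
            rw [← mul_assoc, ENNReal.mul_div_cancel (by simp [hc0]) (by finiteness)]
        _ ≤ _ := by rw [mul_assoc (9*c^2) D]; exact mul_le_mul_right this _
    calc _ ≤ t^2 * (μ {x | t^2 ≤ 9 * c^2 * M x ^ 2} + μ {x | t^2 ≤ 9 * MT x ^ 2}
          + μ {x | t^2 / (9 * c^2) < M2 x}) :=
          mul_le_mul_right ((measure_mono hsub).trans ((measure_union_le _ _).trans
            (add_le_add_left (measure_union_le _ _) _))) _
      _ ≤ _ := by
          rw [mul_add, mul_add, add_mul, add_mul]
          exact add_le_add (add_le_add m1 m2) m3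
  -- the bound for scales `≥ ε` is uniform in `ε`, so continuity from below removes the restriction
  have hun : {x | t < Tst μ k f x} = ⋃ m : ℕ, {x | ∃ η, 1/((m:ℝ)+1) ≤ η ∧ t < ‖op μ (k η) f x‖ₑ} := by
    ext x
    simp only [Tst, lt_iSup_iff, Set.mem_ofPred_eq, Set.mem_iUnion]
    constructor
    · rintro ⟨η, hη, h⟩
      obtain ⟨m, hm⟩ := exists_nat_one_div_lt hη
      exact ⟨m, η, hm.le, h⟩
    · rintro ⟨m, η, hη, h⟩
      exact ⟨η, lt_of_lt_of_le (by positivity) hη, h⟩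
  have hmono : Monotone fun m : ℕ => {x | ∃ η, 1/((m:ℝ)+1) ≤ η ∧ t < ‖op μ (k η) f x‖ₑ} := by
    rintro m m' hmm x ⟨η, hη, h⟩
    exact ⟨η, le_trans (by gcongr) hη, h⟩
  rw [hun, hmono.measure_iUnion, ENNReal.mul_iSup]
  exact iSup_le fun m => key _ (by positivity)

end WeakTwo
end CZ

/-! ### Whitney coverings -/

namespace CZ

section Whitney

variable {X : Type*} [MetricSpace X] [MeasurableSpace X] [BorelSpace X] [SecondCountableTopology X]
variable {μ : Measure X} {v : ℝ} {Q : ℕ}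

/-- A Whitney-type covering of an open set of finite measure: disjoint balls `ball (x i) (r i)`
whose sixfold dilates cover, and whose radii are comparable to the distance to the complement.
Unused indices have `r i = 0`. -/
theorem whitney [Nonempty X] (hμ : Reg μ v Q) (hQ : Q ≠ 0) {Ω : Set X} (hΩ : IsOpen Ω)
    (hfin : μ Ω ≠ ⊤) : ∃ (x : ℕ → X) (r : ℕ → ℝ), (∀ i, 0 ≤ r i) ∧
      Pairwise (Function.onFun Disjoint fun i => Metric.ball (x i) (r i)) ∧
      (∀ i, Metric.ball (x i) (40 * r i) ⊆ Ω) ∧ Ω ⊆ ⋃ i, Metric.ball (x i) (6 * r i) ∧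
      ∀ i, 0 < r i → ∃ y, y ∉ Ω ∧ dist (x i) y < 50 * r i := by
  have hv := hμ.vpos
  set d : X → ℝ := fun x => Metric.infDist x Ωᶜ with hd
  have hball : ∀ x, Metric.ball x (d x) ⊆ Ω := fun x => by
    have := Metric.disjoint_ball_infDist (s := Ωᶜ) (x := x)
    exact Set.disjoint_compl_right_iff_subset.1 this
  set m := (μ Ω).toReal with hm
  have hvol : ∀ x r, 0 < r → Metric.ball x r ⊆ Ω → r ≤ max 1 (m / v) := by
    intro x r hr h
    have h1 := measure_mono (μ := μ) h
    rw [hμ.vol x r hr, ENNReal.ofReal_le_iff_le_toReal hfin] at h1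
    rcases le_total r 1 with h2 | h2
    · exact h2.trans (le_max_left _ _)
    · refine le_trans ?_ (le_max_right _ _)
      rw [le_div_iff₀ hv, mul_comm]
      refine le_trans ?_ h1
      gcongr
      exact le_self_pow₀ h2 hQ
  have hne : (Ωᶜ).Nonempty := by
    by_contra hc
    rw [Set.not_nonempty_iff_eq_empty, Set.compl_empty_iff] at hc
    obtain ⟨x⟩ := ‹Nonempty X›
    have := hvol x (max 1 (m/v) + 1) (by positivity) (by rw [hc]; exact Set.subset_univ _)
    linarith
  have hdpos : ∀ x ∈ Ω, 0 < d x := fun x hx =>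
    (hΩ.isClosed_compl.notMem_iff_infDist_pos hne).1 (by simpa using hx)
  obtain ⟨s, hsΩ, hsd, hsc⟩ := Vitali.exists_disjoint_subfamily_covering_enlargement_closedBall
    Ω (fun x : X => x) (fun x => d x / 40) (max 1 (m/v)) (fun x hx => by
      have h1 := hvol x (d x) (hdpos x hx) (hball x)
      have h2 := hdpos x hx
      linarith) 5 (by norm_num)
  have hsd' : s.PairwiseDisjoint fun x => Metric.ball x (d x / 40) :=
    hsd.mono fun x => Metric.ball_subset_closedBall
  have hscount : s.Countable := hsd'.countable_of_isOpen (fun _ _ => Metric.isOpen_ball)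
    (fun x hx => ⟨x, Metric.mem_ball_self (by have := hdpos x (hsΩ hx); positivity)⟩)
  letI := hscount.toEncodable
  obtain ⟨x0⟩ := ‹Nonempty X›
  set e : ℕ → Option s := fun i => Encodable.decode₂ s i with he
  set x : ℕ → X := fun i => (e i).elim x0 (fun y => y.1) with hx
  set r : ℕ → ℝ := fun i => (e i).elim 0 (fun y => d y.1 / 40) with hr
  have cases : ∀ i, r i = 0 ∨ ∃ y : s, e i = some y ∧ x i = y ∧ r i = d y / 40 := by
    intro i
    rcases h : e i with _ | y
    · left; simp [hr, h]
    · right; exact ⟨y, rfl, by simp [hx, h], by simp [hr, h]⟩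
  refine ⟨x, r, ?_, ?_, ?_, ?_, ?_⟩
  · intro i
    rcases cases i with h | ⟨y, -, -, h⟩
    · rw [h]
    · rw [h]; exact div_nonneg Metric.infDist_nonneg (by norm_num)
  · intro i j hij
    rcases cases i with h | ⟨y, h1, h2, h3⟩
    · simp [Function.onFun, h]
    rcases cases j with h | ⟨y', h1', h2', h3'⟩
    · simp [Function.onFun, h]
    simp only [Function.onFun]
    rw [h2, h3, h2', h3']
    refine hsd' y.2 y'.2 fun hyy => hij ?_
    have hyy : y = y' := Subtype.ext hyy
    subst hyy
    rw [he, Encodable.decode₂_eq_some] at h1 h1'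
    exact h1.symm.trans h1'
  · intro i
    rcases cases i with h | ⟨y, -, h2, h⟩
    · simp [h]
    · rw [h, h2]; convert hball y using 2; ring
  · intro z hz
    obtain ⟨b, hb, hzb⟩ := hsc z hz
    refine Set.mem_iUnion.2 ⟨Encodable.encode (⟨b, hb⟩ : s), ?_⟩
    have e1 : e (Encodable.encode (⟨b, hb⟩ : s)) = some ⟨b, hb⟩ := Encodable.encodek₂ _
    have hxb : x (Encodable.encode (⟨b, hb⟩ : s)) = b := by simp only [hx, e1]; rfl
    have hrb : r (Encodable.encode (⟨b, hb⟩ : s)) = d b / 40 := by simp only [hr, e1]; rfl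
    rw [hxb, hrb, Metric.mem_ball]
    have h1 := Metric.mem_closedBall.1 (hzb (Metric.mem_closedBall_self (by have := hdpos z hz; positivity)))
    have h2 := hdpos b (hsΩ hb)
    linarith
  · intro i hi
    rcases cases i with h | ⟨y, -, h2, h⟩
    · linarith
    · rw [h2, h]
      obtain ⟨z, hz, hzd⟩ := (Metric.infDist_lt_iff hne (x := (y:X)) (r := 50 * (d y / 40))).1 (by
        have := hdpos y (hsΩ y.2)
        show d y < _
        linarith)
      exact ⟨z, hz, hzd⟩

/-- Lebesgue differentiation, in the weak form of a bound by the maximal function. -/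
theorem ae_le_maxFn (hμ : Reg μ v Q) {f : X → ℝ} (hf : Integrable f μ) :
    ∀ᵐ x ∂μ, ‖f x‖ₑ ≤ ENNReal.ofReal (2^Q) * maxFn μ (fun y => ‖f y‖ₑ) x := by
  have hv := hμ.vpos
  have hcb : ∀ x (r : ℝ), 0 < r → μ (Metric.closedBall x r) ≤ ENNReal.ofReal (2^Q) * μ (Metric.ball x r) := by
    intro x r hr
    rw [← hμ.scale x x hr (by norm_num)]
    exact measure_mono (Metric.closedBall_subset_ball (by linarith))
  have : IsLocallyFiniteMeasure μ := ⟨fun x => ⟨Metric.ball x 1, Metric.ball_mem_nhds x one_pos, hμ.fin x 1⟩⟩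
  have : IsUnifLocDoublingMeasure μ := by
    refine ⟨⟨Real.toNNReal (4^Q), ?_⟩⟩
    filter_upwards [self_mem_nhdsWithin] with ε hε x
    have hε : 0 < ε := hε
    calc μ (Metric.closedBall x (2*ε)) ≤ μ (Metric.ball x (4 * ε)) :=
          measure_mono (Metric.closedBall_subset_ball (by linarith))
      _ = ENNReal.ofReal (4^Q) * μ (Metric.ball x ε) := hμ.scale x x hε (by norm_num)
      _ ≤ _ := by
        rw [ENNReal.ofReal]
        gcongr
        exact Metric.ball_subset_closedBall
  have h := IsUnifLocDoublingMeasure.ae_tendsto_average μ hf.norm.locallyIntegrable 1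
  filter_upwards [h] with x hx
  have h1 := hx (ι := ℝ) (l := 𝓝[>] 0) (fun _ => x) (fun δ => δ) tendsto_id (by
    filter_upwards [self_mem_nhdsWithin] with δ hδ
    exact Metric.mem_closedBall_self (by simpa using (le_of_lt hδ)))
  have h2 : Tendsto (fun δ => ENNReal.ofReal (⨍ y in Metric.closedBall x δ, ‖f y‖ ∂μ)) (𝓝[>] 0)
      (𝓝 ‖f x‖ₑ) := by
    rw [← ofReal_norm]
    exact (ENNReal.continuous_ofReal.tendsto _).comp h1
  refine le_of_tendsto h2 ?_
  filter_upwards [self_mem_nhdsWithin] with δ hδ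
  have hδ : 0 < δ := hδ
  have hp : 0 < μ (Metric.closedBall x δ) := (hμ.pos x hδ).trans_le (measure_mono Metric.ball_subset_closedBall)
  have hfi : μ (Metric.closedBall x δ) ≠ ⊤ := ((hcb x δ hδ).trans_lt
    (ENNReal.mul_lt_top ENNReal.ofReal_lt_top (hμ.fin x δ))).ne
  rw [setAverage_eq, smul_eq_mul, ENNReal.ofReal_mul (by positivity), measureReal_def, ← ENNReal.toReal_inv,
    ENNReal.ofReal_toReal (by simpa using hp.ne'), ofReal_integral_norm_eq_lintegral_enorm hf.integrableOn,
    mul_comm, ← div_eq_mul_inv, ENNReal.div_le_iff hp.ne' hfi]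
  calc ∫⁻ y in Metric.closedBall x δ, ‖f y‖ₑ ∂μ ≤ ∫⁻ y in Metric.ball x (2 * δ), ‖f y‖ₑ ∂μ :=
        lintegral_mono_set (Metric.closedBall_subset_ball (by linarith))
    _ ≤ maxFn μ (fun y => ‖f y‖ₑ) x * μ (Metric.ball x (2*δ)) :=
        setLIntegral_ball_le_maxFn hμ _ (by positivity) (Metric.mem_ball_self (by positivity))
    _ = ENNReal.ofReal (2^Q) * maxFn μ (fun y => ‖f y‖ₑ) x * μ (Metric.ball x δ) := by
        rw [hμ.scale x x hδ (by norm_num)]; ring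
    _ ≤ _ := mul_le_mul_right (measure_mono Metric.ball_subset_closedBall) _

end Whitney
end CZ

/-! ### Weak type (1,1) of the maximal truncation -/

namespace CZ

section WeakOne

variable {X : Type*} [MetricSpace X] [MeasurableSpace X] [BorelSpace X] [SecondCountableTopology X]
variable {μ : Measure X} {v : ℝ} {Q : ℕ} {A : ℝ} {k : ℝ → X → X → ℝ}

/-- Far from `z`, replacing the part of `f` on `E` by the constant of the same integral on
`ball z r` changes the singular integral by little. -/
theorem CZF.bad_le (hμ : Reg μ v Q) (hk : CZF μ Q A k) {η : ℝ} (hη : 0 < η) {x z : X} {r : ℝ} (hr : 0 < r)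
    (hx : 40 * r ≤ dist x z) {E : Set X} (hE : MeasurableSet E) (hEz : E ⊆ Metric.ball z (6*r))
    {f : X → ℝ} (hf : Integrable f μ) {α : ℝ} (hα : ∫ y in E, f y ∂μ = α * μ.real (Metric.ball z r)) :
    ‖(∫ y in E, k η x y * f y ∂μ) - ∫ y in Metric.ball z r, k η x y * α ∂μ‖ₑ
      ≤ ENNReal.ofReal (12 * A * r) * ENNReal.ofReal (1 / dist z x ^ (Q+1)) * ∫⁻ y in E, ‖f y‖ₑ ∂μ := by
  have hA := hk.A_pos
  have hd : 0 < dist x z := by linarith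
  set K := A * (6 * r) / dist x z ^ (Q+1) with hK
  have hK0 : 0 ≤ K := by positivity
  have hbt : μ (Metric.ball z r) < ⊤ := hμ.fin z r
  have hlip : ∀ y ∈ Metric.ball z (6*r), |k η x y - k η x z| ≤ K := by
    intro y hy
    rw [Metric.mem_ball] at hy
    have hm : 6 * dist z y ≤ max η (dist x z) := by
      rw [dist_comm]; exact le_trans (by linarith) (le_max_right _ _)
    have := hk.lipr η hη x z y hm
    rw [abs_sub_comm]
    refine this.trans ?_
    rw [hK, dist_comm z y]
    gcongr
    exact le_max_right _ _
  have i1 : IntegrableOn (fun y => k η x y * f y) E μ := (hk.integrable hη hf x).integrableOn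
  have i2 : IntegrableOn (fun y => k η x z * f y) E μ := (hf.const_mul _).integrableOn
  have i3 : IntegrableOn (fun y => k η x y * α) (Metric.ball z r) μ := by
    have hi : Integrable ((Metric.ball z r).indicator fun _ => α) μ :=
      (integrable_indicator_iff measurableSet_ball).2 (integrableOn_const hbt.ne)
    have := (hk.integrable hη hi x).integrableOn (s := Metric.ball z r)
    refine this.congr_fun (fun y hy => ?_) measurableSet_ball
    simp [hy]
  have i4 : IntegrableOn (fun _ => k η x z * α) (Metric.ball z r) μ := integrableOn_const hbt.ne
  have e : (∫ y in E, k η x y * f y ∂μ) - ∫ y in Metric.ball z r, k η x y * α ∂μ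
      = (∫ y in E, (k η x y - k η x z) * f y ∂μ) - ∫ y in Metric.ball z r, (k η x y - k η x z) * α ∂μ := by
    have e1 : ∫ y in E, (k η x y - k η x z) * f y ∂μ
        = (∫ y in E, k η x y * f y ∂μ) - k η x z * ∫ y in E, f y ∂μ := by
      simp_rw [sub_mul]
      rw [integral_sub i1 i2, integral_const_mul]
    have e2 : ∫ y in Metric.ball z r, (k η x y - k η x z) * α ∂μ
        = (∫ y in Metric.ball z r, k η x y * α ∂μ) - k η x z * (α * μ.real (Metric.ball z r)) := by
      simp_rw [sub_mul]
      rw [integral_sub i3 i4, setIntegral_const, smul_eq_mul]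
      ring
    rw [e1, e2, hα]; ring
  have b1 : |∫ y in E, (k η x y - k η x z) * f y ∂μ| ≤ K * ∫ y in E, ‖f y‖ ∂μ := by
    rw [← integral_const_mul, ← Real.norm_eq_abs]
    refine norm_integral_le_of_norm_le (hf.norm.const_mul _).integrableOn
      ((ae_restrict_iff' hE).2 (ae_of_all _ fun y hy => ?_))
    rw [norm_mul, Real.norm_eq_abs (k η x y - k η x z)]
    exact mul_le_mul_of_nonneg_right (hlip y (hEz hy)) (norm_nonneg _)
  have b2 : |∫ y in Metric.ball z r, (k η x y - k η x z) * α ∂μ| ≤ K * ∫ y in E, ‖f y‖ ∂μ := by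
    have := norm_setIntegral_le_of_norm_le_const (f := fun y => (k η x y - k η x z) * α) (C := K * |α|) hbt
      (fun y hy => by
        rw [norm_mul, Real.norm_eq_abs, Real.norm_eq_abs]
        exact mul_le_mul_of_nonneg_right (hlip y (Metric.ball_subset_ball (by linarith) hy)) (abs_nonneg _))
    rw [← Real.norm_eq_abs]
    refine this.trans ?_
    rw [mul_assoc]
    refine mul_le_mul_of_nonneg_left ?_ hK0
    calc |α| * μ.real (Metric.ball z r) = |∫ y in E, f y ∂μ| := by
          rw [hα, abs_mul, abs_of_nonneg (measureReal_nonneg (μ := μ) (s := Metric.ball z r))]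
      _ ≤ _ := by rw [← Real.norm_eq_abs]; exact norm_integral_le_integral_norm _
  rw [e, ← ofReal_norm, Real.norm_eq_abs, ← ofReal_integral_norm_eq_lintegral_enorm hf.integrableOn,
    ← ENNReal.ofReal_mul (by positivity), ← ENNReal.ofReal_mul (by positivity)]
  refine ENNReal.ofReal_le_ofReal ((abs_sub _ _).trans ((add_le_add b1 b2).trans (le_of_eq ?_)))
  rw [hK, dist_comm z x]; ring

/-- The maximal truncation is of weak type `(1,1)`, by the Calderón–Zygmund decomposition. -/
theorem CZF.weak_one [SFinite μ] (hμ : Reg μ v Q) (hk : CZF μ Q A k) : ∃ C : ℝ≥0∞, C ≠ ⊤ ∧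
    ∀ f : X → ℝ, Integrable f μ → Measurable f → ∀ t : ℝ≥0∞,
    t * μ {x | t < Tst μ k f x} ≤ C * ∫⁻ x, ‖f x‖ₑ ∂μ := by
  have hA := hk.A_pos
  have hv := hμ.vpos
  have hQ := hk.Q_pos
  obtain ⟨C2, hC2, hweak⟩ := hk.weak_two hμ
  set N := ENNReal.ofReal (60^Q) with hN
  have hNt : N ≠ ⊤ := ENNReal.ofReal_ne_top
  set D := ENNReal.ofReal (6^Q) with hD
  have hDt : D ≠ ⊤ := ENNReal.ofReal_ne_top
  set H := ENNReal.ofReal (A * 2^(Q+1) * v) with hH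
  have hHt : H ≠ ⊤ := ENNReal.ofReal_ne_top
  refine ⟨D + 4 * (C2 * N) + 2 * H, by finiteness, ?_⟩
  intro f hf hfm t
  rcases isEmpty_or_nonempty X with hX | hX
  · simp [Set.eq_empty_of_isEmpty]
  rcases eq_or_ne t 0 with rfl | ht0
  · simp
  rcases eq_or_ne t ⊤ with rfl | htt
  · simp
  set I := ∫⁻ x, ‖f x‖ₑ ∂μ with hI
  have hIt : I ≠ ⊤ := hf.2.ne
  set M := maxFn μ (fun y => ‖f y‖ₑ) with hM
  set Ω := {x | t < M x} with hΩ
  have hΩo : IsOpen Ω := isOpen_lt_maxFn μ _ t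
  have hΩm := hΩo.measurableSet
  have hweakM : t * μ Ω ≤ D * I := maxFn_weak hμ.doubling _ t
  have hΩt : μ Ω ≠ ⊤ := by
    intro h
    rw [h, ENNReal.mul_top ht0] at hweakM
    exact absurd (top_le_iff.1 hweakM) (by finiteness)
  obtain ⟨z, r, hr0, hdisj, hsub, hcov, hout⟩ := whitney hμ hQ hΩo hΩt
  set b : ℕ → Set X := fun i => Metric.ball (z i) (r i) with hb
  set B : ℕ → Set X := fun i => Metric.ball (z i) (6 * r i) with hB
  set E : ℕ → Set X := disjointed B with hE
  have hbm : ∀ i, MeasurableSet (b i) := fun i => measurableSet_ball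
  have hEm : ∀ i, MeasurableSet (E i) := MeasurableSet.disjointed fun i => measurableSet_ball
  have hEd : Pairwise (Function.onFun Disjoint E) := disjoint_disjointed B
  have hEB : ∀ i, E i ⊆ B i := fun i => disjointed_subset B i
  have hBΩ : ∀ i, B i ⊆ Ω := fun i => (Metric.ball_subset_ball (by linarith [hr0 i])).trans (hsub i)
  have hbΩ : ∀ i, b i ⊆ Ω := fun i => (Metric.ball_subset_ball (by linarith [hr0 i])).trans (hsub i)
  have hEU : ⋃ i, E i = Ω := by
    rw [hE, iUnion_disjointed]
    exact Set.Subset.antisymm (Set.iUnion_subset hBΩ) hcov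
  have hEI : ∀ i, ∫⁻ y in E i, ‖f y‖ₑ ∂μ ≤ N * t * μ (b i) := by
    intro i
    rcases (hr0 i).eq_or_lt with h | h
    · have : E i = ∅ := Set.subset_empty_iff.1 ((hEB i).trans (by simp [hB, ← h]))
      simp [this]
    obtain ⟨y, hy, hyd⟩ := hout i h
    have hMy : M y ≤ t := not_lt.1 hy
    calc ∫⁻ y in E i, ‖f y‖ₑ ∂μ ≤ ∫⁻ y in Metric.ball y (60 * r i), ‖f y‖ₑ ∂μ := by
          refine lintegral_mono_set ((hEB i).trans (Metric.ball_subset_ball' ?_))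
          linarith
      _ ≤ M y * μ (Metric.ball y (60 * r i)) :=
          setLIntegral_ball_le_maxFn hμ _ (by positivity) (Metric.mem_ball_self (by positivity))
      _ ≤ t * (N * μ (b i)) := by
          rw [hμ.scale y (z i) h (by norm_num)]
          gcongr
      _ = _ := by ring
  set α : ℕ → ℝ := fun i => (∫ y in E i, f y ∂μ) / μ.real (b i) with hα
  have hμb : ∀ i, 0 < r i → 0 < μ.real (b i) := fun i hi =>
    ENNReal.toReal_pos (hμ.pos _ hi).ne' (hμ.fin _ _).ne
  have hαE : ∀ i, ‖α i‖ₑ * μ (b i) ≤ ∫⁻ y in E i, ‖f y‖ₑ ∂μ := by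
    intro i
    rcases (hr0 i).eq_or_lt with h | h
    · simp [hb, ← h]
    have h1 : ‖α i‖ₑ * μ (b i) = ‖∫ y in E i, f y ∂μ‖ₑ := by
      have : μ (b i) = ‖μ.real (b i)‖ₑ := by
        rw [Real.enorm_eq_ofReal measureReal_nonneg, ofReal_measureReal (hμ.fin _ _).ne]
      rw [this, ← enorm_mul, hα]
      simp only
      rw [div_mul_cancel₀ _ (hμb i h).ne']
    rw [h1]; exact enorm_integral_le_lintegral_enorm _
  -- the mass of `f` on each `E i` is spread evenly over the disjoint core ball `b i`, which keeps the
  -- good function bounded by a multiple of `t`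
  set g1 : X → ℝ := fun y => ∑' i, (b i).indicator (fun _ => α i) y with hg1
  have hg1m : Measurable g1 := Measurable.tsum fun i => measurable_const.indicator (hbm i)
  have hg1b : ∀ i, ∀ y ∈ b i, g1 y = α i := by
    intro i y hy
    simp only [hg1]
    rw [tsum_eq_single i, Set.indicator_of_mem hy]
    intro j hj
    exact Set.indicator_of_notMem (fun hjy => Set.disjoint_left.1 (hdisj hj) hjy hy) _
  have hg10 : ∀ y, (∀ i, y ∉ b i) → g1 y = 0 := by
    intro y hy
    simp [hg1, hy]
  have hg1Ω : ∀ y, y ∉ Ω → g1 y = 0 := fun y hy => hg10 y fun i hi => hy (hbΩ i hi)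
  have hg1t : ∀ y, ‖g1 y‖ₑ ≤ N * t := by
    intro y
    by_cases h : ∃ i, y ∈ b i
    · obtain ⟨i, hi⟩ := h
      have hri : 0 < r i := Metric.pos_of_mem_ball hi
      rw [hg1b i y hi, ← ENNReal.mul_le_mul_iff_left (hμ.pos (z i) hri).ne' (hμ.fin (z i) (r i)).ne]
      exact (hαE i).trans (hEI i)
    · push Not at h
      simp [hg10 y h]
  have hg1I : ∫⁻ y, ‖g1 y‖ₑ ∂μ ≤ ∫⁻ y in Ω, ‖f y‖ₑ ∂μ := by
    calc ∫⁻ y, ‖g1 y‖ₑ ∂μ ≤ ∫⁻ y, ∑' i, (b i).indicator (fun _ => ‖α i‖ₑ) y ∂μ := by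
          refine lintegral_mono fun y => ?_
          refine enorm_tsum_le_tsum_enorm.trans (ENNReal.tsum_le_tsum fun i => ?_)
          by_cases hi : y ∈ b i <;> simp [hi]
      _ = ∑' i, ‖α i‖ₑ * μ (b i) := by
          rw [lintegral_tsum fun i => (measurable_const.indicator (hbm i)).aemeasurable]
          congr 1; funext i
          rw [lintegral_indicator (hbm i), setLIntegral_const]
      _ ≤ ∑' i, ∫⁻ y in E i, ‖f y‖ₑ ∂μ := ENNReal.tsum_le_tsum hαE
      _ = _ := by rw [← lintegral_iUnion hEm hEd, hEU]
  have hg1i : Integrable g1 μ := ⟨hg1m.aestronglyMeasurable,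
    hg1I.trans_lt ((setLIntegral_le_lintegral _ _).trans_lt hf.2)⟩
  set g : X → ℝ := fun y => Ωᶜ.indicator f y + g1 y with hg
  have hfΩi := hf.indicator hΩm.compl
  have hgi : Integrable g μ := hfΩi.add hg1i
  have hgm : Measurable g := (hfm.indicator hΩm.compl).add hg1m
  have hgt : ∀ᵐ y ∂μ, ‖g y‖ₑ ≤ N * t := by
    filter_upwards [ae_le_maxFn hμ hf] with y hy
    by_cases h : y ∈ Ω
    · simp only [hg, Set.indicator_of_notMem (Set.notMem_compl_iff.2 h), zero_add]
      exact hg1t y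
    · simp only [hg, hg1Ω y h, Set.indicator_of_mem (Set.mem_compl h), add_zero]
      refine hy.trans (mul_le_mul' (ENNReal.ofReal_le_ofReal (by gcongr; norm_num)) (not_lt.1 h))
  have hgI : ∫⁻ y, ‖g y‖ₑ ∂μ ≤ I := by
    calc ∫⁻ y, ‖g y‖ₑ ∂μ ≤ ∫⁻ y, (‖Ωᶜ.indicator f y‖ₑ + ‖g1 y‖ₑ) ∂μ := lintegral_mono fun y => enorm_add_le _ _
      _ = ∫⁻ y, ‖Ωᶜ.indicator f y‖ₑ ∂μ + ∫⁻ y, ‖g1 y‖ₑ ∂μ := lintegral_add_right _ hg1m.enorm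
      _ ≤ ∫⁻ y in Ωᶜ, ‖f y‖ₑ ∂μ + ∫⁻ y in Ω, ‖f y‖ₑ ∂μ := by
          refine add_le_add (le_of_eq ?_) hg1I
          rw [← lintegral_indicator hΩm.compl]
          congr 1; funext y
          by_cases h : y ∈ Ω <;> simp [h]
      _ = I := by rw [add_comm, lintegral_add_compl _ hΩm]
  have hg2 : ∫⁻ y, ‖g y‖ₑ ^ 2 ∂μ ≤ N * t * I := by
    calc ∫⁻ y, ‖g y‖ₑ ^ 2 ∂μ ≤ ∫⁻ y, N * t * ‖g y‖ₑ ∂μ := by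
          refine lintegral_mono_ae ?_
          filter_upwards [hgt] with y hy
          rw [sq]; gcongr
      _ = N * t * ∫⁻ y, ‖g y‖ₑ ∂μ := lintegral_const_mul _ hgm.enorm
      _ ≤ _ := by gcongr
  have hgL2 : MemLp g 2 μ := by
    refine ⟨hgm.aestronglyMeasurable, ?_⟩
    have h : eLpNorm g 2 μ ^ 2 < ⊤ := by
      rw [eLpNorm_two_sq]
      exact hg2.trans_lt (by finiteness)
    exact (ENNReal.pow_lt_top_iff.1 h).resolve_right (by norm_num)
  have hgood : t * μ {x | t / 2 < Tst μ k g x} ≤ 4 * (C2 * N) * I := by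
    have h := hweak g hgi hgL2 hgm (t/2)
    rw [← ENNReal.mul_le_mul_iff_left ht0 htt]
    calc t * μ {x | t / 2 < Tst μ k g x} * t = 4 * ((t/2)^2 * μ {x | t / 2 < Tst μ k g x}) := by
          have : t = 2 * (t/2) := by rw [ENNReal.mul_div_cancel (by simp) (by simp)]
          have hs : ∀ s m : ℝ≥0∞, 2 * s * m * (2 * s) = 4 * (s^2 * m) := fun s m => by ring
          rw [← hs (t/2), ← this]
      _ ≤ 4 * (C2 * (N * t * I)) := mul_le_mul_right (h.trans (mul_le_mul_right hg2 _)) _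
      _ = _ := by ring
  -- pointwise majorant, off `Ω`, of the contributions of the mean-zero bad pieces
  set Hf : X → ℝ≥0∞ := fun x => ∑' i, ENNReal.ofReal (12 * A * r i) *
    ENNReal.ofReal (1 / dist (z i) x ^ (Q+1)) * ∫⁻ y in E i, ‖f y‖ₑ ∂μ with hHf
  have hHfm : Measurable Hf := by
    refine Measurable.tsum fun i => ?_
    refine Measurable.mul_const (Measurable.const_mul ?_ _) _
    exact (measurable_const.div ((measurable_const.dist measurable_id).pow_const _)).ennreal_ofReal
  have hpt : ∀ x ∉ Ω, Tst μ k f x ≤ Tst μ k g x + Hf x := by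
    intro x hx
    refine iSup₂_le fun η hη => ?_
    have hdist : ∀ i, 40 * r i ≤ dist x (z i) := by
      intro i
      by_contra! h
      exact hx (hsub i (Metric.mem_ball.2 h))
    have e : op μ (k η) f x = op μ (k η) g x + (op μ (k η) (Ω.indicator f) x - op μ (k η) g1 x) := by
      rw [op_add_indicator hk hη hf hΩm x]
      have : op μ (k η) g x = op μ (k η) (Ωᶜ.indicator f) x + op μ (k η) g1 x := by
        unfold op
        rw [← integral_add (hk.integrable hη hfΩi x) (hk.integrable hη hg1i x)]
        congr 1; funext y; simp only [hg]; ring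
      rw [this]; ring
    have s1 : HasSum (fun i => ∫ y in E i, k η x y * f y ∂μ) (op μ (k η) (Ω.indicator f) x) := by
      have h := hasSum_integral_iUnion (μ := μ) (f := fun y => k η x y * f y) hEm hEd
        (hk.integrable hη hf x).integrableOn
      rw [hEU, ← integral_indicator hΩm] at h
      have h1 : ∫ y, Ω.indicator (fun y => k η x y * f y) y ∂μ = op μ (k η) (Ω.indicator f) x := by
        unfold op
        congr 1; funext y
        by_cases hy : y ∈ Ω <;> simp [hy]
      rwa [h1] at h
    have s2 : HasSum (fun i => ∫ y in b i, k η x y * α i ∂μ) (op μ (k η) g1 x) := by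
      have h := hasSum_integral_iUnion (μ := μ) (f := fun y => k η x y * g1 y) hbm hdisj
        (hk.integrable hη hg1i x).integrableOn
      have h1 : ∀ i, ∫ y in b i, k η x y * g1 y ∂μ = ∫ y in b i, k η x y * α i ∂μ := fun i =>
        setIntegral_congr_fun (hbm i) fun y hy => by simp only [hg1b i y hy]
      have h2 : ∫ y in ⋃ i, b i, k η x y * g1 y ∂μ = op μ (k η) g1 x := by
        unfold op
        refine setIntegral_eq_integral_of_forall_compl_eq_zero fun y hy => ?_
        rw [hg10 y fun i hi => hy (Set.mem_iUnion.2 ⟨i, hi⟩), mul_zero]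
      rw [h2] at h
      simpa only [h1] using h
    have hbad : ‖op μ (k η) (Ω.indicator f) x - op μ (k η) g1 x‖ₑ ≤ Hf x := by
      rw [← (s1.sub s2).tsum_eq]
      refine enorm_tsum_le_tsum_enorm.trans (ENNReal.tsum_le_tsum fun i => ?_)
      rcases (hr0 i).eq_or_lt with h | h
      · have h1 : E i = ∅ := Set.subset_empty_iff.1 ((hEB i).trans (by simp [hB, ← h]))
        have h2 : b i = ∅ := by simp [hb, ← h]
        simp [h1, h2]
      · refine hk.bad_le hμ hη h (hdist i) (hEm i) (hEB i) hf ?_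
        rw [hα]; simp only
        rw [div_mul_cancel₀ _ (hμb i h).ne']
    rw [e]
    refine (enorm_add_le _ _).trans (add_le_add ?_ hbad)
    exact le_iSup₂ (f := fun η (_ : 0 < η) => ‖op μ (k η) g x‖ₑ) η hη
  have hHI : ∫⁻ x in Ωᶜ, Hf x ∂μ ≤ H * I := by
    calc ∫⁻ x in Ωᶜ, Hf x ∂μ = ∑' i, ∫⁻ x in Ωᶜ, ENNReal.ofReal (12 * A * r i) *
          ENNReal.ofReal (1 / dist (z i) x ^ (Q+1)) * (∫⁻ y in E i, ‖f y‖ₑ ∂μ) ∂μ := by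
          refine lintegral_tsum fun i => Measurable.aemeasurable ?_
          refine Measurable.mul_const (Measurable.const_mul ?_ _) _
          exact (measurable_const.div ((measurable_const.dist measurable_id).pow_const _)).ennreal_ofReal
      _ ≤ ∑' i, H * ∫⁻ y in E i, ‖f y‖ₑ ∂μ := by
          refine ENNReal.tsum_le_tsum fun i => ?_
          have hm : Measurable fun x => ENNReal.ofReal (1 / dist (z i) x ^ (Q+1)) :=
            (measurable_const.div ((measurable_const.dist measurable_id).pow_const _)).ennreal_ofReal
          rw [lintegral_mul_const _ (hm.const_mul _), lintegral_const_mul _ hm]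
          refine mul_le_mul_left ?_ _
          rcases (hr0 i).eq_or_lt with h | h
          · simp [← h]
          have h40 : 0 < 40 * r i := by positivity
          have ht := tail_le hμ (fun _ => 1) (z i) h40 (m := 1) (fun ρ _ => by simp)
          simp only [mul_one] at ht
          calc _ ≤ ENNReal.ofReal (12 * A * r i) * ENNReal.ofReal (2^(Q+1) * v / (40 * r i)) := by
                refine mul_le_mul_right (le_trans (lintegral_mono_set ?_) ht) _
                exact Set.compl_subset_compl.2 (hsub i)
            _ ≤ H := by
                rw [← ENNReal.ofReal_mul (by positivity)]
                refine ENNReal.ofReal_le_ofReal ?_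
                rw [show 12 * A * r i * (2^(Q+1) * v / (40 * r i)) = (12/40) * (A * 2^(Q+1) * v) by field_simp]
                have : 0 ≤ A * 2^(Q+1) * v := by positivity
                linarith
      _ = H * ∫⁻ y in Ω, ‖f y‖ₑ ∂μ := by
          rw [ENNReal.tsum_mul_left, ← lintegral_iUnion hEm hEd, hEU]
      _ ≤ _ := mul_le_mul_right (setLIntegral_le_lintegral _ _) _
  have hsubs : {x | t < Tst μ k f x} ⊆ (Ω ∪ {x | t/2 < Tst μ k g x}) ∪ ({x | t/2 ≤ Hf x} ∩ Ωᶜ) := by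
    intro x hx
    by_cases h : x ∈ Ω
    · left; left; exact h
    by_cases h2 : t/2 < Tst μ k g x
    · left; right; exact h2
    right
    refine ⟨?_, h⟩
    have h3 : t < Tst μ k g x + Hf x := lt_of_lt_of_le hx (hpt x h)
    by_contra h4
    have h4 : Hf x < t/2 := not_le.1 h4
    refine absurd h3 (not_lt.2 ?_)
    calc _ ≤ t/2 + t/2 := add_le_add (not_lt.1 h2) h4.le
      _ = t := ENNReal.add_halves t
  have hlast : t * μ ({x | t/2 ≤ Hf x} ∩ Ωᶜ) ≤ 2 * H * I := by
    have h := mul_meas_ge_le_lintegral (μ := μ.restrict Ωᶜ) hHfm (t/2)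
    rw [Measure.restrict_apply (measurableSet_le measurable_const hHfm)] at h
    calc t * μ ({x | t/2 ≤ Hf x} ∩ Ωᶜ) = 2 * (t/2 * μ ({x | t/2 ≤ Hf x} ∩ Ωᶜ)) := by
          rw [← mul_assoc, ENNReal.mul_div_cancel (by simp) (by simp)]
      _ ≤ 2 * (H * I) := mul_le_mul_right (h.trans hHI) _
      _ = _ := by ring
  calc t * μ {x | t < Tst μ k f x}
      ≤ t * ((μ Ω + μ {x | t/2 < Tst μ k g x}) + μ ({x | t/2 ≤ Hf x} ∩ Ωᶜ)) :=
        mul_le_mul_right ((measure_mono hsubs).trans ((measure_union_le _ _).trans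
          (add_le_add_left (measure_union_le _ _) _))) _
    _ ≤ _ := by
        rw [mul_add, mul_add, add_mul, add_mul]
        exact add_le_add (add_le_add hweakM hgood) hlast

end WeakOne
end CZ

/-! ### Good-`λ` inequality -/

namespace CZ

section GoodLambda

variable {X : Type*} [MetricSpace X] [MeasurableSpace X] [BorelSpace X] [SecondCountableTopology X]
variable {μ : Measure X} {v : ℝ} {Q : ℕ} {A : ℝ} {k : ℝ → X → X → ℝ}

theorem le_Tst (μ : Measure X) (k : ℝ → X → X → ℝ) (f : X → ℝ) (x : X) {η : ℝ} (hη : 0 < η) :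
    ‖op μ (k η) f x‖ₑ ≤ Tst μ k f x :=
  le_iSup₂ (f := fun η (_ : 0 < η) => ‖op μ (k η) f x‖ₑ) η hη

theorem CZF.Tst_split (hk : CZF μ Q A k) {f : X → ℝ} (hf : Integrable f μ) {E : Set X} (hE : MeasurableSet E)
    (x : X) : Tst μ k f x ≤ Tst μ k (E.indicator f) x + Tst μ k (Eᶜ.indicator f) x := by
  refine iSup₂_le fun η hη => ?_
  rw [op_add_indicator hk hη hf hE x]
  exact (enorm_add_le _ _).trans (add_le_add (le_Tst μ k _ x hη) (le_Tst μ k _ x hη))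

/-- The maximal truncation of the part of `f` away from `y`, evaluated near `y`, is controlled by
the value of the maximal truncation at `y`. -/
theorem CZF.compare (hμ : Reg μ v Q) (hk : CZF μ Q A k) {f : X → ℝ} (hf : Integrable f μ)
    (x y : X) {ρ : ℝ} (hρ : 0 < ρ) (hxy : 6 * dist y x ≤ ρ) {m : ℝ≥0∞}
    (hm : ∀ ρ', ρ ≤ ρ' → ∫⁻ z in Metric.ball y ρ', ‖f z‖ₑ ∂μ ≤ m * μ (Metric.ball y ρ')) :
    Tst μ k ((Metric.ball y ρ)ᶜ.indicator f) x
      ≤ Tst μ k f y + ENNReal.ofReal (A * v + A * 2^(Q+1) * v) * m := by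
  have hA := hk.A_pos
  have hv := hμ.vpos
  have hBm : MeasurableSet (Metric.ball y ρ) := measurableSet_ball
  refine iSup₂_le fun η hη => ?_
  set g := (Metric.ball y ρ)ᶜ.indicator f with hg
  have h1 : ‖op μ (k η) g x‖ₑ ≤ ‖op μ (k η) g y‖ₑ + ENNReal.ofReal (A * 2^(Q+1) * v) * m := by
    have h := hk.op_diff_le hμ hη hf y x hρ hxy hm
    have e : op μ (k η) g x = op μ (k η) g y - (op μ (k η) g y - op μ (k η) g x) := by ring
    rw [e]
    exact enorm_sub_le.trans (add_le_add le_rfl h)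
  have h2 : ∀ η, ρ ≤ η → ‖op μ (k η) g y‖ₑ ≤ Tst μ k f y + ENNReal.ofReal (A * v) * m := by
    intro η hη
    have hη0 := hρ.trans_le hη
    have e : op μ (k η) g y = op μ (k η) f y - op μ (k η) ((Metric.ball y ρ).indicator f) y := by
      rw [op_add_indicator hk hη0 hf hBm y]; ring
    rw [e]
    refine enorm_sub_le.trans (add_le_add (le_Tst μ k f y hη0) ?_)
    refine (hk.op_near_le hη0 f hBm y).trans ?_
    calc _ ≤ ENNReal.ofReal (A / ρ^Q) * (m * ENNReal.ofReal (v * ρ^Q)) := by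
          rw [← hμ.vol y ρ hρ]
          gcongr
          exact hm ρ le_rfl
      _ = _ := by
          rw [mul_comm m, ← mul_assoc, ← ENNReal.ofReal_mul (by positivity)]
          congr 2; field_simp
  have h3 : ‖op μ (k η) g y‖ₑ ≤ Tst μ k f y + ENNReal.ofReal (A * v) * m := by
    rcases le_total η ρ with h | h
    · rw [hg, hk.op_far_eq hη h f y le_rfl]; exact h2 ρ le_rfl
    · exact h2 η h
  refine (h1.trans (add_le_add_left h3 _)).trans (le_of_eq ?_)
  rw [ENNReal.ofReal_add (by positivity) (by positivity)]
  ring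

/-- The good-`λ` inequality. The constant `K` does not depend on `ε`. -/
theorem CZF.good_lambda [SFinite μ] (hμ : Reg μ v Q) (hk : CZF μ Q A k) {p : ℝ} (hp : 1 < p)
    {W : X → ℝ≥0∞} {C : ℝ≥0∞} (hW : Ap μ p W C) : ∃ K : ℝ≥0∞, 1 ≤ K ∧ K ≠ ⊤ ∧ ∀ ε : ℝ, 0 < ε → ∃ γ : ℝ, 0 < γ ∧
    ∀ f : X → ℝ, Integrable f μ → Measurable f → ∀ t : ℝ, 0 < t →
    μ.withDensity W ({x | ENNReal.ofReal ((1+ε) * t) < Tst μ k f x} ∩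
        {x | maxFn μ (fun y => ‖f y‖ₑ) x ≤ ENNReal.ofReal (γ * t)})
      + K⁻¹ * μ.withDensity W {x | ENNReal.ofReal t < Tst μ k f x}
      ≤ μ.withDensity W {x | ENNReal.ofReal t < Tst μ k f x} := by
  have hA := hk.A_pos
  have hv := hμ.vpos
  have hp0 : 0 < p := by linarith
  obtain ⟨C1, hC1, hweak⟩ := hk.weak_one hμ
  set ν := μ.withDensity W with hν
  have hdb : Doubling ν (C * ENNReal.ofReal (6 ^ Q) ^ p) := hW.doubling hμ hp
  set Dw := C * ENNReal.ofReal (6 ^ Q) ^ p with hDw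
  have hDwt : Dw ≠ ⊤ := hdb.D_ne_top
  have hCt := hW.C_ne_top
  set K := Dw * (2^p * C) + 1 with hK
  have hKt : K ≠ ⊤ := by
    have : (2:ℝ≥0∞)^p ≠ ⊤ := ENNReal.rpow_ne_top_of_nonneg hp0.le (by simp)
    finiteness
  have hK1 : 1 ≤ K := le_add_self
  have hK0 : K ≠ 0 := (one_pos.trans_le hK1).ne'
  refine ⟨K, hK1, hKt, fun ε hε => ?_⟩
  set L := max (A * v + A * 2^(Q+1) * v) (C1.toReal * 400^Q) with hL
  have hL0 : 0 < L := lt_max_of_lt_left (by positivity)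
  refine ⟨ε / (4 * L), by positivity, ?_⟩
  set γ := ε / (4 * L) with hγ
  have hγ0 : 0 < γ := by positivity
  have hLγ : L * γ = ε / 4 := by rw [hγ]; field_simp
  intro f hf hfm t ht
  rcases isEmpty_or_nonempty X with hX | hX
  · simp [Set.eq_empty_of_isEmpty]
  set M := maxFn μ (fun y => ‖f y‖ₑ) with hM
  set T := Tst μ k f with hT
  have hTm : Measurable T := hk.measurable_Tst hf
  have hMm : Measurable M := measurable_maxFn μ _
  set Ω := {x | ENNReal.ofReal t < T x} with hΩ
  set bad := {x | ENNReal.ofReal ((1+ε) * t) < T x} ∩ {x | M x ≤ ENNReal.ofReal (γ * t)} with hbad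
  have hbadm : MeasurableSet bad :=
    (measurableSet_lt measurable_const hTm).inter (measurableSet_le hMm measurable_const)
  have hbadΩ : bad ⊆ Ω := fun x hx => lt_of_le_of_lt (ENNReal.ofReal_le_ofReal (by nlinarith)) hx.1
  have hΩo : IsOpen Ω := hk.isOpen_Tst hf _
  have hΩt : μ Ω ≠ ⊤ := by
    intro h
    have h1 := hweak f hf hfm (ENNReal.ofReal t)
    rw [show {x | ENNReal.ofReal t < Tst μ k f x} = Ω from rfl, h, ENNReal.mul_top (by simpa using ht)] at h1
    exact absurd (top_le_iff.1 h1) (ENNReal.mul_ne_top hC1 hf.2.ne)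
  obtain ⟨z, r, hr0, hdisj, hsub, hcov, hout⟩ := whitney hμ hk.Q_pos hΩo hΩt
  set b : ℕ → Set X := fun i => Metric.ball (z i) (r i) with hb
  have hbm : ∀ i, MeasurableSet (b i) := fun i => measurableSet_ball
  -- the exceptional set occupies at most half of each Whitney core ball
  have hhalf : ∀ i, 0 < r i → μ (b i ∩ bad) ≤ μ (b i) / 2 := by
    intro i hi
    rcases (b i ∩ bad).eq_empty_or_nonempty with h | ⟨z', hz'⟩
    · simp [h]
    obtain ⟨y, hy, hyd⟩ := hout i hi
    have hz'b : dist z' (z i) < r i := hz'.1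
    set ρ := 400 * r i with hρ
    have hρ0 : 0 < ρ := by positivity
    have hm : ∀ ρ', ρ ≤ ρ' → ∫⁻ u in Metric.ball y ρ', ‖f u‖ₑ ∂μ ≤ ENNReal.ofReal (γ * t) * μ (Metric.ball y ρ') := by
      intro ρ' hρ'
      refine (setLIntegral_ball_le_maxFn hμ _ (hρ0.trans_le hρ') (z := z') ?_).trans
        (mul_le_mul_left hz'.2.2 _)
      rw [Metric.mem_ball]
      have := dist_triangle z' (z i) y
      linarith
    have hfi := hf.indicator (measurableSet_ball (x := y) (ε := ρ))
    have hsub' : b i ∩ bad ⊆ {x | ENNReal.ofReal (ε * t / 2) < Tst μ k ((Metric.ball y ρ).indicator f) x} := by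
      rintro x ⟨hxb, hxbad⟩
      have hxb : dist x (z i) < r i := hxb
      have h1 := hk.Tst_split hf (measurableSet_ball (x := y) (ε := ρ)) x
      have h2 := hk.compare hμ hf x y hρ0 (by
        have := dist_triangle x (z i) y
        rw [dist_comm y x]; linarith) hm
      have h3 : Tst μ k f y ≤ ENNReal.ofReal t := not_lt.1 hy
      show ENNReal.ofReal (ε * t / 2) < Tst μ k ((Metric.ball y ρ).indicator f) x
      by_contra! h4
      refine (not_lt.2 ?_ : ¬ ENNReal.ofReal ((1 + ε) * t) < T x) hxbad.1
      calc T x ≤ ENNReal.ofReal (ε * t / 2) + (ENNReal.ofReal t +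
            ENNReal.ofReal (A * v + A * 2^(Q+1) * v) * ENNReal.ofReal (γ * t)) :=
            h1.trans (add_le_add h4 (h2.trans (add_le_add_left h3 _)))
        _ = ENNReal.ofReal (ε * t / 2 + (t + (A * v + A * 2^(Q+1) * v) * (γ * t))) := by
            rw [← ENNReal.ofReal_mul (by positivity), ← ENNReal.ofReal_add (by positivity) (by positivity),
              ← ENNReal.ofReal_add (by positivity) (by positivity)]
        _ ≤ _ := by
            apply ENNReal.ofReal_le_ofReal
            have h5 : (A * v + A * 2^(Q+1) * v) * (γ * t) ≤ L * (γ * t) := by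
              gcongr; exact le_max_left _ _
            have h6 : L * (γ * t) = ε / 4 * t := by rw [← hLγ]; ring
            nlinarith
    have h7 := hweak _ hfi (hfm.indicator measurableSet_ball) (ENNReal.ofReal (ε * t / 2))
    have h8 : ∫⁻ x, ‖(Metric.ball y ρ).indicator f x‖ₑ ∂μ = ∫⁻ u in Metric.ball y ρ, ‖f u‖ₑ ∂μ := by
      rw [← lintegral_indicator measurableSet_ball]
      congr 1; funext u
      by_cases hu : u ∈ Metric.ball y ρ <;> simp only [Set.indicator_of_mem, Set.indicator_of_notMem, hu, not_false_eq_true, enorm_zero]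
    rw [h8] at h7
    have hs0 : ENNReal.ofReal (ε * t / 2) ≠ 0 := by
      have : 0 < ε * t / 2 := by positivity
      simpa using this
    rw [← ENNReal.mul_le_mul_iff_right hs0 ENNReal.ofReal_ne_top]
    calc _ ≤ C1 * ∫⁻ u in Metric.ball y ρ, ‖f u‖ₑ ∂μ := (mul_le_mul_right (measure_mono hsub') _).trans h7
      _ ≤ C1 * (ENNReal.ofReal (γ * t) * (ENNReal.ofReal (400^Q) * μ (b i))) := by
          rw [← hμ.scale y (z i) hi (by norm_num)]
          gcongr
          exact hm ρ le_rfl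
      _ = ENNReal.ofReal (C1.toReal * (γ * t) * 400^Q) * μ (b i) := by
          rw [ENNReal.ofReal_mul (p := C1.toReal * (γ*t)) (by positivity), ENNReal.ofReal_mul (p := C1.toReal) (by positivity), ENNReal.ofReal_toReal hC1]
          ring
      _ ≤ ENNReal.ofReal (ε * t / 2 * 2⁻¹) * μ (b i) := by
          refine mul_le_mul_left (ENNReal.ofReal_le_ofReal ?_) _
          have h5 : C1.toReal * 400^Q * (γ * t) ≤ L * (γ * t) := by
            gcongr; exact le_max_right _ _
          have h6 : L * (γ * t) = ε / 4 * t := by rw [← hLγ]; ring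
          linarith
      _ = _ := by
          rw [ENNReal.ofReal_mul (p := ε * t / 2) (by positivity), ENNReal.ofReal_inv_of_pos two_pos,
            ENNReal.ofReal_ofNat, div_eq_mul_inv (μ (b i)), mul_assoc, mul_comm (2⁻¹ : ℝ≥0∞)]
  -- the `A_p` condition then makes the rest of the core ball carry a fixed share of its weight
  have hbig : ∀ i, ν (b i) ≤ 2^p * C * ν (b i \ bad) := by
    intro i
    rcases (hr0 i).eq_or_lt with h | h
    · simp [hb, ← h]
    have hbp := (hμ.pos (z i) h).ne'
    have hbt := (hμ.fin (z i) (r i)).ne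
    have h1 : μ (b i) / 2 ≤ μ (b i \ bad) := by
      have h2 := measure_inter_add_diff (μ := μ) (b i) hbadm
      have h3 := hhalf i h
      have h4 : μ (b i) / 2 + μ (b i) / 2 ≤ μ (b i) / 2 + μ (b i \ bad) := by
        rw [ENNReal.add_halves, ← h2]
        gcongr
        rw [h2]; exact h3
      exact (ENNReal.add_le_add_iff_left (ENNReal.div_lt_top hbt (by simp)).ne).1 h4
    have h2 := hW.subset hp ((hbm i).diff hbadm) (z i) h Set.sdiff_subset
    have e1 : ∫⁻ y in Metric.ball (z i) (r i), W y ∂μ = ν (b i) := (withDensity_apply _ measurableSet_ball).symm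
    have e2 : ∫⁻ y in b i \ bad, W y ∂μ = ν (b i \ bad) := (withDensity_apply _ ((hbm i).diff hbadm)).symm
    rw [e1, e2] at h2
    have h3 : μ (b i) ^ p ≤ 2^p * μ (b i \ bad) ^ p := by
      rw [← ENNReal.mul_rpow_of_nonneg _ _ hp0.le]
      refine ENNReal.rpow_le_rpow ?_ hp0.le
      rw [mul_comm]
      exact (ENNReal.div_le_iff (by simp) (by simp)).1 h1
    have h0 : μ (b i) ^ p ≠ 0 := (ENNReal.rpow_pos (pos_iff_ne_zero.2 hbp) hbt).ne'
    have h0' : μ (b i) ^ p ≠ ⊤ := ENNReal.rpow_ne_top_of_nonneg hp0.le hbt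
    rw [← ENNReal.mul_le_mul_iff_left h0 h0']
    calc ν (b i) * μ (b i) ^ p ≤ ν (b i) * (2^p * μ (b i \ bad) ^ p) := by gcongr
      _ = 2^p * (ν (b i) * μ (b i \ bad) ^ p) := by ring
      _ ≤ 2^p * (C * μ (b i) ^ p * ν (b i \ bad)) := mul_le_mul_right h2 _
      _ = _ := by ring
  have htot : ν Ω ≤ K * ν (Ω \ bad) := by
    calc ν Ω ≤ ∑' i, ν (Metric.ball (z i) (6 * r i)) := (measure_mono hcov).trans (measure_iUnion_le _)
      _ ≤ ∑' i, Dw * (2^p * C) * ν (b i \ bad) := by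
          refine ENNReal.tsum_le_tsum fun i => ?_
          rcases (hr0 i).eq_or_lt with h | h
          · simp [← h]
          rw [mul_assoc]
          exact (hdb.dbl (z i) (r i) h).trans (mul_le_mul_right (hbig i) _)
      _ = Dw * (2^p * C) * ν (⋃ i, b i \ bad) := by
          rw [ENNReal.tsum_mul_left, measure_iUnion _ fun i => (hbm i).diff hbadm]
          exact fun i j hij => (hdisj hij).mono Set.sdiff_subset Set.sdiff_subset
      _ ≤ K * ν (Ω \ bad) := by
          refine mul_le_mul' le_self_add (measure_mono (Set.iUnion_subset fun i => ?_))
          exact Set.sdiff_subset_sdiff_left ((Metric.ball_subset_ball (by linarith [hr0 i])).trans (hsub i))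
  calc ν bad + K⁻¹ * ν Ω ≤ ν bad + ν (Ω \ bad) := by
        gcongr
        rw [mul_comm, ← div_eq_mul_inv]
        exact ENNReal.div_le_of_le_mul' htot
    _ = ν Ω := by
        rw [← measure_inter_add_diff Ω hbadm, Set.inter_eq_right.2 hbadΩ]

end GoodLambda
end CZ

/-! ### Weighted strong type of the maximal truncation -/

namespace CZ

section Strong

variable {X : Type*} [MetricSpace X] [MeasurableSpace X] [BorelSpace X] [SecondCountableTopology X]
variable {μ : Measure X} {v : ℝ} {Q : ℕ} {A : ℝ} {k : ℝ → X → X → ℝ}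

theorem Ap.setLIntegral_lt_top (hμ : Reg μ v Q) {p : ℝ} (hp : 1 < p)
    {W : X → ℝ≥0∞} {C : ℝ≥0∞} (hW : Ap μ p W C) {F : X → ℝ≥0∞} (hF : Measurable F) (x : X) (r : ℝ)
    (h : ∫⁻ y in Metric.ball x r, F y ^ p * W y ∂μ < ⊤) : ∫⁻ y in Metric.ball x r, F y ∂μ < ⊤ := by
  have h1 := hW.holder hp hF (Metric.ball x r)
  have h2 : (∫⁻ y in Metric.ball x r, F y ∂μ) ^ p < ⊤ :=
    h1.trans_lt (ENNReal.mul_lt_top h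
      (ENNReal.rpow_lt_top_of_nonneg (by linarith) (hW.sigma_fin hμ hp x r).ne))
  exact (ENNReal.rpow_lt_top_iff_of_pos (by linarith)).1 h2

/-- Away from the support, the maximal truncation is dominated by the maximal function. -/
theorem CZF.Tst_far_le (hμ : Reg μ v Q) (hk : CZF μ Q A k) {f : X → ℝ} {x0 x : X} {R : ℝ} (hR : 0 < R)
    (hf : ∀ y ∉ Metric.ball x0 R, f y = 0) (hx : x ∉ Metric.ball x0 (2*R)) :
    Tst μ k f x ≤ ENNReal.ofReal (A * 4^Q * v) * maxFn μ (fun y => ‖f y‖ₑ) x := by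
  have hA := hk.A_pos
  have hv := hμ.vpos
  set d := dist x x0 with hd
  have hxd : 2 * R ≤ d := by simpa using hx
  have hd0 : 0 < d := by linarith
  refine iSup₂_le fun η hη => ?_
  have e : (Metric.ball x0 R).indicator f = f := by
    funext y
    by_cases hy : y ∈ Metric.ball x0 R
    · simp only [Set.indicator_of_mem hy]
    · simp only [Set.indicator_of_notMem hy, hf y hy]
  rw [← e]
  refine (enorm_op_indicator_le _ f measurableSet_ball x).trans ?_
  rw [e]
  calc ∫⁻ y in Metric.ball x0 R, ‖k η x y‖ₑ * ‖f y‖ₑ ∂μ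
      ≤ ∫⁻ y in Metric.ball x0 R, ENNReal.ofReal (A / (d/2)^Q) * ‖f y‖ₑ ∂μ := by
        refine setLIntegral_mono' measurableSet_ball fun y hy => mul_le_mul_left ?_ _
        have hy' : dist y x0 < R := hy
        have h1 : d / 2 ≤ dist x y := by
          have := dist_triangle x y x0
          linarith
        rw [← ofReal_norm, Real.norm_eq_abs]
        refine ENNReal.ofReal_le_ofReal ((hk.size_dist hη x y (by linarith)).trans ?_)
        gcongr
    _ = ENNReal.ofReal (A / (d/2)^Q) * ∫⁻ y in Metric.ball x0 R, ‖f y‖ₑ ∂μ :=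
        lintegral_const_mul' _ _ ENNReal.ofReal_ne_top
    _ ≤ ENNReal.ofReal (A / (d/2)^Q) * (maxFn μ (fun y => ‖f y‖ₑ) x * μ (Metric.ball x0 (2*d))) := by
        gcongr
        refine (lintegral_mono_set (Metric.ball_subset_ball (by linarith))).trans
          (setLIntegral_ball_le_maxFn hμ _ (by linarith) ?_)
        rw [Metric.mem_ball]; linarith
    _ = _ := by
        rw [hμ.vol x0 _ (by linarith), mul_comm (maxFn _ _ _), ← mul_assoc, ← ENNReal.ofReal_mul (by positivity)]
        congr 2
        rw [show (4:ℝ) = 2 * 2 by norm_num, mul_pow, mul_pow, div_pow]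
        field_simp

/-- The good-`λ` inequality integrates to the weighted bound for a truncation `G = min (Tst f) N`,
provided the left side is known to be finite so that it can be absorbed. -/
theorem CZF.strong_aux [SFinite μ] (hμ : Reg μ v Q) (hk : CZF μ Q A k) {p : ℝ} (hp : 1 < p)
    {W : X → ℝ≥0∞} {C : ℝ≥0∞} (hW : Ap μ p W C) : ∃ C' : ℝ≥0∞, C' ≠ ⊤ ∧
    ∀ f : X → ℝ, Measurable f → Integrable f μ → ∀ G : X → ℝ≥0∞, Measurable G →
    ∫⁻ x, G x ^ p * W x ∂μ ≠ ⊤ → (∃ N : ℝ≥0∞, ∀ x, G x = min (Tst μ k f x) N) →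
    ∫⁻ x, G x ^ p * W x ∂μ ≤ C' * ∫⁻ x, maxFn μ (fun y => ‖f y‖ₑ) x ^ p * W x ∂μ := by
  have hp0 : 0 < p := by linarith
  obtain ⟨K, hK1, hKt, hgl⟩ := hk.good_lambda hμ hp hW
  have hK0 : K ≠ 0 := (one_pos.trans_le hK1).ne'
  set ν := μ.withDensity W with hν
  set c := K⁻¹.toReal with hc
  have hct : K⁻¹ ≠ ⊤ := ENNReal.inv_ne_top.2 hK0
  have hc0 : 0 < c := ENNReal.toReal_pos (ENNReal.inv_ne_zero.2 hKt) hct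
  have hcle : K⁻¹ ≤ 1 := ENNReal.inv_le_one.2 hK1
  have hc1 : c ≤ 1 := by
    have := ENNReal.toReal_mono ENNReal.one_ne_top hcle
    rwa [ENNReal.toReal_one] at this
  have hcK : K⁻¹ = ENNReal.ofReal c := (ENNReal.ofReal_toReal hct).symm
  set θ := 1 - c/2 with hθ
  have hθ0 : 0 < θ := by rw [hθ]; linarith
  -- `a` is chosen so that rescaling `G` by `1/a` costs the factor `θ = 1 - c/2`, which the gain `c` of
  -- the good-`λ` inequality beats
  set a := θ ^ (-(1/p)) with ha
  have ha1 : 1 < a := Real.one_lt_rpow_of_pos_of_lt_one_of_neg hθ0 (by rw [hθ]; linarith) (by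
    have : 0 < 1/p := by positivity
    linarith)
  have ha0 : 0 < a := by linarith
  have haθ : (1/a)^p = θ := by
    rw [one_div, ha, ← Real.rpow_neg hθ0.le, neg_neg, ← Real.rpow_mul hθ0.le, one_div_mul_cancel hp0.ne',
      Real.rpow_one]
  obtain ⟨γ, hγ, hgl⟩ := hgl (a-1) (by linarith)
  refine ⟨ENNReal.ofReal (2/c) * ENNReal.ofReal (1/γ) ^ p, by finiteness, ?_⟩
  intro f hfm hf G hG hGt ⟨N, hN⟩
  set T := Tst μ k f with hT
  set M := maxFn μ (fun y => ‖f y‖ₑ) with hM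
  have hMm : Measurable M := measurable_maxFn μ _
  have hWi : ∀ F : X → ℝ≥0∞, Measurable F → ∫⁻ x, F x ^ p * W x ∂μ = ∫⁻ x, F x ^ p ∂ν := by
    intro F hF
    rw [hν, lintegral_withDensity_eq_lintegral_mul _ hW.meas (hF.pow_const p)]
    simp only [Pi.mul_apply, mul_comm]
  rw [hWi G hG, hWi M hMm]
  rw [hWi G hG] at hGt
  have key : ∀ s : ℝ, 0 < s → ν {x | ENNReal.ofReal s < G x * ENNReal.ofReal (1/a)}
      + K⁻¹ * ν {x | ENNReal.ofReal s < G x}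
      ≤ ν {x | ENNReal.ofReal s < G x} + ν {x | ENNReal.ofReal s < M x * ENNReal.ofReal (1/γ)} := by
    intro s hs
    have hmul : ∀ (H : X → ℝ≥0∞) (b : ℝ), 0 < b → {x | ENNReal.ofReal s < H x * ENNReal.ofReal (1/b)}
        = {x | ENNReal.ofReal (b * s) < H x} := by
      intro H b hb
      ext x
      rw [Set.mem_ofPred_eq, Set.mem_ofPred_eq, one_div, ENNReal.ofReal_inv_of_pos hb, ← div_eq_mul_inv,
        ENNReal.lt_div_iff_mul_lt (Or.inl (by simpa using hb)) (Or.inl ENNReal.ofReal_ne_top),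
        mul_comm b, ENNReal.ofReal_mul hs.le]
    rw [hmul G a ha0, hmul M γ hγ]
    rcases lt_or_ge (ENNReal.ofReal (a * s)) N with h | h
    · have e1 : {x | ENNReal.ofReal (a * s) < G x} = {x | ENNReal.ofReal (a * s) < T x} := by
        ext x; simp [hN x, h]
      have h' : ENNReal.ofReal s < N := lt_of_le_of_lt (ENNReal.ofReal_le_ofReal (by nlinarith)) h
      have e2 : {x | ENNReal.ofReal s < G x} = {x | ENNReal.ofReal s < T x} := by
        ext x; simp [hN x, h']
      rw [e1, e2]
      have h1 := hgl f hf hfm s hs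
      rw [show 1 + (a-1) = a by ring] at h1
      have h2 : {x | ENNReal.ofReal (a * s) < T x} ⊆ ({x | ENNReal.ofReal (a * s) < T x} ∩
          {x | M x ≤ ENNReal.ofReal (γ * s)}) ∪ {x | ENNReal.ofReal (γ * s) < M x} := by
        intro x hx
        rcases le_or_gt (M x) (ENNReal.ofReal (γ * s)) with h3 | h3
        · exact Or.inl ⟨hx, h3⟩
        · exact Or.inr h3
      calc _ ≤ ν ({x | ENNReal.ofReal (a * s) < T x} ∩ {x | M x ≤ ENNReal.ofReal (γ * s)})
            + ν {x | ENNReal.ofReal (γ * s) < M x} + K⁻¹ * ν {x | ENNReal.ofReal s < T x} :=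
            add_le_add_left ((measure_mono h2).trans (measure_union_le _ _)) _
        _ = (ν ({x | ENNReal.ofReal (a * s) < T x} ∩ {x | M x ≤ ENNReal.ofReal (γ * s)})
            + K⁻¹ * ν {x | ENNReal.ofReal s < T x}) + ν {x | ENNReal.ofReal (γ * s) < M x} := by ring
        _ ≤ _ := add_le_add_left h1 _
    · have e1 : {x | ENNReal.ofReal (a * s) < G x} = ∅ := by
        ext x
        simp only [Set.mem_ofPred_eq, Set.mem_empty_iff_false, iff_false, not_lt, hN x]
        exact (min_le_right _ _).trans h
      rw [e1, measure_empty, zero_add]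
      exact (mul_le_of_le_one_left' hcle).trans le_self_add
  have hsm : ∀ H : X → ℝ≥0∞, Measurable fun s : ℝ => ν {x | ENNReal.ofReal s < H x} := by
    intro H
    refine Antitone.measurable fun s s' h => measure_mono fun x hx => ?_
    exact lt_of_le_of_lt (ENNReal.ofReal_le_ofReal h) hx
  have hwm : Measurable fun s : ℝ => ENNReal.ofReal (p * s^(p-1)) := by fun_prop
  have hpm : ∀ H : X → ℝ≥0∞, Measurable fun s : ℝ => ν {x | ENNReal.ofReal s < H x} *
      ENNReal.ofReal (p * s^(p-1)) := fun H => (hsm H).mul hwm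
  have hint : ∫⁻ x, (G x * ENNReal.ofReal (1/a)) ^ p ∂ν + K⁻¹ * ∫⁻ x, G x ^ p ∂ν
      ≤ ∫⁻ x, G x ^ p ∂ν + ∫⁻ x, (M x * ENNReal.ofReal (1/γ)) ^ p ∂ν := by
    rw [layer_cake ν hp0 (hG.mul_const _), layer_cake ν hp0 (hMm.mul_const _), layer_cake ν hp0 hG,
      ← lintegral_const_mul' _ _ hct, ← lintegral_add_left (hpm _),
      ← lintegral_add_left (hpm _)]
    refine setLIntegral_mono' measurableSet_Ioi fun s hs => ?_
    have := mul_le_mul_left (key s hs) (ENNReal.ofReal (p * s^(p-1)))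
    rw [add_mul, add_mul, mul_assoc] at this
    exact this
  simp_rw [ENNReal.mul_rpow_of_nonneg _ _ hp0.le] at hint
  rw [lintegral_mul_const' _ _ (by finiteness), lintegral_mul_const' _ _ (by finiteness),
    ENNReal.ofReal_rpow_of_nonneg (x := 1/a) (by positivity) hp0.le, haθ] at hint
  set I := ∫⁻ x, G x ^ p ∂ν with hI
  set J := ∫⁻ x, M x ^ p ∂ν with hJ
  have h1 : I + ENNReal.ofReal (c/2) * I ≤ I + J * ENNReal.ofReal (1/γ) ^ p := by
    refine le_trans (le_of_eq ?_) hint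
    rw [hcK, mul_comm I, ← add_mul, ← ENNReal.ofReal_add (by positivity) (by positivity),
      show θ + c = 1 + c/2 by rw [hθ]; ring, ENNReal.ofReal_add (by positivity) (by positivity),
      ENNReal.ofReal_one, add_mul, one_mul]
  have h2 := (ENNReal.add_le_add_iff_left hGt).1 h1
  calc I = ENNReal.ofReal (2/c) * (ENNReal.ofReal (c/2) * I) := by
        rw [← mul_assoc, ← ENNReal.ofReal_mul (by positivity), show 2/c * (c/2) = 1 by field_simp,
          ENNReal.ofReal_one, one_mul]
    _ ≤ ENNReal.ofReal (2/c) * (J * ENNReal.ofReal (1/γ) ^ p) := mul_le_mul_right h2 _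
    _ = _ := by ring

/-- The Coifman–Fefferman bound for functions supported in a ball. -/
theorem CZF.strong [SFinite μ] (hμ : Reg μ v Q) (hk : CZF μ Q A k) {p : ℝ} (hp : 1 < p)
    {W : X → ℝ≥0∞} {C : ℝ≥0∞} (hW : Ap μ p W C) : ∃ C' : ℝ≥0∞, C' ≠ ⊤ ∧
    ∀ f : X → ℝ, Measurable f → ∀ (x0 : X) (R : ℝ), 0 < R → (∀ y ∉ Metric.ball x0 R, f y = 0) →
    ∫⁻ x, ‖f x‖ₑ ^ p * W x ∂μ < ⊤ → Integrable f μ ∧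
    ∫⁻ x, Tst μ k f x ^ p * W x ∂μ ≤ C' * ∫⁻ x, ‖f x‖ₑ ^ p * W x ∂μ := by
  have hp0 : 0 < p := by linarith
  obtain ⟨C1, hC1, h1⟩ := hk.strong_aux hμ hp hW
  obtain ⟨C2, hC2, h2⟩ := hW.maxFn_bound hμ hp
  refine ⟨C1 * C2, ENNReal.mul_ne_top hC1 hC2, ?_⟩
  intro f hfm x0 R hR hf0 hft
  have hfi : Integrable f μ := by
    refine ⟨hfm.aestronglyMeasurable, ?_⟩
    have h3 := hW.setLIntegral_lt_top hμ hp hfm.enorm x0 R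
      ((setLIntegral_le_lintegral _ _).trans_lt hft)
    rw [← lintegral_indicator measurableSet_ball] at h3
    refine lt_of_le_of_lt (lintegral_mono fun y => ?_) h3
    by_cases hy : y ∈ Metric.ball x0 R
    · simp only [Set.indicator_of_mem hy]; exact le_rfl
    · simp [hf0 y hy]
  refine ⟨hfi, ?_⟩
  set T := Tst μ k f with hT
  set M := maxFn μ (fun y => ‖f y‖ₑ) with hM
  have hTm : Measurable T := hk.measurable_Tst hfi
  have hMm : Measurable M := measurable_maxFn μ _
  have hJ := h2 (fun y => ‖f y‖ₑ) hfm.enorm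
  have hJt : ∫⁻ x, M x ^ p * W x ∂μ < ⊤ := hJ.trans_lt (ENNReal.mul_lt_top hC2.lt_top hft)
  set c := ENNReal.ofReal (A * 4^Q * v) with hc
  have hGm : ∀ N : ℕ, Measurable fun x => min (T x) (N : ℝ≥0∞) := fun N => hTm.min measurable_const
  -- finiteness of the truncated left side: near the support it is bounded by `N`, far away by `M`
  have hfin : ∀ N : ℕ, ∫⁻ x, (min (T x) (N : ℝ≥0∞)) ^ p * W x ∂μ ≠ ⊤ := by
    intro N
    have h3 : ∫⁻ x, (min (T x) (N : ℝ≥0∞)) ^ p * W x ∂μ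
        ≤ ∫⁻ x, ((Metric.ball x0 (2*R)).indicator (fun x => (N:ℝ≥0∞)^p * W x) x + c^p * (M x ^ p * W x)) ∂μ := by
      refine lintegral_mono fun x => ?_
      by_cases hx : x ∈ Metric.ball x0 (2*R)
      · rw [Set.indicator_of_mem hx]
        refine le_trans ?_ le_self_add
        gcongr
        exact min_le_right _ _
      · rw [Set.indicator_of_notMem hx, zero_add, ← mul_assoc, ← ENNReal.mul_rpow_of_nonneg _ _ hp0.le]
        gcongr
        exact (min_le_left _ _).trans (hk.Tst_far_le hμ hR hf0 hx)
    refine (h3.trans_lt ?_).ne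
    have hm' : Measurable ((Metric.ball x0 (2*R)).indicator (fun x => (N:ℝ≥0∞)^p * W x)) :=
      (hW.meas.const_mul _).indicator measurableSet_ball
    rw [lintegral_add_left hm',
      lintegral_indicator measurableSet_ball, lintegral_const_mul' _ _ (by finiteness),
      lintegral_const_mul' _ _ (by finiteness)]
    exact ENNReal.add_lt_top.2 ⟨ENNReal.mul_lt_top (by finiteness) (hW.fin x0 _),
      ENNReal.mul_lt_top (by finiteness) hJt⟩
  have hsup : ∀ x, T x ^ p * W x = ⨆ N : ℕ, (min (T x) (N : ℝ≥0∞)) ^ p * W x := by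
    intro x
    rw [← ENNReal.iSup_mul]
    congr 1
    have := (ENNReal.orderIsoRpow p hp0).map_iSup (fun N : ℕ => min (T x) (N : ℝ≥0∞))
    simp only [ENNReal.orderIsoRpow_apply] at this
    rw [← this]
    congr 1
    rw [← inf_iSup_eq, ENNReal.iSup_natCast]; simp
  simp_rw [hsup]
  have hpm : ∀ N : ℕ, Measurable fun x => (min (T x) (N : ℝ≥0∞)) ^ p * W x :=
    fun N => ((hGm N).pow_const p).mul hW.meas
  rw [lintegral_iSup hpm]
  · refine iSup_le fun N => ?_
    calc _ ≤ C1 * ∫⁻ x, M x ^ p * W x ∂μ := h1 f hfm hfi _ (hGm N) (hfin N) ⟨N, fun x => rfl⟩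
      _ ≤ C1 * (C2 * ∫⁻ x, ‖f x‖ₑ ^ p * W x ∂μ) := mul_le_mul_right hJ _
      _ = _ := by ring
  · intro N N' h x
    dsimp only
    gcongr

end Strong
end CZ

/-! ### Morrey spaces and the far part -/

namespace CZ

section Morrey

variable {X : Type*} [MetricSpace X] [MeasurableSpace X] [BorelSpace X] [SecondCountableTopology X]
variable {μ : Measure X} {v : ℝ} {Q : ℕ} {A : ℝ} {k : ℝ → X → X → ℝ}

/-- The `W dμ`-measure of a ball. -/
def wt (μ : Measure X) (W : X → ℝ≥0∞) (x : X) (r : ℝ) : ℝ≥0∞ := ∫⁻ y in Metric.ball x r, W y ∂μ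

/-- `F` has `p`-th power of its weighted Morrey norm at most `N`. -/
def MB (μ : Measure X) (p κ : ℝ) (W : X → ℝ≥0∞) (N : ℝ≥0∞) (F : X → ℝ≥0∞) : Prop :=
  ∀ (x : X) (r : ℝ), 0 < r → ∫⁻ y in Metric.ball x r, F y ^ p * W y ∂μ ≤ N * wt μ W x r ^ κ

/-- A version of `MB` for functions that need not be measurable, through measurable majorants. -/
def MM (μ : Measure X) (p κ : ℝ) (W : X → ℝ≥0∞) (N : ℝ≥0∞) (F : X → ℝ≥0∞) : Prop :=
  ∀ (x : X) (r : ℝ), 0 < r → ∃ H : X → ℝ≥0∞, Measurable H ∧ (∀ y ∈ Metric.ball x r, F y ≤ H y) ∧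
    ∫⁻ y in Metric.ball x r, H y ^ p * W y ∂μ ≤ N * wt μ W x r ^ κ

theorem MM.mb {p κ : ℝ} (hp : 0 < p) {W : X → ℝ≥0∞} {N : ℝ≥0∞} {F : X → ℝ≥0∞} (h : MM μ p κ W N F) :
    MB μ p κ W N F := by
  intro x r hr
  obtain ⟨H, -, hFH, hH⟩ := h x r hr
  refine (setLIntegral_mono' measurableSet_ball fun y hy => ?_).trans hH
  have := hFH y hy
  gcongr

theorem MM.mono {p κ : ℝ} {W : X → ℝ≥0∞} {N : ℝ≥0∞} {F F' : X → ℝ≥0∞} (h : MM μ p κ W N F)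
    (hF : ∀ y, F' y ≤ F y) : MM μ p κ W N F' := by
  intro x r hr
  obtain ⟨H, hHm, hFH, hH⟩ := h x r hr
  exact ⟨H, hHm, fun y hy => (hF y).trans (hFH y hy), hH⟩

theorem MM.add {p κ : ℝ} (hp : 1 ≤ p) {W : X → ℝ≥0∞} (hW : Measurable W) {N N' : ℝ≥0∞} {F F' : X → ℝ≥0∞}
    (h : MM μ p κ W N F) (h' : MM μ p κ W N' F') :
    MM μ p κ W (2^(p-1) * (N + N')) (fun y => F y + F' y) := by
  intro x r hr
  obtain ⟨H, hHm, hFH, hH⟩ := h x r hr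
  obtain ⟨H', hHm', hFH', hH'⟩ := h' x r hr
  refine ⟨fun y => H y + H' y, hHm.add hHm', fun y hy => add_le_add (hFH y hy) (hFH' y hy), ?_⟩
  have h2 : (2:ℝ≥0∞)^(p-1) ≠ ⊤ := ENNReal.rpow_ne_top_of_nonneg (by linarith) (by simp)
  have hm : Measurable fun y => H y ^ p * W y := (hHm.pow_const p).mul hW
  calc ∫⁻ y in Metric.ball x r, (H y + H' y) ^ p * W y ∂μ
      ≤ ∫⁻ y in Metric.ball x r, 2^(p-1) * (H y ^ p * W y + H' y ^ p * W y) ∂μ := by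
        refine lintegral_mono fun y => ?_
        rw [← add_mul, ← mul_assoc]
        exact mul_le_mul_left (ENNReal.rpow_add_le_mul_rpow_add_rpow _ _ hp) _
    _ = 2^(p-1) * (∫⁻ y in Metric.ball x r, H y ^ p * W y ∂μ + ∫⁻ y in Metric.ball x r, H' y ^ p * W y ∂μ) := by
        rw [lintegral_const_mul' _ _ h2, lintegral_add_left hm]
    _ ≤ 2^(p-1) * (N * wt μ W x r ^ κ + N' * wt μ W x r ^ κ) := by gcongr
    _ = _ := by ring

theorem wt_mono (μ : Measure X) (W : X → ℝ≥0∞) {x x' : X} {r r' : ℝ}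
    (h : Metric.ball x r ⊆ Metric.ball x' r') : wt μ W x r ≤ wt μ W x' r' := lintegral_mono_set h

theorem MB.avg_le (hμ : Reg μ v Q) {p κ : ℝ} (hp : 1 < p)
    {W : X → ℝ≥0∞} {C : ℝ≥0∞} (hW : Ap μ p W C) {N : ℝ≥0∞} {F : X → ℝ≥0∞} (hF : Measurable F)
    (h : MB μ p κ W N F) (x : X) {r : ℝ} (hr : 0 < r) :
    (∫⁻ y in Metric.ball x r, F y ∂μ) / μ (Metric.ball x r) ≤ (C * N * (wt μ W x r)⁻¹ ^ (1-κ)) ^ p⁻¹ := by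
  have hp0 : 0 < p := by linarith
  have hw0 : wt μ W x r ≠ 0 := (hW.pos hμ x hr).ne'
  have hwt : wt μ W x r ≠ ⊤ := (hW.fin x r).ne
  have hm0 := (hμ.pos x hr).ne'
  have hmt := (hμ.fin x r).ne
  rw [ENNReal.le_rpow_inv_iff hp0, ENNReal.div_rpow_of_nonneg _ _ hp0.le]
  have hm0' : μ (Metric.ball x r) ^ p ≠ 0 := (ENNReal.rpow_pos (pos_iff_ne_zero.2 hm0) hmt).ne'
  have hmt' : μ (Metric.ball x r) ^ p ≠ ⊤ := ENNReal.rpow_ne_top_of_nonneg hp0.le hmt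
  rw [ENNReal.div_le_iff hm0' hmt']
  have h1 := (hW.test hp hF x hr).trans (mul_le_mul_right (h x r hr) _)
  rw [← ENNReal.mul_le_mul_iff_right hw0 hwt]
  refine h1.trans (le_of_eq ?_)
  have e : wt μ W x r ^ κ = wt μ W x r * (wt μ W x r)⁻¹ ^ (1-κ) := by
    rw [ENNReal.inv_rpow, ← ENNReal.rpow_neg]
    nth_rw 2 [← ENNReal.rpow_one (wt μ W x r)]
    rw [← ENNReal.rpow_add _ _ hw0 hwt]
    congr 1; ring
  rw [e]; ring

/-- Reverse doubling, in terms of the reciprocals of the weights. -/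
theorem Ap.reverse [Nonempty X] (hμ : Reg μ v Q) (hQ : Q ≠ 0) {p : ℝ} (hp : 1 < p) {W : X → ℝ≥0∞} {C : ℝ≥0∞}
    (hW : Ap μ p W C) : ∃ θ : ℝ≥0∞, θ < 1 ∧ ∀ (x : X) (r : ℝ), 0 < r → ∀ m : ℕ,
      (wt μ W x (2^m * r))⁻¹ ≤ θ ^ m * (wt μ W x r)⁻¹ := by
  have hp0 : 0 < p := by linarith
  have hv := hμ.vpos
  set K := 2^p * C + 1 with hK
  have hKt : K ≠ ⊤ := by
    have := hW.C_ne_top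
    finiteness
  have hK1 : 1 ≤ K := le_add_self
  have hK0 : K ≠ 0 := (one_pos.trans_le hK1).ne'
  have h1 : ∀ (x : X) (r : ℝ), 0 < r → wt μ W x r ≤ (1 - K⁻¹) * wt μ W x (2*r) := by
    intro x r hr
    set E := Metric.ball x (2*r) \ Metric.ball x r with hE
    have hEm : MeasurableSet E := measurableSet_ball.diff measurableSet_ball
    have hsub : Metric.ball x r ⊆ Metric.ball x (2*r) := Metric.ball_subset_ball (by linarith)
    have h2 := hW.subset hp hEm x (r := 2*r) (by linarith) Set.sdiff_subset
    have hm0 := (hμ.pos x (r := 2*r) (by linarith)).ne'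
    have hmt := (hμ.fin x (2*r)).ne
    have h3 : μ (Metric.ball x (2*r)) ≤ 2 * μ E := by
      rw [hE, measure_sdiff hsub measurableSet_ball.nullMeasurableSet (hμ.fin x r).ne,
        hμ.vol x r hr, hμ.vol x (2*r) (by linarith), ← ENNReal.ofReal_sub _ (by positivity),
        ← ENNReal.ofReal_ofNat, ← ENNReal.ofReal_mul (by norm_num)]
      refine ENNReal.ofReal_le_ofReal ?_
      have h4 : (2:ℝ) ≤ 2^Q := by
        calc (2:ℝ) = 2^1 := by norm_num
          _ ≤ 2^Q := pow_le_pow_right₀ one_le_two (Nat.one_le_iff_ne_zero.2 hQ)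
      rw [mul_pow]
      have h5 : 0 < v * r^Q := by positivity
      nlinarith
    have h4 : wt μ W x (2*r) ≤ K * ∫⁻ y in E, W y ∂μ := by
      have hm0' : μ (Metric.ball x (2*r)) ^ p ≠ 0 := (ENNReal.rpow_pos (pos_iff_ne_zero.2 hm0) hmt).ne'
      have hmt' : μ (Metric.ball x (2*r)) ^ p ≠ ⊤ := ENNReal.rpow_ne_top_of_nonneg hp0.le hmt
      rw [← ENNReal.mul_le_mul_iff_left hm0' hmt']
      calc wt μ W x (2*r) * μ (Metric.ball x (2*r)) ^ p ≤ wt μ W x (2*r) * (2 * μ E)^p := by gcongr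
        _ = 2^p * (wt μ W x (2*r) * μ E ^ p) := by
            rw [ENNReal.mul_rpow_of_nonneg _ _ hp0.le]; ring
        _ ≤ 2^p * (C * μ (Metric.ball x (2*r)) ^ p * ∫⁻ y in E, W y ∂μ) := mul_le_mul_right h2 _
        _ = 2^p * C * (∫⁻ y in E, W y ∂μ) * μ (Metric.ball x (2*r)) ^ p := by ring
        _ ≤ _ := by
            gcongr
            exact le_self_add
    have h5 : wt μ W x r + ∫⁻ y in E, W y ∂μ = wt μ W x (2*r) := by
      rw [wt, wt, hE, ← lintegral_inter_add_sdiff (B := Metric.ball x r) W (Metric.ball x (2*r)) measurableSet_ball,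
        Set.inter_eq_right.2 hsub]
    have hw : wt μ W x (2*r) ≠ ⊤ := (hW.fin x _).ne
    rw [ENNReal.sub_mul (fun _ _ => hw), one_mul]
    refine ENNReal.le_sub_of_add_le_right (ENNReal.mul_ne_top (ENNReal.inv_ne_top.2 hK0) hw) ?_
    nth_rw 2 [← h5]
    refine add_le_add_right ?_ _
    rw [mul_comm, ← div_eq_mul_inv]
    exact ENNReal.div_le_of_le_mul' h4
  refine ⟨1 - K⁻¹, ENNReal.sub_lt_self ENNReal.one_ne_top one_ne_zero (ENNReal.inv_ne_zero.2 hKt), ?_⟩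
  intro x r hr m
  induction m with
  | zero => simp
  | succ m ih =>
    have h2 := h1 x (2^m*r) (by positivity)
    rw [show 2 * (2^m*r) = 2^(m+1)*r by ring] at h2
    have ha0 : wt μ W x (2^m*r) ≠ 0 := (hW.pos hμ x (by positivity)).ne'
    have hat : wt μ W x (2^m*r) ≠ ⊤ := (hW.fin x _).ne
    have hb0 : wt μ W x (2^(m+1)*r) ≠ 0 := (hW.pos hμ x (by positivity)).ne'
    have hbt : wt μ W x (2^(m+1)*r) ≠ ⊤ := (hW.fin x _).ne
    calc (wt μ W x (2^(m+1)*r))⁻¹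
        = wt μ W x (2^m*r) * ((wt μ W x (2^m*r))⁻¹ * (wt μ W x (2^(m+1)*r))⁻¹) := by
          rw [← mul_assoc, ENNReal.mul_inv_cancel ha0 hat, one_mul]
      _ ≤ (1 - K⁻¹) * wt μ W x (2^(m+1)*r) * ((wt μ W x (2^m*r))⁻¹ * (wt μ W x (2^(m+1)*r))⁻¹) :=
          mul_le_mul_left h2 _
      _ = (1 - K⁻¹) * (wt μ W x (2^m*r))⁻¹ * (wt μ W x (2^(m+1)*r) * (wt μ W x (2^(m+1)*r))⁻¹) := by ring
      _ ≤ (1 - K⁻¹) * ((1 - K⁻¹)^m * (wt μ W x r)⁻¹) := by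
          rw [ENNReal.mul_inv_cancel hb0 hbt, mul_one]
          exact mul_le_mul_right ih _
      _ = _ := by ring

/-- The contribution of the complement of a ball, by reverse doubling. -/
theorem MB.far [Nonempty X] (hμ : Reg μ v Q) (hQ : Q ≠ 0) {p κ : ℝ} (hp : 1 < p) (hκ1 : κ < 1)
    {W : X → ℝ≥0∞} {C : ℝ≥0∞} (hW : Ap μ p W C) : ∃ D : ℝ≥0∞, D ≠ ⊤ ∧ ∀ (N : ℝ≥0∞) (F : X → ℝ≥0∞),
    Measurable F → MB μ p κ W N F → ∀ (x : X) (r : ℝ), 0 < r →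
    ∫⁻ y in (Metric.ball x (2*r))ᶜ, ENNReal.ofReal (1 / dist x y ^ Q) * F y ∂μ
      ≤ D * (C * N * (wt μ W x r)⁻¹ ^ (1-κ)) ^ p⁻¹ := by
  have hp0 : 0 < p := by linarith
  have hv := hμ.vpos
  obtain ⟨θ, hθ, hrev⟩ := hW.reverse hμ hQ hp
  set q := θ ^ ((1-κ) * p⁻¹) with hq
  have hs : 0 < (1-κ) * p⁻¹ := mul_pos (by linarith) (by positivity)
  have hq1 : q < 1 := ENNReal.rpow_lt_one hθ hs
  refine ⟨ENNReal.ofReal (2^Q * v) * (1-q)⁻¹, ENNReal.mul_ne_top ENNReal.ofReal_ne_top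
    (ENNReal.inv_ne_top.2 (tsub_pos_of_lt hq1).ne'), ?_⟩
  intro N F hF hMB x r hr
  -- dyadic annuli around the ball
  set S : ℕ → Set X := fun j => Metric.ball x (2^(j+2) * r) \ Metric.ball x (2^(j+1) * r) with hS
  have hcov : (Metric.ball x (2*r))ᶜ ⊆ ⋃ j, S j := by
    intro y hy
    rw [Set.mem_compl_iff, Metric.mem_ball, not_lt] at hy
    have h2r : 0 < 2*r := by positivity
    obtain ⟨j, hj1, hj2⟩ := exists_nat_pow_near ((one_le_div h2r).2 hy) one_lt_two
    rw [le_div_iff₀ h2r] at hj1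
    rw [div_lt_iff₀ h2r] at hj2
    refine Set.mem_iUnion.2 ⟨j, Metric.mem_ball.2 (hj2.trans_eq (by ring)), fun h =>
      absurd (Metric.mem_ball.1 h) (not_lt.2 (le_trans (le_of_eq (by ring)) hj1))⟩
  have hj : ∀ j, ∫⁻ y in S j, ENNReal.ofReal (1 / dist x y ^ Q) * F y ∂μ
      ≤ ENNReal.ofReal (2^Q * v) * (C * N * (wt μ W x r)⁻¹ ^ (1-κ)) ^ p⁻¹ * q^j := by
    intro j
    have hρ : 0 < 2^(j+1) * r := by positivity
    have hρ' : 0 < 2^(j+2) * r := by positivity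
    have hSm : MeasurableSet (S j) := measurableSet_ball.diff measurableSet_ball
    have hθj : ((θ^(j+2)) ^ (1-κ)) ^ p⁻¹ ≤ q^j := by
      rw [← ENNReal.rpow_mul, ← ENNReal.rpow_natCast, ← ENNReal.rpow_mul, mul_comm, ENNReal.rpow_mul, ← hq,
        ENNReal.rpow_natCast]
      exact pow_le_pow_right_of_le_one' hq1.le (by omega)
    calc _ ≤ ∫⁻ y in S j, ENNReal.ofReal (1 / (2^(j+1) * r) ^ Q) * F y ∂μ := by
          refine setLIntegral_mono' hSm fun y hy => ?_
          have h2 : 2^(j+1) * r ≤ dist x y := by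
            have := hy.2
            rw [Metric.mem_ball, not_lt, dist_comm] at this
            exact this
          gcongr
      _ ≤ ENNReal.ofReal (1 / (2^(j+1) * r) ^ Q) * ∫⁻ y in Metric.ball x (2^(j+2)*r), F y ∂μ := by
          rw [lintegral_const_mul' _ _ ENNReal.ofReal_ne_top]
          gcongr
          exact Set.sdiff_subset
      _ ≤ ENNReal.ofReal (1 / (2^(j+1) * r) ^ Q) * ((C * N * (wt μ W x (2^(j+2)*r))⁻¹ ^ (1-κ)) ^ p⁻¹
            * ENNReal.ofReal (v * (2^(j+2)*r)^Q)) := by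
          rw [← hμ.vol x _ hρ']
          gcongr
          exact (ENNReal.div_le_iff (hμ.pos x hρ').ne' (hμ.fin x _).ne).1 (hMB.avg_le hμ hp hW hF x hρ')
      _ = ENNReal.ofReal (2^Q * v) * (C * N * (wt μ W x (2^(j+2)*r))⁻¹ ^ (1-κ)) ^ p⁻¹ := by
          rw [mul_comm ((C * N * _) ^ p⁻¹), ← mul_assoc, ← ENNReal.ofReal_mul (by positivity)]
          congr 2
          rw [show (2:ℝ)^(j+2)*r = (2^(j+1)*r)*2 by ring, mul_pow (2^(j+1)*r)]
          field_simp
      _ ≤ ENNReal.ofReal (2^Q * v) * (C * N * (θ^(j+2) * (wt μ W x r)⁻¹) ^ (1-κ)) ^ p⁻¹ := by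
          have : 0 ≤ 1 - κ := by linarith
          gcongr
          exact hrev x r hr (j+2)
      _ = ENNReal.ofReal (2^Q * v) * ((C * N * (wt μ W x r)⁻¹ ^ (1-κ)) ^ p⁻¹ * ((θ^(j+2)) ^ (1-κ)) ^ p⁻¹) := by
          rw [ENNReal.mul_rpow_of_nonneg _ _ (by linarith : (0:ℝ) ≤ 1-κ),
            ← ENNReal.mul_rpow_of_nonneg _ _ (by positivity : (0:ℝ) ≤ p⁻¹)]
          congr 2; ring
      _ ≤ _ := by rw [← mul_assoc]; exact mul_le_mul_right hθj _
  calc _ ≤ ∫⁻ y in ⋃ j, S j, ENNReal.ofReal (1 / dist x y ^ Q) * F y ∂μ := lintegral_mono_set hcov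
    _ ≤ ∑' j, ∫⁻ y in S j, ENNReal.ofReal (1 / dist x y ^ Q) * F y ∂μ := lintegral_iUnion_le _ _
    _ ≤ ∑' j, ENNReal.ofReal (2^Q * v) * (C * N * (wt μ W x r)⁻¹ ^ (1-κ)) ^ p⁻¹ * q^j := ENNReal.tsum_le_tsum hj
    _ = _ := by
        rw [ENNReal.tsum_mul_left, ENNReal.tsum_geometric]
        ring

/-- Combination of a local bound and a pointwise bound. -/
theorem morrey_combine (hμ : Reg μ v Q) {p κ : ℝ} (hp : 1 < p) (hκ0 : 0 < κ)
    {W : X → ℝ≥0∞} {C : ℝ≥0∞} (hW : Ap μ p W C) {N C1 C2 : ℝ≥0∞} {m : ℝ} (hm : 1 ≤ m)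
    {H H1 : X → ℝ≥0∞} {E : ℝ≥0∞} {x : X} {r : ℝ} (hr : 0 < r) (hH1 : Measurable H1)
    (hH : ∀ y ∈ Metric.ball x r, H y ≤ H1 y + E)
    (h1 : ∫⁻ y, H1 y ^ p * W y ∂μ ≤ C1 * (N * wt μ W x (m*r) ^ κ))
    (hE : E ^ p ≤ C2 * (N * (wt μ W x r)⁻¹ ^ (1-κ))) :
    ∫⁻ y in Metric.ball x r, H y ^ p * W y ∂μ
      ≤ 2^(p-1) * (C1 * (C * ENNReal.ofReal (m^Q) ^ p) ^ κ + C2) * N * wt μ W x r ^ κ := by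
  have hp0 : 0 < p := by linarith
  have hw0 : wt μ W x r ≠ 0 := (hW.pos hμ x hr).ne'
  have hwt : wt μ W x r ≠ ⊤ := (hW.fin x r).ne
  have e : (wt μ W x r)⁻¹ ^ (1-κ) * wt μ W x r = wt μ W x r ^ κ := by
    rw [ENNReal.inv_rpow, ← ENNReal.rpow_neg]
    nth_rw 2 [← ENNReal.rpow_one (wt μ W x r)]
    rw [← ENNReal.rpow_add _ _ hw0 hwt]
    congr 1; ring
  have h2 : (2:ℝ≥0∞)^(p-1) ≠ ⊤ := ENNReal.rpow_ne_top_of_nonneg (by linarith) (by simp)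
  have hm1 : Measurable fun y => H1 y ^ p * W y := (hH1.pow_const p).mul hW.meas
  calc ∫⁻ y in Metric.ball x r, H y ^ p * W y ∂μ
      ≤ ∫⁻ y in Metric.ball x r, 2^(p-1) * (H1 y ^ p * W y + E^p * W y) ∂μ := by
        refine setLIntegral_mono' measurableSet_ball fun y hy => ?_
        rw [← add_mul, ← mul_assoc]
        refine mul_le_mul_left ?_ _
        exact (ENNReal.rpow_le_rpow (hH y hy) hp0.le).trans
          (ENNReal.rpow_add_le_mul_rpow_add_rpow _ _ hp.le)
    _ = 2^(p-1) * (∫⁻ y in Metric.ball x r, H1 y ^ p * W y ∂μ + E^p * wt μ W x r) := by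
        rw [lintegral_const_mul' _ _ h2, lintegral_add_left hm1, lintegral_const_mul _ hW.meas]
        rfl
    _ ≤ 2^(p-1) * (C1 * (N * ((C * ENNReal.ofReal (m^Q) ^ p) * wt μ W x r) ^ κ)
          + C2 * (N * (wt μ W x r)⁻¹ ^ (1-κ)) * wt μ W x r) := by
        gcongr
        refine (setLIntegral_le_lintegral _ _).trans (h1.trans ?_)
        gcongr
        exact hW.scale hμ hp x hr hm
    _ = _ := by
        rw [ENNReal.mul_rpow_of_nonneg _ _ hκ0.le, ← e]; ring

end Morrey
end CZ

/-! ### Morrey bounds for the maximal operators -/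

namespace CZ

section MorreyMain

variable {X : Type*} [MetricSpace X] [MeasurableSpace X] [BorelSpace X] [SecondCountableTopology X]
variable {μ : Measure X} {v : ℝ} {Q : ℕ} {A : ℝ} {k : ℝ → X → X → ℝ}

theorem lintegral_indicator_pow_mul (μ : Measure X) {p : ℝ} (hp : 0 < p) (F W : X → ℝ≥0∞) {B : Set X}
    (hB : MeasurableSet B) :
    ∫⁻ y, (B.indicator F y) ^ p * W y ∂μ = ∫⁻ y in B, F y ^ p * W y ∂μ := by
  rw [← lintegral_indicator hB]
  congr 1; funext y
  by_cases hy : y ∈ B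
  · simp only [Set.indicator_of_mem hy]
  · simp only [Set.indicator_of_notMem hy, ENNReal.zero_rpow_of_pos hp, zero_mul]

theorem pow_bound {p κ : ℝ} (hp : 0 < p) (c C N b : ℝ≥0∞) :
    (c * (C * N * b ^ (1-κ)) ^ p⁻¹) ^ p = c^p * C * (N * b ^ (1-κ)) := by
  rw [ENNReal.mul_rpow_of_nonneg _ _ hp.le, ENNReal.rpow_inv_rpow hp.ne']
  ring

/-- Boundedness of maximal truncations on weighted Morrey spaces. -/
theorem CZF.morrey [Nonempty X] [SFinite μ] (hμ : Reg μ v Q) (hk : CZF μ Q A k) {p κ : ℝ} (hp : 1 < p) (hκ0 : 0 < κ)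
    (hκ1 : κ < 1) {W : X → ℝ≥0∞} {C : ℝ≥0∞} (hW : Ap μ p W C) : ∃ C' : ℝ≥0∞, C' ≠ ⊤ ∧
    ∀ f : X → ℝ, Measurable f → ∀ N : ℝ≥0∞, N ≠ ⊤ → MB μ p κ W N (fun y => ‖f y‖ₑ) →
    MM μ p κ W (C' * N) (Tst μ k f) := by
  have hp0 : 0 < p := by linarith
  have hA := hk.A_pos
  have hCt := hW.C_ne_top
  obtain ⟨D, hD, hfar⟩ := MB.far (κ := κ) hμ hk.Q_pos hp hκ1 hW
  obtain ⟨C1, hC1, hst⟩ := hk.strong hμ hp hW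
  set c := ENNReal.ofReal (A * 2^Q) * D with hc
  have hct : c ≠ ⊤ := ENNReal.mul_ne_top ENNReal.ofReal_ne_top hD
  refine ⟨2^(p-1) * (C1 * (C * ENNReal.ofReal (2^Q) ^ p) ^ κ + c^p * C), ?_, ?_⟩
  · have h2 : (2:ℝ≥0∞)^(p-1) ≠ ⊤ := ENNReal.rpow_ne_top_of_nonneg (by linarith) (by simp)
    finiteness
  intro f hf N hN hMB x0 r hr
  have hw0 : wt μ W x0 r ≠ 0 := (hW.pos hμ x0 hr).ne'
  have hnear : ∫⁻ y, ‖(Metric.ball x0 (2*r)).indicator f y‖ₑ ^ p * W y ∂μ ≤ N * wt μ W x0 (2*r) ^ κ := by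
    have e : ∀ y, ‖(Metric.ball x0 (2*r)).indicator f y‖ₑ
        = (Metric.ball x0 (2*r)).indicator (fun y => ‖f y‖ₑ) y := fun y => enorm_indicator_eq_indicator_enorm _ _
    simp_rw [e]
    rw [lintegral_indicator_pow_mul μ hp0 _ _ measurableSet_ball]
    exact hMB x0 (2*r) (by positivity)
  have hnt : ∫⁻ y, ‖(Metric.ball x0 (2*r)).indicator f y‖ₑ ^ p * W y ∂μ < ⊤ :=
    hnear.trans_lt (ENNReal.mul_lt_top hN.lt_top (ENNReal.rpow_lt_top_of_nonneg hκ0.le (hW.fin x0 _).ne))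
  set f1 := (Metric.ball x0 (2*r)).indicator f with hf1
  set f2 := (Metric.ball x0 (2*r))ᶜ.indicator f with hf2
  have hf1m : Measurable f1 := hf.indicator measurableSet_ball
  obtain ⟨hf1i, hT1⟩ := hst f1 hf1m x0 (2*r) (by positivity)
    (fun y hy => Set.indicator_of_notMem hy _) hnt
  set e := (C * N * (wt μ W x0 r)⁻¹ ^ (1-κ)) ^ p⁻¹ with he
  have het : e ≠ ⊤ := by
    have h1 : (wt μ W x0 r)⁻¹ ^ (1-κ) ≠ ⊤ :=
      ENNReal.rpow_ne_top_of_nonneg (by linarith) (ENNReal.inv_ne_top.2 hw0)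
    exact ENNReal.rpow_ne_top_of_nonneg (by positivity) (ENNReal.mul_ne_top (ENNReal.mul_ne_top hCt hN) h1)
  have hf2b : ∀ y ∈ Metric.ball x0 r, ∀ η, 0 < η → ∫⁻ z, ‖k η y z‖ₑ * ‖f2 z‖ₑ ∂μ ≤ c * e := by
    intro y hy η hη
    have hy' : dist y x0 < r := hy
    calc ∫⁻ z, ‖k η y z‖ₑ * ‖f2 z‖ₑ ∂μ
        = ∫⁻ z in (Metric.ball x0 (2*r))ᶜ, ‖k η y z‖ₑ * ‖f z‖ₑ ∂μ := by
          rw [← lintegral_indicator measurableSet_ball.compl]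
          congr 1; funext z
          rw [hf2, enorm_indicator_eq_indicator_enorm]
          by_cases hz : z ∈ (Metric.ball x0 (2*r))ᶜ
          · simp only [Set.indicator_of_mem hz]
          · simp only [Set.indicator_of_notMem hz, mul_zero]
      _ ≤ ∫⁻ z in (Metric.ball x0 (2*r))ᶜ, ENNReal.ofReal (A * 2^Q) *
            (ENNReal.ofReal (1 / dist x0 z ^ Q) * ‖f z‖ₑ) ∂μ := by
          refine setLIntegral_mono' measurableSet_ball.compl fun z hz => ?_
          rw [← mul_assoc, ← ENNReal.ofReal_mul (by positivity)]
          refine mul_le_mul_left ?_ _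
          have hz' : 2 * r ≤ dist z x0 := by simpa using hz
          rw [dist_comm z] at hz'
          have h1 : dist x0 z / 2 ≤ dist y z := by
            have := dist_triangle x0 y z
            rw [dist_comm x0 y] at this
            linarith
          have h2 : 0 < dist x0 z := by linarith
          rw [← ofReal_norm, Real.norm_eq_abs]
          refine ENNReal.ofReal_le_ofReal ((hk.size_dist hη y z (by linarith)).trans ?_)
          calc A / dist y z ^ Q ≤ A / (dist x0 z / 2) ^ Q := by gcongr
            _ = _ := by rw [div_pow]; field_simp
      _ = ENNReal.ofReal (A * 2^Q) * ∫⁻ z in (Metric.ball x0 (2*r))ᶜ,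
            ENNReal.ofReal (1 / dist x0 z ^ Q) * ‖f z‖ₑ ∂μ := lintegral_const_mul' _ _ ENNReal.ofReal_ne_top
      _ ≤ ENNReal.ofReal (A * 2^Q) * (D * e) :=
          mul_le_mul_right (hfar N _ hf.enorm hMB x0 r hr) _
      _ = _ := by rw [hc]; ring
  refine ⟨fun y => Tst μ k f1 y + c * e, (hk.measurable_Tst hf1i).add_const _, fun y hy => ?_,
    morrey_combine hμ hp hκ0 hW (m := 2) (by norm_num) (H1 := Tst μ k f1) (E := c * e) hr
    (hk.measurable_Tst hf1i) (fun _ _ => le_rfl) (hT1.trans (mul_le_mul_right hnear _)) ?_⟩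
  · refine iSup₂_le fun η hη => ?_
    have hi1 := hk.integrable hη hf1i y
    have hi2 : Integrable (fun z => k η y z * f2 z) μ := by
      refine ⟨(((hk.meas η hη).comp measurable_prodMk_left).mul
        (hf.indicator measurableSet_ball.compl)).aestronglyMeasurable, ?_⟩
      refine lt_of_le_of_lt ?_ (ENNReal.mul_lt_top hct.lt_top het.lt_top)
      refine le_trans (le_of_eq ?_) (hf2b y hy η hη)
      simp_rw [enorm_mul]
    have hsplit : op μ (k η) f y = op μ (k η) f1 y + op μ (k η) f2 y := by
      unfold op
      rw [← integral_add hi1 hi2]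
      congr 1; funext z
      rw [← mul_add, hf1, hf2]
      congr 1
      exact (Set.indicator_self_add_compl_apply _ f z).symm
    rw [hsplit]
    exact (enorm_add_le _ _).trans (add_le_add (le_Tst μ k f1 y hη)
      ((enorm_op_le _ _ _).trans (hf2b y hy η hη)))
  · rw [he, pow_bound hp0]

/-- Boundedness of the maximal function on weighted Morrey spaces. -/
theorem maxFn_morrey [SFinite μ] (hμ : Reg μ v Q) {p κ : ℝ} (hp : 1 < p) (hκ0 : 0 < κ)
    (hκ1 : κ < 1) {W : X → ℝ≥0∞} {C : ℝ≥0∞} (hW : Ap μ p W C) : ∃ C' : ℝ≥0∞, C' ≠ ⊤ ∧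
    ∀ F : X → ℝ≥0∞, Measurable F → ∀ N : ℝ≥0∞, MB μ p κ W N F →
    MB μ p κ W (C' * N) (maxFn μ F) := by
  have hp0 : 0 < p := by linarith
  have hCt := hW.C_ne_top
  obtain ⟨C1, hC1, hst⟩ := hW.maxFn_bound hμ hp
  set c := C * ENNReal.ofReal (3^Q) ^ p with hc
  have hct : c ≠ ⊤ := by finiteness
  have h1κ : 0 ≤ 1 - κ := by linarith
  have hcκ : c ^ (1-κ) ≠ ⊤ := ENNReal.rpow_ne_top_of_nonneg h1κ hct
  refine ⟨2^(p-1) * (C1 * (C * ENNReal.ofReal (3^Q) ^ p) ^ κ + (1:ℝ≥0∞)^p * (C * c^(1-κ))), ?_, ?_⟩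
  · have h2 : (2:ℝ≥0∞)^(p-1) ≠ ⊤ := ENNReal.rpow_ne_top_of_nonneg (by linarith) (by simp)
    finiteness
  intro F hF N hMB x0 r hr
  have hnear : ∫⁻ y, (Metric.ball x0 (3*r)).indicator F y ^ p * W y ∂μ ≤ N * wt μ W x0 (3*r) ^ κ := by
    rw [lintegral_indicator_pow_mul μ hp0 _ _ measurableSet_ball]
    exact hMB x0 (3*r) (by positivity)
  have hF1m : Measurable ((Metric.ball x0 (3*r)).indicator F) := hF.indicator measurableSet_ball
  refine morrey_combine hμ hp hκ0 hW (m := 3) (by norm_num) (H1 := maxFn μ ((Metric.ball x0 (3*r)).indicator F))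
    (E := 1 * (C * c^(1-κ) * N * (wt μ W x0 r)⁻¹ ^ (1-κ)) ^ p⁻¹) hr (measurable_maxFn μ _) ?_
    ((hst _ hF1m).trans (mul_le_mul_right hnear _)) ?_
  · intro y hy
    have hy' : dist y x0 < r := hy
    rw [one_mul]
    refine iSup_le fun z => iSup_le fun s => iSup_le fun hs => iSup_le fun hyz => ?_
    have hyz' : dist y z < s := hyz
    rcases le_or_gt s r with h | h
    · refine le_trans ?_ (le_self_add)
      refine le_trans ?_ (avg_le_maxFn μ _ hs hyz)
      gcongr ?_ / _
      refine setLIntegral_mono' measurableSet_ball fun u hu => ?_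
      rw [Set.indicator_of_mem]
      have hu' : dist u z < s := hu
      rw [Metric.mem_ball]
      have h1 := dist_triangle u z x0
      have h2 := dist_triangle z y x0
      rw [dist_comm z y] at h2
      linarith
    · refine le_trans ((hMB.avg_le hμ hp hW hF z hs).trans ?_) le_add_self
      have h1 : wt μ W x0 r ≤ c * wt μ W z s := by
        refine le_trans (wt_mono μ W ?_) (hW.scale hμ hp z hs (c := 3) (by norm_num))
        intro u hu
        have hu' : dist u x0 < r := hu
        rw [Metric.mem_ball]
        have h1 := dist_triangle u x0 z
        have h2 := dist_triangle x0 y z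
        rw [dist_comm x0 y] at h2
        linarith
      have h2 : (wt μ W z s)⁻¹ ≤ c * (wt μ W x0 r)⁻¹ := by
        have ha0 : wt μ W x0 r ≠ 0 := (hW.pos hμ x0 hr).ne'
        have hat : wt μ W x0 r ≠ ⊤ := (hW.fin x0 _).ne
        have hb0 : wt μ W z s ≠ 0 := (hW.pos hμ z hs).ne'
        have hbt : wt μ W z s ≠ ⊤ := (hW.fin z _).ne
        calc (wt μ W z s)⁻¹ = wt μ W x0 r * ((wt μ W x0 r)⁻¹ * (wt μ W z s)⁻¹) := by
              rw [← mul_assoc, ENNReal.mul_inv_cancel ha0 hat, one_mul]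
          _ ≤ c * wt μ W z s * ((wt μ W x0 r)⁻¹ * (wt μ W z s)⁻¹) := mul_le_mul_left h1 _
          _ = c * (wt μ W x0 r)⁻¹ * (wt μ W z s * (wt μ W z s)⁻¹) := by ring
          _ = _ := by rw [ENNReal.mul_inv_cancel hb0 hbt, mul_one]
      calc (C * N * (wt μ W z s)⁻¹ ^ (1-κ)) ^ p⁻¹ ≤ (C * N * (c * (wt μ W x0 r)⁻¹) ^ (1-κ)) ^ p⁻¹ := by gcongr
        _ = _ := by
          rw [ENNReal.mul_rpow_of_nonneg _ _ h1κ]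
          congr 1; ring
  · rw [pow_bound hp0]

end MorreyMain
end CZ

/-! ### The Heisenberg group as a metric space -/

namespace QHeis
section GA1

variable {n : ℕ}

/-- The `l`-th quaternionic coordinate of a horizontal vector. -/
def qc (y : Fin (4*(n-1)) → ℝ) (l : Fin (n-1)) : Quaternion ℝ :=
  ⟨y (idx l 0), y (idx l 1), y (idx l 2), y (idx l 3)⟩

/-- The quaternionic inner product `⟨y, y'⟩ = ∑ₗ conj(yₗ) y'ₗ`. -/
def qip (y y' : Fin (4*(n-1)) → ℝ) : Quaternion ℝ := ∑ l, star (qc y l) * qc y' l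

lemma sum_idx (f : Fin (4*(n-1)) → ℝ) : ∑ i, f i = ∑ l : Fin (n-1), ∑ k : Fin 4, f (idx l k) := by
  rw [← Finset.sum_product', ← (finProdFinEquiv.trans (finCongr (Nat.mul_comm (n-1) 4))).sum_comp]
  apply Finset.sum_congr rfl
  rintro ⟨l, k⟩ _
  congr 1
  ext
  simp [idx, finProdFinEquiv, add_comm]

lemma q_re_sum {ι : Type*} (s : Finset ι) (f : ι → Quaternion ℝ) : (∑ i ∈ s, f i).re = ∑ i ∈ s, (f i).re :=
  map_sum (⟨⟨fun q : Quaternion ℝ => q.re, rfl⟩, fun _ _ => rfl⟩ : Quaternion ℝ →+ ℝ) f s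
lemma q_imI_sum {ι : Type*} (s : Finset ι) (f : ι → Quaternion ℝ) : (∑ i ∈ s, f i).imI = ∑ i ∈ s, (f i).imI :=
  map_sum (⟨⟨fun q : Quaternion ℝ => q.imI, rfl⟩, fun _ _ => rfl⟩ : Quaternion ℝ →+ ℝ) f s
lemma q_imJ_sum {ι : Type*} (s : Finset ι) (f : ι → Quaternion ℝ) : (∑ i ∈ s, f i).imJ = ∑ i ∈ s, (f i).imJ :=
  map_sum (⟨⟨fun q : Quaternion ℝ => q.imJ, rfl⟩, fun _ _ => rfl⟩ : Quaternion ℝ →+ ℝ) f s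
lemma q_imK_sum {ι : Type*} (s : Finset ι) (f : ι → Quaternion ℝ) : (∑ i ∈ s, f i).imK = ∑ i ∈ s, (f i).imK :=
  map_sum (⟨⟨fun q : Quaternion ℝ => q.imK, rfl⟩, fun _ _ => rfl⟩ : Quaternion ℝ →+ ℝ) f s

lemma star_mul_re (x y : Quaternion ℝ) : (star x * y).re =
    x.re * y.re + x.imI * y.imI + x.imJ * y.imJ + x.imK * y.imK := by simp
lemma star_mul_imI (x y : Quaternion ℝ) : (star x * y).imI =
    x.re * y.imI - x.imI * y.re - x.imJ * y.imK + x.imK * y.imJ := by simp; ring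
lemma star_mul_imJ (x y : Quaternion ℝ) : (star x * y).imJ =
    x.re * y.imJ + x.imI * y.imK - x.imJ * y.re - x.imK * y.imI := by simp; ring
lemma star_mul_imK (x y : Quaternion ℝ) : (star x * y).imK =
    x.re * y.imK - x.imI * y.imJ + x.imJ * y.imI - x.imK * y.re := by simp; ring

/-- `g ↦ |y|² + t` turns the group law into addition up to the term `2⟨y, y'⟩`. -/
lemma toQ_mul (a b : G n) : toQ (mul a b) = toQ a + toQ b + 2 * qip a.2 b.2 := by
  have h2 : ∀ q : Quaternion ℝ, 2 * q = q + q := fun q => two_mul q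
  rw [h2]
  have hre : (toQ (mul a b)).re = (toQ a + toQ b + (qip a.2 b.2 + qip a.2 b.2)).re := by
    simp only [Quaternion.re_add]
    simp only [toQ, mul, qip, q_re_sum]
    rw [sum_idx fun i => ((a.2 + b.2) i)^2, sum_idx fun i => (a.2 i)^2,
      sum_idx fun i => (b.2 i)^2]
    simp only [← Finset.sum_add_distrib]
    refine Finset.sum_congr rfl fun l _ => ?_
    rw [star_mul_re]
    simp [qc, Fin.sum_univ_four]
    ring
  ext
  · exact hre
  · simp only [Quaternion.imI_add]
    simp only [toQ, mul, qip, q_imI_sum, two_mul, ← Finset.sum_add_distrib]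
    congr 1
    refine Finset.sum_congr rfl fun l _ => ?_
    rw [star_mul_imI]
    simp [qc, Fin.sum_univ_four, bmat]
    ring
  · simp only [Quaternion.imJ_add]
    simp only [toQ, mul, qip, q_imJ_sum, two_mul, ← Finset.sum_add_distrib]
    congr 1
    refine Finset.sum_congr rfl fun l _ => ?_
    rw [star_mul_imJ]
    simp [qc, Fin.sum_univ_four, bmat]
    ring
  · simp only [Quaternion.imK_add]
    simp only [toQ, mul, qip, q_imK_sum, two_mul, ← Finset.sum_add_distrib]
    congr 1
    refine Finset.sum_congr rfl fun l _ => ?_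
    rw [star_mul_imK]
    simp [qc, Fin.sum_univ_four, bmat]
    ring

lemma toQ_normSq (g : G n) :
    Quaternion.normSq (toQ g) = (∑ i, (g.2 i)^2)^2 + ∑ α, (g.1 α)^2 := by
  rw [Quaternion.normSq_def']
  simp [toQ, Fin.sum_univ_three]
  ring

lemma hnorm_nonneg (g : G n) : 0 ≤ hnorm g := by unfold hnorm; positivity

lemma norm_toQ (g : G n) : ‖toQ g‖ = hnorm g ^ 2 := by
  have h4 : (hnorm g)^4 = Quaternion.normSq (toQ g) := by
    rw [toQ_normSq, hnorm]
    exact_mod_cast Real.rpow_inv_natCast_pow (n := 4) (by positivity) (by norm_num)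
  rw [Quaternion.normSq_eq_norm_mul_self] at h4
  refine (pow_left_inj₀ (norm_nonneg _) (by positivity) two_ne_zero).1 ?_
  rw [← pow_mul, h4, sq]

lemma sum_sq_eq (y : Fin (4*(n-1)) → ℝ) : ∑ i, (y i)^2 = ∑ l, ‖qc y l‖^2 := by
  rw [sum_idx]
  refine Finset.sum_congr rfl fun l _ => ?_
  rw [sq ‖_‖, ← Quaternion.normSq_eq_norm_mul_self]
  rw [Quaternion.normSq_def']
  simp [qc, Fin.sum_univ_four]

lemma sum_sq_le (g : G n) : ∑ i, (g.2 i)^2 ≤ hnorm g ^ 2 := by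
  rw [← norm_toQ]
  refine (pow_le_pow_iff_left₀ (by positivity) (norm_nonneg _) two_ne_zero).1 ?_
  rw [sq ‖_‖, ← Quaternion.normSq_eq_norm_mul_self, toQ_normSq]
  have : 0 ≤ ∑ α, (g.1 α)^2 := by positivity
  linarith

lemma norm_qip_le (a b : G n) : ‖qip a.2 b.2‖ ≤ hnorm a * hnorm b := by
  have h1 : ‖qip a.2 b.2‖ ≤ ∑ l, ‖qc a.2 l‖ * ‖qc b.2 l‖ := by
    refine (norm_sum_le _ _).trans (Finset.sum_le_sum fun l _ => ?_)
    rw [norm_mul, norm_star]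
  refine h1.trans ?_
  refine (sq_le_sq₀ (by positivity) (mul_nonneg (hnorm_nonneg _) (hnorm_nonneg _))).1 ?_
  refine (Finset.sum_mul_sq_le_sq_mul_sq _ _ _).trans ?_
  rw [← sum_sq_eq, ← sum_sq_eq, mul_pow]
  gcongr
  · exact sum_sq_le a
  · exact sum_sq_le b

lemma hnorm_mul_le (a b : G n) : hnorm (mul a b) ≤ hnorm a + hnorm b := by
  refine (sq_le_sq₀ (hnorm_nonneg _) (add_nonneg (hnorm_nonneg _) (hnorm_nonneg _))).1 ?_
  rw [← norm_toQ, toQ_mul]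
  refine (norm_add_le _ _).trans ?_
  have h1 := norm_add_le (toQ a) (toQ b)
  have h2 : ‖2 * qip a.2 b.2‖ ≤ 2 * (hnorm a * hnorm b) := by
    rw [two_mul]
    refine (norm_add_le _ _).trans ?_
    have := norm_qip_le a b
    linarith
  rw [norm_toQ, norm_toQ] at h1
  nlinarith

lemma norm_toQ_mul_sub_left (a b : G n) :
    ‖toQ (mul a b) - toQ a‖ ≤ hnorm b ^ 2 + 2 * (hnorm a * hnorm b) := by
  have e : toQ (mul a b) - toQ a = toQ b + (qip a.2 b.2 + qip a.2 b.2) := by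
    rw [toQ_mul, two_mul]; abel
  rw [e]
  have h1 := norm_add_le (toQ b) (qip a.2 b.2 + qip a.2 b.2)
  have h2 := norm_add_le (qip a.2 b.2) (qip a.2 b.2)
  have := norm_qip_le a b
  rw [norm_toQ] at h1
  linarith

lemma norm_toQ_mul_sub_right (a b : G n) :
    ‖toQ (mul a b) - toQ b‖ ≤ hnorm a ^ 2 + 2 * (hnorm a * hnorm b) := by
  have e : toQ (mul a b) - toQ b = toQ a + (qip a.2 b.2 + qip a.2 b.2) := by
    rw [toQ_mul, two_mul]; abel
  rw [e]
  have h1 := norm_add_le (toQ a) (qip a.2 b.2 + qip a.2 b.2)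
  have h2 := norm_add_le (qip a.2 b.2) (qip a.2 b.2)
  have := norm_qip_le a b
  rw [norm_toQ] at h1
  linarith

lemma mul_assoc' (a b c : G n) : mul (mul a b) c = mul a (mul b c) := by
  refine Prod.ext ?_ (add_assoc _ _ _)
  funext α
  simp only [mul, Pi.add_apply, mul_add, add_mul, Finset.sum_add_distrib]
  ring

lemma bmat_skew (α : Fin 3) (k j : Fin 4) : bmat α k j = - bmat α j k := by
  fin_cases α <;> fin_cases k <;> fin_cases j <;> simp [bmat]

lemma bsum_self (α : Fin 3) (y : Fin (4*(n-1)) → ℝ) (l : Fin (n-1)) :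
    ∑ k : Fin 4, ∑ j : Fin 4, bmat α k j * y (idx l k) * y (idx l j) = 0 := by
  fin_cases α <;> simp [Fin.sum_univ_four, bmat] <;> ring

lemma inv_mul' (a : G n) : mul (inv a) a = 0 := by
  refine Prod.ext ?_ (by simp [mul, inv])
  funext α
  have := fun l => bsum_self α a.2 l
  simp [mul, inv, Finset.sum_neg_distrib, this]

lemma mul_inv' (a : G n) : mul a (inv a) = 0 := by
  refine Prod.ext ?_ (by simp [mul, inv])
  funext α
  have := fun l => bsum_self α a.2 l
  simp [mul, inv, Finset.sum_neg_distrib, this]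

lemma zero_mul' (a : G n) : mul 0 a = a := by
  refine Prod.ext ?_ (by simp [mul])
  funext α; simp [mul]

lemma mul_zero' (a : G n) : mul a 0 = a := by
  refine Prod.ext ?_ (by simp [mul])
  funext α; simp [mul]

lemma inv_inv' (a : G n) : inv (inv a) = a := by simp [inv]

lemma inv_mul_rev (a b : G n) : inv (mul a b) = mul (inv b) (inv a) := by
  have h : mul (mul (inv b) (inv a)) (mul a b) = 0 := by
    rw [mul_assoc', ← mul_assoc' (inv a), inv_mul', zero_mul', inv_mul']
  have := congrArg (fun x => mul x (inv (mul a b))) h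
  simp only [mul_assoc' _ (mul a b), mul_inv', mul_zero', zero_mul'] at this
  exact this.symm

lemma inv_mul_cancel' (a b : G n) : mul (inv a) (mul a b) = b := by
  rw [← mul_assoc', inv_mul', zero_mul']

lemma mul_inv_cancel' (a b : G n) : mul a (mul (inv a) b) = b := by
  rw [← mul_assoc', mul_inv', zero_mul']

lemma hnorm_inv (a : G n) : hnorm (inv a) = hnorm a := by simp [hnorm, inv]

lemma hnorm_zero : hnorm (0 : G n) = 0 := by simp [hnorm]

lemma abs_snd_le (g : G n) (i) : |g.2 i| ≤ hnorm g := by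
  refine abs_le_of_sq_le_sq ?_ (hnorm_nonneg g)
  exact (Finset.single_le_sum (f := fun i => (g.2 i)^2) (fun i _ => sq_nonneg _)
    (Finset.mem_univ i)).trans (sum_sq_le g)

lemma abs_fst_le (g : G n) (α) : |g.1 α| ≤ hnorm g ^ 2 := by
  refine abs_le_of_sq_le_sq ?_ (by positivity)
  rw [← norm_toQ, sq ‖_‖, ← Quaternion.normSq_eq_norm_mul_self, toQ_normSq]
  have := Finset.single_le_sum (f := fun i => (g.1 i)^2) (fun i _ => sq_nonneg _)
    (Finset.mem_univ α)
  have h2 : 0 ≤ (∑ i, (g.2 i)^2)^2 := by positivity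
  linarith

lemma eq_zero_of_hnorm {g : G n} (h : hnorm g = 0) : g = 0 := by
  refine Prod.ext (funext fun α => ?_) (funext fun i => ?_)
  · have := abs_fst_le g α
    rw [h] at this
    simpa using this
  · have := abs_snd_le g i
    rw [h] at this
    simpa using this

lemma continuous_mul' : Continuous fun x : G n × G n => mul x.1 x.2 := by
  unfold mul; fun_prop
lemma continuous_mul_left' (x : G n) : Continuous fun y : G n => mul x y := by
  unfold mul; fun_prop
lemma continuous_mul_right' (x : G n) : Continuous fun y : G n => mul y x := by
  unfold mul; fun_prop
lemma continuous_inv' : Continuous (inv : G n → G n) := by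
  unfold inv; fun_prop
lemma continuous_hnorm : Continuous (hnorm : G n → ℝ) := by
  unfold hnorm
  exact Continuous.rpow_const (by fun_prop) fun _ => Or.inr (by norm_num)
lemma continuous_toQ : Continuous (toQ : G n → Quaternion ℝ) := by
  have h : (toQ : G n → Quaternion ℝ) = fun g => Quaternion.linearIsometryEquivTuple.symm
      (WithLp.toLp 2 ![∑ i, (g.2 i)^2, g.1 0, g.1 1, g.1 2]) := by
    funext g
    rfl
  rw [h]
  refine (LinearIsometryEquiv.continuous _).comp ((PiLp.continuous_toLp _ _).comp ?_)
  refine continuous_pi fun i => ?_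
  fin_cases i <;> simp <;> fun_prop

lemma rho_comm (h g : G n) : rho h g = rho g h := by
  rw [rho, ← hnorm_inv, inv_mul_rev, inv_inv', rho]

lemma rho_triangle (a b c : G n) : rho a c ≤ rho a b + rho b c := by
  have : mul (inv c) a = mul (mul (inv c) b) (mul (inv b) a) := by
    rw [mul_assoc', mul_inv_cancel']
  rw [rho, this, add_comm]
  exact hnorm_mul_le _ _

/-- The Heisenberg group with its left-invariant homogeneous metric `ρ`; a copy of the type `G n`,
on which the product instance would otherwise provide the sup metric. -/
def HG (n : ℕ) : Type := G n

instance : TopologicalSpace (HG n) := inferInstanceAs (TopologicalSpace (G n))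
instance : SecondCountableTopology (HG n) := inferInstanceAs (SecondCountableTopology (G n))
instance : MeasureSpace (HG n) := inferInstanceAs (MeasureSpace (G n))
instance : BorelSpace (HG n) := inferInstanceAs (BorelSpace (G n))
instance : Nonempty (HG n) := inferInstanceAs (Nonempty (G n))
instance : SFinite (volume : Measure (HG n)) := inferInstanceAs (SFinite (volume : Measure (G n)))

/-- The homogeneous metric, before its topology is identified with the product topology. -/
@[reducible] def hgMetric (n : ℕ) : MetricSpace (HG n) where
  dist h g := rho (n := n) h g
  dist_self x := by
    exact (congrArg hnorm (inv_mul' (n := n) x)).trans hnorm_zero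
  dist_comm := rho_comm
  dist_triangle := rho_triangle
  eq_of_dist_eq_zero := by
    intro x y h
    have h1 := eq_zero_of_hnorm (g := mul (inv y) x) h
    exact ((mul_inv_cancel' (n := n) y x).symm.trans (congrArg (mul y) h1)).trans (mul_zero' _)

lemma nhds_eq_comap (x : G n) : 𝓝 x = comap (fun h => rho h x) (𝓝 0) := by
  apply le_antisymm
  · rw [← tendsto_iff_comap]
    have h : Continuous fun h : G n => rho h x := by
      unfold rho
      exact continuous_hnorm.comp (continuous_mul_left' _)
    have := h.tendsto x
    rwa [rho, inv_mul', hnorm_zero] at this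
  · have h0 : Tendsto (fun h : G n => rho h x) (comap (fun h => rho h x) (𝓝 0)) (𝓝 0) :=
      tendsto_comap
    have h1 : Tendsto (fun h : G n => mul (inv x) h) (comap (fun h => rho h x) (𝓝 0))
        (𝓝 0) := by
      refine Tendsto.prodMk_nhds (x := (0 : Fin 3 → ℝ)) (y := (0 : Fin (4*(n-1)) → ℝ)) ?_ ?_
      · rw [tendsto_pi_nhds]
        intro α
        refine squeeze_zero_norm (a := fun h => rho h x ^ 2) (fun h => abs_fst_le (mul (inv x) h) α) ?_
        simpa using h0.pow 2
      · rw [tendsto_pi_nhds]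
        intro i
        exact squeeze_zero_norm (fun h => abs_snd_le (mul (inv x) h) i) h0
    have h2 : Tendsto (fun u : G n => mul x u) (𝓝 0) (𝓝 x) := by
      have : Continuous fun u : G n => mul x u := continuous_mul_left' _
      simpa [mul_zero'] using this.tendsto 0
    have h3 := h2.comp h1
    have e : (fun u : G n => mul x u) ∘ (fun h : G n => mul (inv x) h) = id := by
      funext h; simp [mul_inv_cancel']
    rw [e] at h3
    exact h3

instance : MetricSpace (HG n) := (hgMetric n).replaceTopology <| by
  refine TopologicalSpace.ext_nhds fun x => ?_
  refine (nhds_eq_comap (n := n) x).trans ?_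
  exact @nhds_comap_dist (HG n) (hgMetric n).toPseudoMetricSpace x

lemma dist_eq (x y : HG n) : dist x y = rho (n := n) x y := rfl
lemma ball_eq (x : HG n) (r : ℝ) : Metric.ball x r = QHeis.ball (n := n) x r := rfl

end GA1
end QHeis

/-! ### Haar measure and dilations -/

namespace QHeis
section GA2

variable {n : ℕ}

/-- Translations of the Heisenberg group are shears composed with Euclidean translations. -/
lemma mp_shear (c : (Fin (4*(n-1)) → ℝ) → (Fin 3 → ℝ)) (hc : Measurable c)
    (y0 : Fin (4*(n-1)) → ℝ) :
    MeasurePreserving (fun g : G n => ((c g.2 + g.1, y0 + g.2) : G n)) volume volume := by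
  have h1 : MeasurePreserving (fun q : (Fin (4*(n-1)) → ℝ) × (Fin 3 → ℝ) =>
      ((y0 + q.1, c q.1 + q.2) : (Fin (4*(n-1)) → ℝ) × (Fin 3 → ℝ)))
      (volume.prod volume) (volume.prod volume) := by
    refine (measurePreserving_add_left volume y0).skew_product (g := fun y t => c y + t) ?_ ?_
    · exact (hc.comp measurable_fst).add measurable_snd
    · exact Eventually.of_forall fun y => (measurePreserving_add_left volume (c y)).map_eq
  exact (Measure.measurePreserving_swap.comp h1).comp Measure.measurePreserving_swap

lemma mp_mul_left (x : G n) : MeasurePreserving (fun g : G n => mul x g) volume volume := by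
  have := mp_shear (fun y α => x.1 α + 2 * ∑ l : Fin (n-1), ∑ k : Fin 4, ∑ j : Fin 4,
        bmat α k j * x.2 (idx l k) * y (idx l j)) (by fun_prop) x.2
  convert this using 2 with g
  refine Prod.ext (funext fun α => ?_) rfl
  simp [mul]; ring

lemma mp_mul_right (x : G n) : MeasurePreserving (fun g : G n => mul g x) volume volume := by
  have := mp_shear (fun y α => x.1 α + 2 * ∑ l : Fin (n-1), ∑ k : Fin 4, ∑ j : Fin 4,
        bmat α k j * y (idx l k) * x.2 (idx l j)) (by fun_prop) x.2
  convert this using 2 with g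
  refine Prod.ext (funext fun α => ?_) (add_comm _ _)
  simp [mul]; ring

lemma mp_inv : MeasurePreserving (inv : G n → G n) volume volume := by
  exact (Measure.measurePreserving_neg (volume : Measure (Fin 3 → ℝ))).prod
    (Measure.measurePreserving_neg (volume : Measure (Fin (4*(n-1)) → ℝ)))

lemma hnorm_dil {r : ℝ} (hr : 0 ≤ r) (g : G n) : hnorm (dil r g) = r * hnorm g := by
  refine (sq_eq_sq₀ (hnorm_nonneg _) (mul_nonneg hr (hnorm_nonneg _))).1 ?_
  have h : toQ (dil r g) = (r^2) • toQ g := by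
    have e : ∑ i, (r * g.2 i)^2 = r^2 * ∑ i, (g.2 i)^2 := by
      rw [Finset.mul_sum]; exact Finset.sum_congr rfl fun i _ => by ring
    ext
    · exact e
    all_goals rfl
  rw [← norm_toQ, h, norm_smul, norm_toQ, Real.norm_of_nonneg (by positivity)]
  ring

lemma map_dil {r : ℝ} (hr : 0 < r) :
    Measure.map (dil r : G n → G n) volume
      = ENNReal.ofReal ((r ^ (6 + 4*(n-1)))⁻¹) • (volume : Measure (G n)) := by
  have h1 : Measure.map (fun t : Fin 3 → ℝ => r^2 • t) volume
      = ENNReal.ofReal ((r^6)⁻¹) • (volume : Measure (Fin 3 → ℝ)) := by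
    rw [Measure.map_addHaar_smul volume (by positivity : r^2 ≠ 0), Module.finrank_fin_fun,
      abs_of_pos (by positivity)]
    congr 3; ring
  have h2 : Measure.map (fun t : Fin (4*(n-1)) → ℝ => r • t) volume
      = ENNReal.ofReal ((r^(4*(n-1)))⁻¹) • (volume : Measure (Fin (4*(n-1)) → ℝ)) := by
    rw [Measure.map_addHaar_smul volume hr.ne', Module.finrank_fin_fun,
      abs_of_pos (by positivity)]
  have h3 := Measure.map_prod_map (volume : Measure (Fin 3 → ℝ))
    (volume : Measure (Fin (4*(n-1)) → ℝ))
    (f := fun t : Fin 3 → ℝ => r^2 • t) (g := fun t : Fin (4*(n-1)) → ℝ => r • t)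
    (by fun_prop) (by fun_prop)
  rw [h1, h2] at h3
  have h4 : (volume : Measure (G n)) = (volume : Measure (Fin 3 → ℝ)).prod
      (volume : Measure (Fin (4*(n-1)) → ℝ)) := rfl
  have h5 : (dil r : G n → G n) = Prod.map (fun t : Fin 3 → ℝ => r^2 • t)
    (fun t : Fin (4*(n-1)) → ℝ => r • t) := rfl
  rw [h4, h5, ← h3, Measure.prod_smul_left, Measure.prod_smul_right, smul_smul,
    ← ENNReal.ofReal_mul (by positivity)]
  congr 2
  rw [pow_add, mul_inv]

lemma measurable_dil (r : ℝ) : Measurable (dil r : G n → G n) := by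
  unfold dil; fun_prop

lemma rho_zero (h : G n) : rho h 0 = hnorm h := by
  have : inv (0 : G n) = 0 := by simp [inv]
  rw [rho, this, zero_mul']

lemma volume_ball (x : G n) {r : ℝ} (hr : 0 < r) :
    volume (QHeis.ball x r) = ENNReal.ofReal (r ^ (6+4*(n-1))) * volume (QHeis.ball (0 : G n) 1) := by
  have hm : ∀ r, MeasurableSet (QHeis.ball (0 : G n) r) := by
    intro r
    have e : QHeis.ball (0 : G n) r = hnorm ⁻¹' Set.Iio r := by
      ext h; show rho h 0 < r ↔ _; rw [rho_zero]; rfl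
    rw [e]
    exact continuous_hnorm.measurable measurableSet_Iio
  have h1 : QHeis.ball x r = (fun g => mul (inv x) g) ⁻¹' QHeis.ball (0 : G n) r := by
    ext h
    show rho h x < r ↔ rho (mul (inv x) h) 0 < r
    rw [rho_zero]; rfl
  rw [h1, (mp_mul_left _).measure_preimage (hm r).nullMeasurableSet]
  have h2 : QHeis.ball (0 : G n) r = dil r⁻¹ ⁻¹' QHeis.ball (0 : G n) 1 := by
    ext h
    show rho h 0 < r ↔ rho (dil r⁻¹ h) 0 < 1
    rw [rho_zero, rho_zero, hnorm_dil (by positivity), inv_mul_lt_iff₀ hr, mul_one]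
  rw [h2, ← Measure.map_apply (measurable_dil _) (hm 1), map_dil (by positivity)]
  simp

/-- `|B(g, r)| = v r^Q` with homogeneous dimension `Q = 4 * n + 2 = 6 + 4 * (n-1)`. -/
lemma hg_reg : CZ.Reg (volume : Measure (HG n)) (volume (QHeis.ball (0 : G n) 1)).toReal
    (6+4*(n-1)) := by
  have hsub : QHeis.ball (0 : G n) 1 ⊆ Metric.closedBall (0 : G n) 1 := by
    intro h hh
    replace hh : hnorm h < 1 := by rw [← rho_zero]; exact hh
    have h0 := hnorm_nonneg h
    have hsq : hnorm h ^ 2 ≤ 1 := by nlinarith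
    rw [mem_closedBall_zero_iff, Prod.norm_def]
    refine max_le ((pi_norm_le_iff_of_nonneg zero_le_one).2 fun α => ?_)
      ((pi_norm_le_iff_of_nonneg zero_le_one).2 fun i => ?_)
    · exact (abs_fst_le h α).trans hsq
    · exact (abs_snd_le h i).trans hh.le
  have hfin : volume (QHeis.ball (0 : G n) 1) ≠ ⊤ :=
    ((measure_mono hsub).trans_lt (isCompact_closedBall _ _).measure_lt_top).ne
  have hopen : IsOpen (QHeis.ball (0 : G n) 1) := by
    have e : QHeis.ball (0 : G n) 1 = hnorm ⁻¹' Set.Iio 1 := by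
      ext h; show rho h 0 < 1 ↔ _; rw [rho_zero]; rfl
    rw [e]; exact isOpen_Iio.preimage continuous_hnorm
  have hpos : volume (QHeis.ball (0 : G n) 1) ≠ 0 := by
    refine (hopen.measure_pos volume ⟨0, ?_⟩).ne'
    show rho 0 0 < 1
    rw [rho_zero, hnorm_zero]; norm_num
  refine ⟨ENNReal.toReal_pos hpos hfin, fun x r hr => ?_⟩
  refine (volume_ball (n := n) x hr).trans ?_
  rw [mul_comm, ENNReal.ofReal_mul ENNReal.toReal_nonneg, ENNReal.ofReal_toReal hfin]

end GA2
end QHeis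

/-! ### Derivatives of `conj σ / |σ|⁴` -/

namespace QHeis
section GA3

instance : StarModule ℝ (Quaternion ℝ) :=
  ⟨fun r q => by rw [Quaternion.star_smul, star_trivial r]⟩

/-- The iterated derivatives `∂ᵏ/∂x₁ᵏ (conj σ / |σ|⁴)` of which the Cauchy–Szegő kernel is built. -/
def Fk (k : ℕ) : Quaternion ℝ → Quaternion ℝ :=
  dre^[k] (fun τ => ((Quaternion.normSq τ) ^ 2)⁻¹ • star τ)

/-- The `i`-th real coordinate of a quaternion. -/
def cp (i : Fin 4) : Quaternion ℝ →L[ℝ] ℝ :=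
  (EuclideanSpace.proj i).comp
    (Quaternion.linearIsometryEquivTuple.toContinuousLinearEquiv : Quaternion ℝ →L[ℝ] _)

lemma abs_cp_le (i : Fin 4) (q : Quaternion ℝ) : |cp i q| ≤ ‖q‖ := by
  rw [← Quaternion.linearIsometryEquivTuple.norm_map q]
  exact PiLp.norm_apply_le (Quaternion.linearIsometryEquivTuple q) i

lemma norm_le_sum_cp (q : Quaternion ℝ) : ‖q‖ ≤ ∑ i, |cp i q| := by
  rw [← Quaternion.linearIsometryEquivTuple.norm_map q, EuclideanSpace.norm_eq]
  refine Real.sqrt_le_left (Finset.sum_nonneg fun i _ => abs_nonneg _) |>.2 ?_ |> fun h => h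
  exact Finset.sum_sq_le_sq_sum_of_nonneg (fun i _ => abs_nonneg (cp i q))

lemma cp_zero (q : Quaternion ℝ) : cp 0 q = q.re := rfl

lemma cp_star {i : Fin 4} (hi : i ≠ 0) (q : Quaternion ℝ) : cp i (star q) = - cp i q := by
  fin_cases i
  · exact absurd rfl hi
  · exact Quaternion.imI_star q
  · exact Quaternion.imJ_star q
  · exact Quaternion.imK_star q

lemma Fk_zero (τ : Quaternion ℝ) : Fk 0 τ = ((Quaternion.normSq τ) ^ 2)⁻¹ • star τ := rfl

lemma Fk_succ (k : ℕ) : Fk (k+1) = dre (Fk k) := Function.iterate_succ_apply' _ _ _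

lemma hasDerivAt_line (σ : Quaternion ℝ) (u : ℝ) :
    HasDerivAt (fun s : ℝ => σ + (s : Quaternion ℝ)) 1 u := by
  have h := ((hasDerivAt_id u).smul_const (1 : Quaternion ℝ)).const_add σ
  simpa [Algebra.smul_def] using h

lemma dre_eq {F : Quaternion ℝ → Quaternion ℝ} {σ : Quaternion ℝ} (h : DifferentiableAt ℝ F σ) :
    dre F σ = fderiv ℝ F σ 1 := by
  have h1 : HasFDerivAt F (fderiv ℝ F σ) (σ + ((0:ℝ) : Quaternion ℝ)) := by
    simpa using h.hasFDerivAt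
  exact (h1.comp_hasDerivAt 0 (hasDerivAt_line σ 0)).deriv

lemma isOpen_compl_zero : IsOpen ({0}ᶜ : Set (Quaternion ℝ)) := isOpen_compl_singleton

lemma Fk_contDiffOn (k : ℕ) : ContDiffOn ℝ (⊤ : ℕ∞) (Fk k) {0}ᶜ := by
  induction k with
  | zero =>
    have h : ContDiffOn ℝ (⊤ : ℕ∞) (fun τ : Quaternion ℝ => ((‖τ‖^2)^2)⁻¹ • star τ) {0}ᶜ := by
      have h1 : ContDiff ℝ (⊤ : ℕ∞) (fun τ : Quaternion ℝ => (‖τ‖^2)^2) :=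
        (contDiff_norm_sq ℝ).pow 2
      have h2 : ContDiff ℝ (⊤ : ℕ∞) (fun τ : Quaternion ℝ => star τ) :=
        (starL' ℝ : Quaternion ℝ ≃L[ℝ] Quaternion ℝ).contDiff
      refine ContDiffOn.smul (h1.contDiffOn.inv ?_) h2.contDiffOn
      intro x hx
      have : ‖x‖ ≠ 0 := norm_ne_zero_iff.2 hx
      positivity
    refine h.congr fun τ _ => ?_
    rw [Fk_zero, Quaternion.normSq_eq_norm_mul_self, sq ‖τ‖]
  | succ k ih =>
    rw [Fk_succ]
    have h1 := (ih.fderiv_of_isOpen isOpen_compl_zero (m := (⊤ : ℕ∞)) (by exact le_rfl)).clm_apply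
      (contDiffOn_const (c := (1 : Quaternion ℝ)))
    refine h1.congr fun σ hσ => dre_eq ?_
    exact (ih.contDiffAt (isOpen_compl_zero.mem_nhds hσ)).differentiableAt (by simp)

lemma Fk_differentiableAt (k : ℕ) {σ : Quaternion ℝ} (hσ : σ ≠ 0) :
    DifferentiableAt ℝ (Fk k) σ :=
  ((Fk_contDiffOn k).contDiffAt (isOpen_compl_zero.mem_nhds hσ)).differentiableAt (by simp)

lemma Fk_hasDerivAt (k : ℕ) {σ : Quaternion ℝ} {u : ℝ} (hσ : σ + (u : Quaternion ℝ) ≠ 0) :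
    HasDerivAt (fun s : ℝ => Fk k (σ + (s : Quaternion ℝ))) (Fk (k+1) (σ + (u : Quaternion ℝ))) u := by
  rw [Fk_succ, dre_eq (Fk_differentiableAt k hσ)]
  exact (Fk_differentiableAt k hσ).hasFDerivAt.comp_hasDerivAt u (hasDerivAt_line σ u)

/-- `∂ᵏ(conj σ/|σ|⁴)` is homogeneous of degree `-(3+k)`. -/
lemma Fk_smul (k : ℕ) {r : ℝ} (hr : 0 < r) (σ : Quaternion ℝ) :
    Fk k (r • σ) = (r^(3+k))⁻¹ • Fk k σ := by
  induction k generalizing σ with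
  | zero =>
    have h : Quaternion.normSq (r • σ) = r^2 * Quaternion.normSq σ := Quaternion.normSq_smul r σ
    rw [Fk_zero, Fk_zero, h, Quaternion.star_smul, smul_smul, smul_smul]
    congr 1
    simp only [mul_pow, mul_inv]
    field_simp
  | succ k ih =>
    rw [Fk_succ]
    show deriv _ 0 = _ • deriv _ 0
    have h : (fun s : ℝ => Fk k (r • σ + (s : Quaternion ℝ)))
        = fun s : ℝ => (r^(3+k))⁻¹ • (fun s : ℝ => Fk k (σ + (s : Quaternion ℝ))) (r⁻¹ * s) := by
      funext s
      simp only
      rw [← ih, smul_add]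
      congr 2
      rw [show r • (((r⁻¹ * s : ℝ)) : Quaternion ℝ) = ((r * (r⁻¹ * s) : ℝ) : Quaternion ℝ) by
        rw [← Quaternion.coe_mul_eq_smul, ← Quaternion.coe_mul], mul_inv_cancel_left₀ hr.ne']
    have h' := deriv_comp_mul_left r⁻¹ (fun s : ℝ => Fk k (σ + (s : Quaternion ℝ))) 0
    rw [h, deriv_fun_const_smul_field, h', mul_zero, smul_smul]
    congr 1
    rw [← mul_inv, ← pow_succ]; rfl

lemma Fk_star (k : ℕ) (σ : Quaternion ℝ) : Fk k (star σ) = star (Fk k σ) := by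
  induction k generalizing σ with
  | zero => rw [Fk_zero, Fk_zero, Quaternion.normSq_star, Quaternion.star_smul]
  | succ k ih =>
    rw [Fk_succ]
    show deriv _ 0 = star (deriv _ 0)
    rw [← deriv.star]
    congr 1
    funext s
    rw [← ih, star_add]
    congr 2
    simp

/-- Size estimate `|∂ᵏ(conj σ/|σ|⁴)| ≤ C |σ|^{-(3+k)}`. -/
lemma Fk_size (k : ℕ) : ∃ C : ℝ, 0 < C ∧ ∀ σ : Quaternion ℝ, σ ≠ 0 → ‖Fk k σ‖ ≤ C / ‖σ‖^(3+k) := by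
  obtain ⟨C, hC⟩ := (isCompact_sphere (0 : Quaternion ℝ) 1).exists_bound_of_continuousOn
    ((Fk_contDiffOn k).continuousOn.mono fun x hx => by
      have : ‖x‖ = 1 := by simpa using hx
      intro h0
      rw [Set.mem_singleton_iff.1 h0] at this
      simp at this)
  refine ⟨max C 1, by positivity, fun σ hσ => ?_⟩
  have hn : 0 < ‖σ‖ := norm_pos_iff.2 hσ
  have h1 : σ = ‖σ‖ • (‖σ‖⁻¹ • σ) := by rw [smul_smul, mul_inv_cancel₀ hn.ne', one_smul]
  have h2 := hC (‖σ‖⁻¹ • σ) (by simp [norm_smul, hn.ne'])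
  rw [h1, Fk_smul k hn, norm_smul, ← h1, Real.norm_of_nonneg (by positivity), div_eq_inv_mul]
  gcongr
  exact h2.trans (le_max_left _ _)

/-- Regularity: differences are controlled by one more power of `|σ|`. -/
lemma Fk_lip (k : ℕ) : ∃ C : ℝ, 0 < C ∧ ∀ σ τ : Quaternion ℝ, σ ≠ 0 → ‖τ - σ‖ ≤ ‖σ‖/2 →
    ‖Fk k τ - Fk k σ‖ ≤ C * ‖τ - σ‖ / ‖σ‖^(4+k) := by
  have hK : IsCompact (Metric.closedBall (0 : Quaternion ℝ) (3/2) \ Metric.ball 0 (1/2)) :=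
    (isCompact_closedBall _ _).diff Metric.isOpen_ball
  have hne : ∀ x ∈ Metric.closedBall (0 : Quaternion ℝ) (3/2) \ Metric.ball 0 (1/2), x ≠ 0 := by
    rintro x ⟨-, hx⟩ rfl
    exact hx (by simp)
  obtain ⟨C, hC⟩ := hK.exists_bound_of_continuousOn (f := fderiv ℝ (Fk k))
    (((Fk_contDiffOn k).fderiv_of_isOpen isOpen_compl_zero (m := (⊤ : ℕ∞))
      (by exact le_rfl)).continuousOn.mono hne)
  refine ⟨max C 1, by positivity, ?_⟩
  have key : ∀ σ τ : Quaternion ℝ, ‖σ‖ = 1 → ‖τ - σ‖ ≤ 1/2 →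
      ‖Fk k τ - Fk k σ‖ ≤ max C 1 * ‖τ - σ‖ := by
    intro σ τ hσ hτ
    have hsub : Metric.closedBall σ (1/2) ⊆
        Metric.closedBall (0 : Quaternion ℝ) (3/2) \ Metric.ball 0 (1/2) := by
      intro x hx
      rw [mem_closedBall_iff_norm] at hx
      refine ⟨?_, ?_⟩
      · rw [mem_closedBall_zero_iff]
        have := norm_add_le (x - σ) σ
        rw [sub_add_cancel] at this
        linarith
      · rw [mem_ball_zero_iff, not_lt]
        have := norm_sub_norm_le σ x
        rw [norm_sub_rev] at this
        linarith
    refine (convex_closedBall σ (1/2)).norm_image_sub_le_of_norm_fderiv_le (𝕜 := ℝ)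
      (fun x hx => Fk_differentiableAt k (hne x (hsub hx)))
      (fun x hx => (hC x (hsub hx)).trans (le_max_left _ _)) (by simp) ?_
    rwa [mem_closedBall_iff_norm]
  intro σ τ hσ hτ
  have hn : 0 < ‖σ‖ := norm_pos_iff.2 hσ
  have h1 : ∀ σ' : Quaternion ℝ, σ' = ‖σ‖ • (‖σ‖⁻¹ • σ') := fun σ' => by
    rw [smul_smul, mul_inv_cancel₀ hn.ne', one_smul]
  have e : ‖‖σ‖⁻¹ • τ - ‖σ‖⁻¹ • σ‖ = ‖σ‖⁻¹ * ‖τ - σ‖ := by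
    rw [← smul_sub, norm_smul, Real.norm_of_nonneg (by positivity)]
  have h2 := key (‖σ‖⁻¹ • σ) (‖σ‖⁻¹ • τ) (by simp [norm_smul, hn.ne'])
    (by rw [e, inv_mul_le_iff₀ hn]; linarith)
  rw [e] at h2
  have h3 : Fk k τ - Fk k σ = (‖σ‖^(3+k))⁻¹ • (Fk k (‖σ‖⁻¹ • τ) - Fk k (‖σ‖⁻¹ • σ)) := by
    rw [smul_sub, ← Fk_smul k hn, ← Fk_smul k hn, ← h1, ← h1]
  rw [h3, norm_smul, Real.norm_of_nonneg (by positivity)]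
  calc (‖σ‖^(3+k))⁻¹ * ‖Fk k (‖σ‖⁻¹ • τ) - Fk k (‖σ‖⁻¹ • σ)‖
      ≤ (‖σ‖^(3+k))⁻¹ * (max C 1 * (‖σ‖⁻¹ * ‖τ - σ‖)) := by gcongr
    _ = max C 1 * ‖τ - σ‖ / ‖σ‖^(4+k) := by
        rw [show 4 + k = (3+k)+1 by ring, pow_succ, div_eq_mul_inv, mul_inv]; ring

end GA3
end QHeis

/-! ### Vanishing slice integrals -/

namespace QHeis
section GA4

/-- The quaternion with real part `u` and imaginary part `τ`. -/
def tq (u : ℝ) (τ : Fin 3 → ℝ) : Quaternion ℝ := ⟨u, τ 0, τ 1, τ 2⟩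

/-- The real part of the `j`-th derivative kernel as a function of real and imaginary parts. -/
def fk (j : ℕ) (u : ℝ) (τ : Fin 3 → ℝ) : ℝ := cp 0 (Fk j (tq u τ))

lemma tq_add (u s : ℝ) (τ : Fin 3 → ℝ) : tq u τ + (s : Quaternion ℝ) = tq (u + s) τ := by
  ext
  · exact Quaternion.re_add _ _
  · exact (Quaternion.imI_add _ _).trans (add_zero _)
  · exact (Quaternion.imJ_add _ _).trans (add_zero _)
  · exact (Quaternion.imK_add _ _).trans (add_zero _)

lemma tq_smul (r u : ℝ) (τ : Fin 3 → ℝ) : r • tq u τ = tq (r * u) (r • τ) := rfl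

lemma le_norm_tq (u : ℝ) (τ : Fin 3 → ℝ) : |u| ≤ ‖tq u τ‖ := abs_cp_le 0 (tq u τ)

lemma norm_le_norm_tq (u : ℝ) (τ : Fin 3 → ℝ) : ‖τ‖ ≤ ‖tq u τ‖ := by
  refine (pi_norm_le_iff_of_nonneg (norm_nonneg _)).2 fun i => ?_
  fin_cases i
  · exact abs_cp_le 1 (tq u τ)
  · exact abs_cp_le 2 (tq u τ)
  · exact abs_cp_le 3 (tq u τ)

lemma tq_ne_zero {u : ℝ} (hu : 0 < u) (τ : Fin 3 → ℝ) : tq u τ ≠ 0 := by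
  intro h
  have := le_norm_tq u τ
  rw [h, norm_zero, abs_of_pos hu] at this
  linarith

lemma continuous_tq (u : ℝ) : Continuous (tq u) := by
  have h : tq u = fun τ => Quaternion.linearIsometryEquivTuple.symm
      (WithLp.toLp 2 ![u, τ 0, τ 1, τ 2]) := rfl
  rw [h]
  refine (LinearIsometryEquiv.continuous _).comp ((PiLp.continuous_toLp _ _).comp ?_)
  refine continuous_pi fun i => ?_
  fin_cases i <;> simp <;> fun_prop

lemma continuous_fk (j : ℕ) {u : ℝ} (hu : 0 < u) : Continuous (fk j u) := by
  refine (cp 0).continuous.comp ?_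
  exact (Fk_contDiffOn j).continuousOn.comp_continuous (continuous_tq u) fun τ => tq_ne_zero hu τ

lemma integrable_jap : Integrable (fun τ : Fin 3 → ℝ => ((1 + ‖τ‖)^4)⁻¹) := by
  have := integrable_one_add_norm (μ := (volume : Measure (Fin 3 → ℝ))) (r := 4)
    (by rw [Module.finrank_fin_fun]; norm_num)
  refine this.congr (Eventually.of_forall fun τ => ?_)
  simp only
  rw [Real.rpow_neg (by positivity)]
  congr 1
  exact_mod_cast Real.rpow_natCast _ 4

lemma norm_tq_ge {u u0 : ℝ} (hu0 : 0 < u0) (hu : u0 ≤ u) (τ : Fin 3 → ℝ) :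
    min u0 1 / 2 * (1 + ‖τ‖) ≤ ‖tq u τ‖ := by
  have h1 := le_norm_tq u τ
  rw [abs_of_pos (hu0.trans_le hu)] at h1
  have h2 := norm_le_norm_tq u τ
  have h3 : min u0 1 ≤ u0 := min_le_left _ _
  have h4 : min u0 1 ≤ 1 := min_le_right _ _
  have h5 : 0 ≤ ‖τ‖ := norm_nonneg _
  nlinarith

lemma fk_bound (j : ℕ) (hj : 1 ≤ j) {u0 : ℝ} (hu0 : 0 < u0) :
    ∃ C : ℝ, ∀ u, u0 ≤ u → ∀ τ, ‖fk j u τ‖ ≤ C * ((1 + ‖τ‖)^4)⁻¹ := by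
  obtain ⟨C, hC, h⟩ := Fk_size j
  refine ⟨C / (min u0 1 / 2)^(3+j), fun u hu τ => ?_⟩
  have hm : 0 < min u0 1 / 2 := by positivity
  have h5 : 0 ≤ ‖τ‖ := norm_nonneg _
  calc ‖fk j u τ‖ ≤ ‖Fk j (tq u τ)‖ := abs_cp_le 0 _
    _ ≤ C / ‖tq u τ‖^(3+j) := h _ (tq_ne_zero (hu0.trans_le hu) τ)
    _ ≤ C / (min u0 1 / 2 * (1 + ‖τ‖))^(3+j) := by
        gcongr
        exact norm_tq_ge hu0 hu τ
    _ ≤ C / ((min u0 1 / 2)^(3+j) * (1+‖τ‖)^4) := by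
        rw [mul_pow]
        gcongr
        · linarith
        · omega
    _ = _ := by rw [div_mul_eq_div_mul_one_div, one_div]

lemma fk_zero_eq (u : ℝ) (τ : Fin 3 → ℝ) : fk 0 u τ = u / ‖tq u τ‖^4 := by
  rw [fk, Fk_zero, map_smul, Quaternion.normSq_eq_norm_mul_self]
  have : cp 0 (star (tq u τ)) = u := Quaternion.re_star _
  rw [this, smul_eq_mul, div_eq_inv_mul]
  ring

lemma fk_zero_integrable {u : ℝ} (hu : 0 < u) : Integrable (fk 0 u) := by
  refine (integrable_jap.const_mul (u / (min u 1 / 2)^4)).mono'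
    (continuous_fk 0 hu).aestronglyMeasurable (Eventually.of_forall fun τ => ?_)
  have hm : 0 < min u 1 / 2 := by positivity
  have h5 : 0 ≤ ‖τ‖ := norm_nonneg _
  rw [fk_zero_eq, Real.norm_of_nonneg (by positivity)]
  calc u / ‖tq u τ‖^4 ≤ u / (min u 1 / 2 * (1 + ‖τ‖))^4 := by
        gcongr
        exact norm_tq_ge hu le_rfl τ
    _ = _ := by rw [mul_pow, div_mul_eq_div_mul_one_div, one_div]

lemma fk_hasDerivAt (j : ℕ) {u : ℝ} (hu : 0 < u) (τ : Fin 3 → ℝ) :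
    HasDerivAt (fun u => fk j u τ) (fk (j+1) u τ) u := by
  have e : ∀ u : ℝ, tq 0 τ + (u : Quaternion ℝ) = tq u τ := fun u => by rw [tq_add, zero_add]
  have h := Fk_hasDerivAt j (σ := tq 0 τ) (u := u) (by rw [e]; exact tq_ne_zero hu τ)
  simp only [e] at h
  exact (cp 0).hasFDerivAt.comp_hasDerivAt u h

/-- Differentiation under the integral sign over the slices. -/
lemma fk_step (j : ℕ) (hj : ∀ u, 0 < u → Integrable (fk j u)) {u : ℝ} (hu : 0 < u) :
    Integrable (fk (j+1) u) ∧ HasDerivAt (fun u => ∫ τ, fk j u τ) (∫ τ, fk (j+1) u τ) u := by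
  obtain ⟨C, hC⟩ := fk_bound (j+1) (by omega) (half_pos hu)
  refine hasDerivAt_integral_of_dominated_loc_of_deriv_le (s := Set.Ioi (u/2))
    (bound := fun τ => C * ((1 + ‖τ‖)^4)⁻¹) (Ioi_mem_nhds (by linarith)) ?_ (hj u hu)
    (continuous_fk _ hu).aestronglyMeasurable
    (Eventually.of_forall fun τ v hv => hC v (le_of_lt hv) τ)
    (integrable_jap.const_mul C)
    (Eventually.of_forall fun τ v hv => fk_hasDerivAt j ((half_pos hu).trans hv) τ)
  filter_upwards [Ioi_mem_nhds hu] with v hv using (continuous_fk j hv).aestronglyMeasurable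

/-- The slice integrals of `fk 0` are independent of `u`, by homogeneity of degree `-3` in dimension `3`. -/
lemma fk_zero_const {u : ℝ} (hu : 0 < u) : ∫ τ, fk 0 u τ = ∫ τ, fk 0 1 τ := by
  have h := Measure.integral_comp_smul (volume : Measure (Fin 3 → ℝ)) (fk 0 u) u
  have e : ∀ τ, fk 0 u (u • τ) = (u^3)⁻¹ * fk 0 1 τ := fun τ => by
    have : tq u (u • τ) = u • tq 1 τ := by rw [tq_smul, mul_one]
    rw [fk, this, Fk_smul 0 hu, map_smul]; rfl
  simp only [e] at h
  rw [integral_const_mul, Module.finrank_fin_fun, abs_of_pos (by positivity), smul_eq_mul] at h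
  exact (mul_left_cancel₀ (by positivity) h).symm

/-- The real parts of all derivatives of positive order have vanishing integral over each affine
space `{u + t : t ∈ Im ℍ}`, `u > 0`: for `j = 0` the integral is finite and, by homogeneity,
independent of `u`. -/
lemma fk_integral (j : ℕ) {u : ℝ} (hu : 0 < u) :
    Integrable (fk (j+1) u) ∧ ∫ τ, fk (j+1) u τ = 0 := by
  have hint : ∀ j, ∀ u, 0 < u → Integrable (fk j u) := by
    intro j
    induction j with
    | zero => exact fun u hu => fk_zero_integrable hu
    | succ j ih => exact fun u hu => (fk_step j ih hu).1
  refine ⟨hint _ u hu, ?_⟩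
  have hconst : ∀ c : ℝ, (∀ u, 0 < u → ∫ τ, fk j u τ = c) → ∫ τ, fk (j+1) u τ = 0 := by
    intro c hc
    have h1 := (fk_step j (hint j) hu).2
    refine h1.unique ((hasDerivAt_const u c).congr_of_eventuallyEq ?_)
    filter_upwards [Ioi_mem_nhds hu] with v hv using hc v hv
  induction j generalizing u with
  | zero => exact hconst _ fun u hu => fk_zero_const hu
  | succ j ih =>
    refine hconst 0 fun v hv => ih hv fun c hc => ?_
    have h1 := (fk_step j (hint j) hv).2
    refine h1.unique ((hasDerivAt_const v c).congr_of_eventuallyEq ?_)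
    filter_upwards [Ioi_mem_nhds hv] with v hv using hc v hv

end GA4
end QHeis

/-! ### Cancellation of the Cauchy–Szegő kernel -/

namespace QHeis
section GA5

variable {n : ℕ}

lemma toQ_eq_tq (g : G n) : toQ g = tq (∑ i, (g.2 i)^2) g.1 := rfl

lemma toQ_ne_zero {g : G n} (hg : g ≠ 0) : toQ g ≠ 0 := by
  intro h
  have h1 := norm_toQ g
  rw [h, norm_zero] at h1
  exact hg (eq_zero_of_hnorm (pow_eq_zero_iff two_ne_zero |>.1 h1.symm))

/-- The `i`-th coordinate of `∂ᵏ(conj σ/|σ|⁴)` at `σ = |y|² + t`. -/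
def kc (m : ℕ) (i : Fin 4) (g : G n) : ℝ := cp i (Fk m (toQ g))

lemma measurable_kc (m : ℕ) (i : Fin 4) : Measurable (kc m i : G n → ℝ) := by
  refine measurable_of_continuousOn_compl_singleton 0 ?_
  refine (cp i).continuous.comp_continuousOn ?_
  exact (Fk_contDiffOn m).continuousOn.comp continuous_toQ.continuousOn fun g hg => toQ_ne_zero hg

/-- The imaginary parts of the kernel are odd in `t`. -/
lemma cancel_im (m : ℕ) {i : Fin 4} (hi : i ≠ 0) (ψ : ℝ → ℝ) :
    ∫ g : G n, ψ (hnorm g) * kc m i g = 0 := by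
  have hmp : MeasurePreserving (Prod.map Neg.neg id : G n → G n) volume volume :=
    (Measure.measurePreserving_neg (volume : Measure (Fin 3 → ℝ))).prod
      (MeasurePreserving.id (volume : Measure (Fin (4*(n-1)) → ℝ)))
  have hme : MeasurableEmbedding (Prod.map Neg.neg id : G n → G n) :=
    ((MeasurableEquiv.neg (Fin 3 → ℝ)).prodCongr
      (MeasurableEquiv.refl (Fin (4*(n-1)) → ℝ))).measurableEmbedding
  have h := hmp.integral_comp hme (fun g : G n => ψ (hnorm g) * kc m i g)
  have e : ∀ g : G n, ψ (hnorm (Prod.map Neg.neg id g : G n)) * kc m i (Prod.map Neg.neg id g : G n)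
      = -(ψ (hnorm g) * kc m i g) := by
    intro g
    have h1 : hnorm (Prod.map Neg.neg id g : G n) = hnorm g := by simp [hnorm]
    have h2 : toQ (Prod.map Neg.neg id g : G n) = star (toQ g) := by
      ext
      · exact (Quaternion.re_star (toQ g)).symm
      · exact (Quaternion.imI_star (toQ g)).symm
      · exact (Quaternion.imJ_star (toQ g)).symm
      · exact (Quaternion.imK_star (toQ g)).symm
    rw [h1, kc, h2, Fk_star, cp_star hi, kc]; ring
  simp only [e] at h
  rw [integral_neg] at h
  linarith

/-- The Euclidean length of a horizontal vector. -/
def el (y : Fin (4*(n-1)) → ℝ) : ℝ := Real.sqrt (∑ i, (y i)^2)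

lemma el_sq (y : Fin (4*(n-1)) → ℝ) : el y ^ 2 = ∑ i, (y i)^2 :=
  Real.sq_sqrt (by positivity)

lemma el_nonneg (y : Fin (4*(n-1)) → ℝ) : 0 ≤ el y := Real.sqrt_nonneg _

lemma el_smul {r : ℝ} (hr : 0 ≤ r) (y : Fin (4*(n-1)) → ℝ) : el (r • y) = r * el y := by
  have : ∑ i, ((r • y) i)^2 = r^2 * ∑ i, (y i)^2 := by
    rw [Finset.mul_sum]
    exact Finset.sum_congr rfl fun i _ => by simp [mul_pow]
  rw [el, this, Real.sqrt_mul (by positivity), Real.sqrt_sq hr, el]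

lemma continuous_el : Continuous (el : (Fin (4*(n-1)) → ℝ) → ℝ) := by
  unfold el; fun_prop

lemma norm_le_el (y : Fin (4*(n-1)) → ℝ) : ‖y‖ ≤ el y := by
  refine (pi_norm_le_iff_of_nonneg (el_nonneg _)).2 fun i => ?_
  refine abs_le_of_sq_le_sq ?_ (el_nonneg _)
  rw [el_sq]
  exact Finset.single_le_sum (f := fun i => (y i)^2) (fun i _ => sq_nonneg _) (Finset.mem_univ i)

lemma el_pos {y : Fin (4*(n-1)) → ℝ} (hy : y ≠ 0) : 0 < el y :=
  (norm_pos_iff.2 hy).trans_le (norm_le_el y)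

lemma hnorm_slice (y : Fin (4*(n-1)) → ℝ) (τ : Fin 3 → ℝ) :
    hnorm (((el y)^2 • τ, y) : G n) = el y * Real.sqrt ‖tq 1 τ‖ := by
  refine (sq_eq_sq₀ (hnorm_nonneg _) (mul_nonneg (el_nonneg y) (Real.sqrt_nonneg _))).1 ?_
  have : toQ (((el y)^2 • τ, y) : G n) = (el y)^2 • tq 1 τ := by
    rw [tq_smul, mul_one, toQ_eq_tq, el_sq]
  rw [← norm_toQ, this, norm_smul, mul_pow, Real.sq_sqrt (norm_nonneg _),
    Real.norm_of_nonneg (by positivity)]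

lemma kc_slice (m : ℕ) {y : Fin (4*(n-1)) → ℝ} (hy : y ≠ 0) (τ : Fin 3 → ℝ) :
    kc m 0 (((el y)^2 • τ, y) : G n) = (((el y)^2)^(3+m))⁻¹ * fk m 1 τ := by
  have : toQ (((el y)^2 • τ, y) : G n) = (el y)^2 • tq 1 τ := by
    rw [tq_smul, mul_one, toQ_eq_tq, el_sq]
  rw [kc, this, Fk_smul m (by have := el_pos hy; positivity), map_smul]; rfl

/-- In the coordinates `t = |y|² τ` the real part of the kernel times a radial cut-off separates:
the `y`-integral does not depend on `τ`, and the `τ`-integral vanishes. -/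
lemma cancel_re (hn : 2 ≤ n) {ψ : ℝ → ℝ} (hψ : Measurable ψ) {M a b : ℝ} (hM : ∀ s, |ψ s| ≤ M)
    (ha : 0 < a) (hψa : ∀ s, s ≤ a → ψ s = 0) (hψb : ∀ s, b ≤ s → ψ s = 0) :
    ∫ g : G n, ψ (hnorm g) * kc (2*(n-1)) 0 g = 0 := by
  by_cases hI : Integrable (fun g : G n => ψ (hnorm g) * kc (2*(n-1)) 0 g)
  swap
  -- the integral of a non-integrable function is `0` by convention
  · exact integral_undef hI
  obtain ⟨m, hm⟩ : ∃ m, 2*(n-1) = m + 1 := ⟨2*(n-1)-1, by omega⟩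
  set d := 4*(n-1) with hd
  have hdm : d = 2*(m+1) := by omega
  obtain ⟨hfi, hf0⟩ := fk_integral m (u := 1) one_pos
  have hM0 : 0 ≤ M := (abs_nonneg _).trans (hM 0)
  -- the radial profile whose dilates give the inner integral
  set h : (Fin d → ℝ) → ℝ := fun y => (el y ^ d)⁻¹ * ψ (el y) with hh
  have hmh : Measurable h :=
    ((continuous_el.measurable.pow_const d).inv).mul (hψ.comp continuous_el.measurable)
  have hhi : Integrable h := by
    have h1 : IntegrableOn h (Metric.closedBall 0 b) := by
      refine Measure.integrableOn_of_bounded (M := (a^d)⁻¹ * M)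
        (isCompact_closedBall _ _).measure_lt_top.ne hmh.aestronglyMeasurable
        (Eventually.of_forall fun y => ?_)
      rcases le_or_gt (el y) a with hy | hy
      · rw [hh]; simp only [hψa _ hy, mul_zero, norm_zero]; positivity
      · rw [hh]; simp only [norm_mul, norm_inv, norm_pow]
        rw [Real.norm_of_nonneg (el_nonneg y)]
        have := hM (el y)
        rw [Real.norm_eq_abs]
        gcongr
    refine (integrableOn_iff_integrable_of_support_subset ?_).1 h1
    intro y hy
    rw [mem_closedBall_zero_iff]
    by_contra hc
    push Not at hc
    refine hy ?_
    rw [hh]; simp only [hψb _ (hc.le.trans (norm_le_el y)), mul_zero]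
  -- on the slice `t = |y|² τ` the gauge of `(t, y)` is `|y| λ(τ)`
  set lam : (Fin 3 → ℝ) → ℝ := fun τ => Real.sqrt ‖tq 1 τ‖ with hlam
  have hlpos : ∀ τ, 0 < lam τ := fun τ =>
    Real.sqrt_pos.2 (norm_pos_iff.2 (tq_ne_zero one_pos τ))
  have hlc : Continuous lam := ((continuous_tq 1).norm).sqrt
  set H : (Fin d → ℝ) → (Fin 3 → ℝ) → ℝ := fun y τ =>
    (el y ^ d)⁻¹ * ψ (el y * lam τ) * fk (m+1) 1 τ with hH
  have hHh : ∀ y τ, H y τ = (lam τ)^d * fk (m+1) 1 τ * h (lam τ • y) := by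
    intro y τ
    have h1 := (hlpos τ).ne'
    rw [hH, hh]
    simp only
    rw [el_smul (hlpos τ).le, mul_pow, mul_inv, mul_comm (el y) (lam τ)]
    field_simp
  have hHi : ∀ τ, Integrable (fun y => H y τ) := by
    intro τ
    simp only [hHh]
    exact ((integrable_comp_smul_iff volume h (hlpos τ).ne').2 hhi).const_mul _
  -- rescaling `y` by `λ(τ)` decouples the cutoff from `τ`
  have hscale : ∀ (q : (Fin d → ℝ) → ℝ) τ, (lam τ)^d * ∫ y, q (lam τ • y) = ∫ y, q y := by
    intro q τ
    have h1 := hlpos τ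
    rw [Measure.integral_comp_smul, Module.finrank_fin_fun, abs_of_pos (by positivity), smul_eq_mul,
      ← mul_assoc, mul_inv_cancel₀ (by positivity), one_mul]
  have hHm : Measurable (Function.uncurry H) := by
    have h1 : Measurable fun p : (Fin d → ℝ) × (Fin 3 → ℝ) => el p.1 :=
      continuous_el.measurable.comp measurable_fst
    have h2 : Measurable fun p : (Fin d → ℝ) × (Fin 3 → ℝ) => lam p.2 :=
      hlc.measurable.comp measurable_snd
    have h3 : Measurable fun p : (Fin d → ℝ) × (Fin 3 → ℝ) => fk (m+1) 1 p.2 :=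
      (continuous_fk (m+1) one_pos).measurable.comp measurable_snd
    exact ((h1.pow_const d).inv.mul (hψ.comp (h1.mul h2))).mul h3
  have hHint : Integrable (Function.uncurry H)
      ((volume : Measure (Fin d → ℝ)).prod (volume : Measure (Fin 3 → ℝ))) := by
    refine (integrable_prod_iff' hHm.aestronglyMeasurable).2 ⟨Eventually.of_forall hHi, ?_⟩
    have e : ∀ τ, ∫ y, ‖Function.uncurry H (y, τ)‖ = ‖fk (m+1) 1 τ‖ * ∫ y, ‖h y‖ := by
      intro τ
      have e1 : ∀ y, ‖Function.uncurry H (y, τ)‖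
          = ‖fk (m+1) 1 τ‖ * (lam τ ^ d * ‖h (lam τ • y)‖) := by
        intro y
        rw [Function.uncurry_apply_pair, hHh, norm_mul, norm_mul, norm_pow,
          Real.norm_of_nonneg (hlpos τ).le]
        ring
      simp only [e1]
      rw [integral_const_mul, integral_const_mul, hscale (fun y => ‖h y‖)]
    simp only [e]
    exact hfi.norm.mul_const _
  have hslice : ∀ y : Fin d → ℝ, y ≠ 0 →
      ∫ t : Fin 3 → ℝ, ψ (hnorm ((t, y) : G n)) * kc (2*(n-1)) 0 ((t, y) : G n) = ∫ τ, H y τ := by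
    intro y hy
    have hy0 : 0 < el y := el_pos hy
    have h1 := Measure.integral_comp_smul (volume : Measure (Fin 3 → ℝ))
      (fun t => ψ (hnorm ((t, y) : G n)) * kc (2*(n-1)) 0 ((t, y) : G n)) (el y ^ 2)
    rw [Module.finrank_fin_fun, abs_of_pos (by positivity), smul_eq_mul] at h1
    have e : ∀ τ, ψ (hnorm ((el y ^ 2 • τ, y) : G n)) * kc (2*(n-1)) 0 ((el y ^ 2 • τ, y) : G n)
        = ((el y ^ 2)^3)⁻¹ * H y τ := by
      intro τ
      rw [hnorm_slice, kc_slice _ hy, hH, hm]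
      simp only
      rw [hdm, pow_add, pow_mul (el y) 2 (m+1), mul_inv]
      ring
    simp only [e] at h1
    rw [integral_const_mul] at h1
    exact (mul_left_cancel₀ (by positivity) h1).symm
  have hne : ∀ᵐ y : Fin d → ℝ, y ≠ 0 := by
    have : Nonempty (Fin d) := ⟨⟨0, by omega⟩⟩
    exact Measure.ae_ne volume 0
  have h0 : ∫ g : G n, ψ (hnorm g) * kc (2*(n-1)) 0 g
      = ∫ y : Fin d → ℝ, ∫ t : Fin 3 → ℝ,
          ψ (hnorm ((t, y) : G n)) * kc (2*(n-1)) 0 ((t, y) : G n) :=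
    integral_prod_symm _ hI
  rw [h0, integral_congr_ae (hne.mono hslice), integral_integral_swap hHint]
  have e : ∀ τ, ∫ y, H y τ = fk (m+1) 1 τ * ∫ y, h y := by
    intro τ
    simp only [hHh]
    rw [integral_const_mul, ← hscale h τ]; ring
  simp only [e]
  rw [integral_mul_const, hf0, zero_mul]

/-- Cancellation of the kernel against radial cut-offs supported in an annulus. -/
lemma cancel (hn : 2 ≤ n) (i : Fin 4) {ψ : ℝ → ℝ} (hψ : Measurable ψ) {M a b : ℝ}
    (hM : ∀ s, |ψ s| ≤ M) (ha : 0 < a) (hψa : ∀ s, s ≤ a → ψ s = 0)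
    (hψb : ∀ s, b ≤ s → ψ s = 0) :
    ∫ g : G n, ψ (hnorm g) * kc (2*(n-1)) i g = 0 := by
  by_cases hi : i = 0
  · subst hi; exact cancel_re hn hψ hM ha hψa hψb
  · exact cancel_im _ hi ψ

end GA5
end QHeis

/-! ### Size and smoothness of the truncated kernel -/

namespace QHeis
section GA6

variable {n : ℕ}

lemma cutoff_lipschitz {φ : ℝ → ℝ} (hφs : ContDiff ℝ (⊤ : ℕ∞) φ)
    (hφ0 : ∀ t : ℝ, t ≤ 1/2 → φ t = 0) (hφ1 : ∀ t : ℝ, 1 ≤ t → φ t = 1) :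
    ∃ L, 0 ≤ L ∧ ∀ s t, |φ s - φ t| ≤ L * |s - t| := by
  have hd : Differentiable ℝ φ := hφs.differentiable (by simp)
  have hc : Continuous (deriv φ) := hφs.continuous_deriv (by simp)
  obtain ⟨L, hL⟩ := (isCompact_Icc (a := (0:ℝ)) (b := 2)).exists_bound_of_continuousOn
    hc.continuousOn
  have hL0 : 0 ≤ L := (norm_nonneg _).trans (hL 0 (by simp))
  refine ⟨L, hL0, fun s t => ?_⟩
  have hb : ∀ x, ‖deriv φ x‖ ≤ L := by
    intro x
    rcases lt_or_ge x 0 with h0 | h0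
    · have : φ =ᶠ[𝓝 x] fun _ => (0:ℝ) :=
        mem_of_superset (Iio_mem_nhds h0) fun y hy => hφ0 y (by have : y < 0 := hy; linarith)
      rw [this.deriv_eq]; simpa using hL0
    rcases lt_or_ge 2 x with h2 | h2
    · have : φ =ᶠ[𝓝 x] fun _ => (1:ℝ) :=
        mem_of_superset (Ioi_mem_nhds h2) fun y hy => hφ1 y (by have : 2 < y := hy; linarith)
      rw [this.deriv_eq]; simpa using hL0
    · exact hL x ⟨h0, h2⟩
  have := convex_univ.norm_image_sub_le_of_norm_deriv_le (f := φ) (x := t) (y := s)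
    (fun x _ => hd x) (fun x _ => hb x) (Set.mem_univ _) (Set.mem_univ _)
  simpa [Real.norm_eq_abs] using this

lemma hnorm_pos {g : G n} (hg : g ≠ 0) : 0 < hnorm g :=
  lt_of_le_of_ne (hnorm_nonneg g) fun h => hg (eq_zero_of_hnorm h.symm)

lemma kc_size (m : ℕ) : ∃ C, 0 < C ∧ ∀ (i : Fin 4) (g : G n), g ≠ 0 →
    |kc m i g| ≤ C / hnorm g ^ (2*(3+m)) := by
  obtain ⟨C, hC, h⟩ := Fk_size m
  refine ⟨C, hC, fun i g hg => ?_⟩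
  have := (abs_cp_le i _).trans (h (toQ g) (toQ_ne_zero hg))
  rwa [norm_toQ, ← pow_mul] at this

lemma kc_lip (m : ℕ) : ∃ C, 0 < C ∧ ∀ (i : Fin 4) (g g' : G n) (d : ℝ), g ≠ 0 → 0 ≤ d →
    6*d ≤ hnorm g → ‖toQ g' - toQ g‖ ≤ d^2 + 2*(d*hnorm g) →
    |kc m i g - kc m i g'| ≤ C * d / hnorm g ^ (2*(3+m)+1) := by
  obtain ⟨C, hC, h⟩ := Fk_lip m
  refine ⟨3*C, by positivity, fun i g g' d hg hd0 hd hq => ?_⟩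
  have hN := hnorm_pos hg
  have h1 : ‖toQ g' - toQ g‖ ≤ 3 * (d * hnorm g) := by nlinarith
  have h2 : ‖toQ g' - toQ g‖ ≤ ‖toQ g‖ / 2 := by
    rw [norm_toQ]
    have : d^2 + 2*(d*hnorm g) ≤ hnorm g^2/2 := by nlinarith
    linarith
  have h3 := h (toQ g) (toQ g') (toQ_ne_zero hg) h2
  have h4 : |kc m i g - kc m i g'| ≤ ‖Fk m (toQ g') - Fk m (toQ g)‖ := by
    rw [abs_sub_comm, kc, kc, ← map_sub]; exact abs_cp_le i _
  refine (h4.trans h3).trans ?_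
  rw [norm_toQ, ← pow_mul]
  calc C * ‖toQ g' - toQ g‖ / hnorm g ^ (2*(4+m))
      ≤ C * (3 * (d * hnorm g)) / hnorm g ^ (2*(4+m)) := by gcongr
    _ = 3 * C * d / hnorm g ^ (2*(3+m)+1) := by
        rw [show 2*(4+m) = (2*(3+m)+1)+1 by ring, pow_succ _ (2*(3+m)+1)]
        field_simp

lemma trunc_size {φ : ℝ → ℝ} (hφ0 : ∀ t : ℝ, t ≤ 1/2 → φ t = 0)
    (hφr : ∀ t : ℝ, 0 ≤ φ t ∧ φ t ≤ 1) {k : G n → ℝ} {Q : ℕ} {C : ℝ} (hC : 0 < C)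
    (hk : ∀ g, g ≠ 0 → |k g| ≤ C / hnorm g ^ Q) {η : ℝ} (hη : 0 < η) (g : G n) :
    |φ (hnorm g / η) * k g| ≤ C * 2^Q / max η (hnorm g) ^ Q := by
  have hM : 0 < max η (hnorm g) := lt_max_of_lt_left hη
  rcases le_or_gt (hnorm g / η) (1/2) with h | h
  · rw [hφ0 _ h, zero_mul, abs_zero]; positivity
  have h1 : η < 2 * hnorm g := by
    rw [lt_div_iff₀ hη] at h; linarith
  have hN : 0 < hnorm g := by linarith
  have hg : g ≠ 0 := by rintro rfl; rw [hnorm_zero] at hN; exact lt_irrefl _ hN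
  have hM2 : max η (hnorm g) ≤ 2 * hnorm g := max_le h1.le (by linarith)
  rw [abs_mul, abs_of_nonneg (hφr _).1]
  calc φ (hnorm g / η) * |k g| ≤ 1 * (C / hnorm g ^ Q) :=
        mul_le_mul (hφr _).2 (hk g hg) (abs_nonneg _) zero_le_one
    _ = C * 2^Q / (2 * hnorm g) ^ Q := by rw [mul_pow]; field_simp
    _ ≤ _ := by gcongr

/-- The smoothly truncated kernel satisfies the Lipschitz estimate uniformly in the
truncation parameter. -/
lemma trunc_lip {φ : ℝ → ℝ} (hφ0 : ∀ t : ℝ, t ≤ 1/2 → φ t = 0) (hφ1 : ∀ t : ℝ, 1 ≤ t → φ t = 1)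
    (hφr : ∀ t : ℝ, 0 ≤ φ t ∧ φ t ≤ 1) {L : ℝ} (hL : 0 ≤ L)
    (hφL : ∀ s t, |φ s - φ t| ≤ L * |s - t|)
    {k : G n → ℝ} {Q : ℕ} {C C1 : ℝ} (hC : 0 < C) (hC1 : 0 < C1)
    (hk : ∀ g, g ≠ 0 → |k g| ≤ C / hnorm g ^ Q)
    (hk1 : ∀ (g g' : G n) (d : ℝ), g ≠ 0 → 0 ≤ d →
      6*d ≤ hnorm g → ‖toQ g' - toQ g‖ ≤ d^2 + 2*(d*hnorm g) →
      |k g - k g'| ≤ C1 * d / hnorm g ^ (Q+1)) {η : ℝ} (hη : 0 < η) {g g' : G n} {d : ℝ} (hd0 : 0 ≤ d)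
    (hN : |hnorm g' - hnorm g| ≤ d) (hq : ‖toQ g' - toQ g‖ ≤ d^2 + 2*(d*hnorm g))
    (hd : 6*d ≤ max η (hnorm g)) :
    |φ (hnorm g / η) * k g - φ (hnorm g' / η) * k g'|
      ≤ (3^(Q+1) * (C1 + 2*L*C*2^Q) + 36*(C*2^Q)) * d / max η (hnorm g) ^ (Q+1) := by
  have hM : 0 < max η (hnorm g) := lt_max_of_lt_left hη
  obtain ⟨hN1, hN2⟩ := abs_le.1 hN
  have hg0 := hnorm_nonneg g
  have hg0' := hnorm_nonneg g'
  have hzero : hnorm g ≤ η/2 → hnorm g' ≤ η/2 →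
      |φ (hnorm g / η) * k g - φ (hnorm g' / η) * k g'|
      ≤ (3^(Q+1) * (C1 + 2*L*C*2^Q) + 36*(C*2^Q)) * d / max η (hnorm g) ^ (Q+1) := by
    intro h h'
    rw [hφ0 _ (by rw [div_le_iff₀ hη]; linarith), hφ0 _ (by rw [div_le_iff₀ hη]; linarith)]
    simp only [zero_mul, sub_zero, abs_zero]; positivity
  rcases le_or_gt (6*d) (hnorm g) with hc | hc
  · rcases lt_or_ge (hnorm g) (3*η/7) with ha | ha
    · exact hzero (by linarith) (by linarith)
    have hgp : 0 < hnorm g := by linarith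
    have hg : g ≠ 0 := by rintro rfl; rw [hnorm_zero] at hgp; exact lt_irrefl _ hgp
    have hgp' : 0 < hnorm g' := by linarith
    have hg' : g' ≠ 0 := by rintro rfl; rw [hnorm_zero] at hgp'; exact lt_irrefl _ hgp'
    have hM3 : max η (hnorm g) ≤ 3 * hnorm g := max_le (by linarith) (by linarith)
    have e1 : |φ (hnorm g / η) * (k g - k g')| ≤ C1 * d / hnorm g ^ (Q+1) := by
      rw [abs_mul, abs_of_nonneg (hφr _).1]
      calc _ ≤ 1 * (C1 * d / hnorm g ^ (Q+1)) :=
            mul_le_mul (hφr _).2 (hk1 g g' d hg hd0 hc hq) (abs_nonneg _) zero_le_one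
        _ = _ := one_mul _
    have e2 : |φ (hnorm g / η) - φ (hnorm g' / η)| ≤ 2*L*d/hnorm g := by
      rcases le_or_gt η (hnorm g / 2) with h | h
      · rw [hφ1 _ (by rw [le_div_iff₀ hη]; linarith), hφ1 _ (by rw [le_div_iff₀ hη]; linarith)]
        simp only [sub_self, abs_zero]; positivity
      · refine (hφL _ _).trans ?_
        rw [← _root_.sub_div, abs_div, abs_of_pos hη, abs_sub_comm]
        calc L * (|hnorm g' - hnorm g| / η) ≤ L * (d / (hnorm g/2)) := by gcongr
          _ = _ := by field_simp
    have e3 : |k g'| ≤ C * 2^Q / hnorm g ^ Q := by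
      refine (hk g' hg').trans ?_
      calc C / hnorm g' ^ Q = C * 2^Q / (2 * hnorm g') ^ Q := by rw [mul_pow]; field_simp
        _ ≤ _ := by gcongr; linarith
    have e4 : φ (hnorm g / η) * k g - φ (hnorm g' / η) * k g'
        = φ (hnorm g / η) * (k g - k g') + (φ (hnorm g / η) - φ (hnorm g' / η)) * k g' := by ring
    rw [e4]
    calc _ ≤ |φ (hnorm g / η) * (k g - k g')| + |(φ (hnorm g / η) - φ (hnorm g' / η)) * k g'| :=
          abs_add_le _ _
      _ ≤ C1 * d / hnorm g ^ (Q+1) + 2*L*d/hnorm g * (C * 2^Q / hnorm g ^ Q) := by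
          refine add_le_add e1 ?_
          rw [abs_mul]
          exact mul_le_mul e2 e3 (abs_nonneg _) (by positivity)
      _ = (C1 + 2*L*C*2^Q) * d / hnorm g ^ (Q+1) := by rw [pow_succ]; field_simp
      _ = 3^(Q+1) * (C1 + 2*L*C*2^Q) * d / (3 * hnorm g) ^ (Q+1) := by rw [mul_pow]; field_simp
      _ ≤ 3^(Q+1) * (C1 + 2*L*C*2^Q) * d / max η (hnorm g) ^ (Q+1) := by gcongr
      _ ≤ _ := by
          gcongr
          linarith [show 0 ≤ 36*(C*2^Q) by positivity]
  · have hη1 : hnorm g < η := by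
      by_contra h
      rw [max_eq_right (not_lt.1 h)] at hd
      linarith
    rw [max_eq_left hη1.le] at hd hzero ⊢
    rcases le_or_gt d (η/18) with h | h
    · exact hzero (by linarith) (by linarith)
    have s1 := trunc_size hφ0 hφr hC hk hη g
    have s2 := trunc_size hφ0 hφr hC hk hη g'
    have s1' : C * 2^Q / max η (hnorm g) ^ Q ≤ C * 2^Q / η ^ Q := by
      gcongr; exact le_max_left _ _
    have s2' : C * 2^Q / max η (hnorm g') ^ Q ≤ C * 2^Q / η ^ Q := by
      gcongr; exact le_max_left _ _
    calc _ ≤ |φ (hnorm g / η) * k g| + |φ (hnorm g' / η) * k g'| := abs_sub _ _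
      _ ≤ 2 * (C*2^Q) * η / η^(Q+1) := by
          have : 2 * (C*2^Q) * η / η^(Q+1) = C * 2^Q / η ^ Q + C * 2^Q / η ^ Q := by
            rw [pow_succ]; field_simp; ring
          linarith
      _ ≤ 2 * (C*2^Q) * (18 * d) / η^(Q+1) := by gcongr; linarith
      _ = 36 * (C*2^Q) * d / η^(Q+1) := by ring
      _ ≤ _ := by
          gcongr
          linarith [show 0 ≤ 3^(Q+1) * (C1 + 2*L*C*2^Q) by positivity]

end GA6
end QHeis

/-! ### The truncated kernel is a Calderón–Zygmund family -/

namespace QHeis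
section GA7

variable {n : ℕ}

lemma abs_rho_sub (x x' y : G n) : |rho x' y - rho x y| ≤ rho x x' := by
  have h1 := rho_triangle x' x y
  have h2 := rho_triangle x x' y
  rw [rho_comm x' x] at h1
  exact abs_le.2 ⟨by linarith, by linarith⟩

lemma abs_rho_sub' (x y y' : G n) : |rho x y' - rho x y| ≤ rho y y' := by
  rw [rho_comm x y', rho_comm x y]
  exact abs_rho_sub y y' x

lemma inv_mul_chain (x x' y : G n) :
    mul (inv y) x' = mul (mul (inv y) x) (mul (inv x) x') := by
  rw [mul_assoc', mul_inv_cancel']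

/-- The `i`-th coordinate of the truncated Cauchy–Szegő kernel `K_η(x, y)`. -/
def kη (c : ℝ) (φ : ℝ → ℝ) (i : Fin 4) (η : ℝ) (x y : HG n) : ℝ :=
  φ (rho (n := n) x y / η) * (c * kc (2*(n-1)) i (mul (n := n) (inv (n := n) y) x))

/-- The truncated Cauchy–Szegő kernels satisfy the uniform standard estimates and cancellations. -/
lemma czf (hn : 2 ≤ n) {c : ℝ} (hc : c ≠ 0) {φ : ℝ → ℝ} (hφs : ContDiff ℝ (⊤ : ℕ∞) φ)
    (hφ0 : ∀ t : ℝ, t ≤ 1/2 → φ t = 0) (hφ1 : ∀ t : ℝ, 1 ≤ t → φ t = 1)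
    (hφr : ∀ t : ℝ, 0 ≤ φ t ∧ φ t ≤ 1) (i : Fin 4) :
    ∃ A, CZ.CZF (volume : Measure (HG n)) (6+4*(n-1)) A (kη c φ i) := by
  obtain ⟨L, hL, hφL⟩ := cutoff_lipschitz hφs hφ0 hφ1
  obtain ⟨C, hC, hk⟩ := kc_size (n := n) (2*(n-1))
  obtain ⟨C1, hC1, hk1⟩ := kc_lip (n := n) (2*(n-1))
  have hQ : 2*(3+2*(n-1)) = 6+4*(n-1) := by ring
  rw [hQ] at hk hk1
  set Q := 6+4*(n-1) with hQd
  have hc' : 0 < |c| := abs_pos.2 hc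
  set k : G n → ℝ := fun g => c * kc (2*(n-1)) i g with hkd
  have hmk : Measurable k := (measurable_kc _ _).const_mul c
  have hk' : ∀ g, g ≠ 0 → |k g| ≤ (|c| * C) / hnorm g ^ Q := by
    intro g hg
    rw [hkd]; simp only [abs_mul]
    rw [mul_div_assoc]
    exact mul_le_mul_of_nonneg_left (hk i g hg) (abs_nonneg _)
  have hk1' : ∀ (g g' : G n) (d : ℝ), g ≠ 0 → 0 ≤ d →
      6*d ≤ hnorm g → ‖toQ g' - toQ g‖ ≤ d^2 + 2*(d*hnorm g) →
      |k g - k g'| ≤ (|c| * C1) * d / hnorm g ^ (Q+1) := by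
    intro g g' d hg hd0 hd hq
    have := hk1 i g g' d hg hd0 hd hq
    rw [hkd]; simp only [← mul_sub, abs_mul]
    rw [mul_assoc, mul_div_assoc]
    exact mul_le_mul_of_nonneg_left this (abs_nonneg _)
  have hCc : 0 < |c| * C := by positivity
  have hC1c : 0 < |c| * C1 := by positivity
  set A0 := |c| * C * 2^Q with hA0
  set A := 3^(Q+1) * (|c| * C1 + 2*L*(|c| * C)*2^Q) + 36*A0 with hA
  have hA0p : 0 < A0 := by positivity
  have hA0A : A0 ≤ A := by
    rw [hA]
    have : 0 ≤ 3^(Q+1) * (|c| * C1 + 2*L*(|c| * C)*2^Q) := by positivity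
    linarith
  have hsz := fun (η : ℝ) (hη : 0 < η) (g : G n) => trunc_size hφ0 hφr hCc hk' hη g
  have hlp := fun (η : ℝ) (hη : 0 < η) (g g' : G n) (d : ℝ) =>
    trunc_lip hφ0 hφ1 hφr hL hφL hCc hC1c hk' hk1' hη (g := g) (g' := g') (d := d)
  have hφm : Measurable φ := hφs.continuous.measurable
  -- the difference of two truncations, as a function on the group, has integral zero
  have hcan : ∀ η η', 0 < η → η ≤ η' → ∫ g : G n,
      (φ (hnorm g / η) * k g - φ (hnorm g / η') * k g) = 0 := by
    intro η η' hη hηη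
    have hη' := hη.trans_le hηη
    have h := cancel hn i (ψ := fun s => φ (s/η) - φ (s/η')) (M := 1) (a := η/2) (b := η')
      ((hφm.comp (measurable_id.div_const η)).sub (hφm.comp (measurable_id.div_const η')))
      (fun s => abs_le.2 ⟨by linarith [(hφr (s/η)).1, (hφr (s/η')).2],
        by linarith [(hφr (s/η)).2, (hφr (s/η')).1]⟩) (by positivity)
      (fun s hs => by
        rw [hφ0 _ (by rw [div_le_iff₀ hη]; linarith), hφ0 _ (by rw [div_le_iff₀ hη']; linarith),
          sub_zero])
      (fun s hs => by
        rw [hφ1 _ (by rw [le_div_iff₀ hη]; linarith), hφ1 _ (by rw [le_div_iff₀ hη']; linarith),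
          sub_self])
    have e : ∀ g : G n, φ (hnorm g / η) * k g - φ (hnorm g / η') * k g
        = c * ((φ (hnorm g / η) - φ (hnorm g / η')) * kc (2*(n-1)) i g) := by
      intro g; rw [hkd]; ring
    simp only [e]
    rw [integral_const_mul, h, mul_zero]
  have hmF : ∀ η η', Measurable fun g : G n => φ (hnorm g / η) * k g - φ (hnorm g / η') * k g := by
    intro η η'
    have h : ∀ η, Measurable fun g : G n => φ (hnorm g / η) * k g := fun η =>
      (hφm.comp (continuous_hnorm.measurable.div_const η)).mul hmk
    exact (h η).sub (h η')
  refine ⟨A, ?_⟩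
  constructor
  · exact hA0p.trans_le hA0A
  · omega
  · intro η hη
    have hm : Measurable fun q : G n × G n => mul (inv q.2) q.1 :=
      (continuous_mul'.comp ((continuous_inv'.comp continuous_snd).prodMk continuous_fst)).measurable
    have h : Measurable fun q : G n × G n =>
        φ (hnorm (mul (inv q.2) q.1) / η) * k (mul (inv q.2) q.1) :=
      (hφm.comp ((continuous_hnorm.measurable.comp hm).div_const η)).mul (hmk.comp hm)
    exact h
  · intro η hη x y
    have h := hsz η hη (mul (n := n) (inv (n := n) y) x)
    refine (show |kη c φ i η x y| ≤ A0 / max η (dist x y) ^ Q from h).trans ?_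
    have : 0 < max η (dist x y) := lt_max_of_lt_left hη
    gcongr
  · intro η hη x x' y hd
    have e : mul (n := n) (inv (n := n) y) x'
        = mul (n := n) (mul (n := n) (inv (n := n) y) x) (mul (n := n) (inv (n := n) x) x') :=
      inv_mul_chain (n := n) x x' y
    have hdist : hnorm (mul (n := n) (inv (n := n) x) x') = dist x x' := by
      rw [dist_comm]; rfl
    refine hlp η hη (mul (n := n) (inv (n := n) y) x) (mul (n := n) (inv (n := n) y) x')
      (dist x x') dist_nonneg (abs_rho_sub (n := n) x x' y) ?_ hd
    have := norm_toQ_mul_sub_left (mul (n := n) (inv (n := n) y) x)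
      (mul (n := n) (inv (n := n) x) x')
    rw [← e, hdist] at this
    linarith
  · intro η hη x y y' hd
    have e : mul (n := n) (inv (n := n) y') x
        = mul (n := n) (mul (n := n) (inv (n := n) y') y) (mul (n := n) (inv (n := n) y) x) :=
      inv_mul_chain (n := n) y x y'
    have hdist : hnorm (mul (n := n) (inv (n := n) y') y) = dist y y' := rfl
    have ha : |rho (n := n) x y' - rho (n := n) x y| ≤ rho (n := n) y y' :=
      abs_rho_sub' (n := n) x y y'
    refine hlp η hη (mul (n := n) (inv (n := n) y) x) (mul (n := n) (inv (n := n) y') x)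
      (dist y y') dist_nonneg ha ?_ hd
    have := norm_toQ_mul_sub_right (mul (n := n) (inv (n := n) y') y)
      (mul (n := n) (inv (n := n) y) x)
    rw [← e, hdist] at this
    linarith
  · intro η η' hη hηη x y hd
    have hη' := hη.trans_le hηη
    change η' ≤ rho (n := n) x y at hd
    rw [kη, kη, hφ1 _ (by rw [le_div_iff₀ hη]; linarith),
      hφ1 _ (by rw [le_div_iff₀ hη']; linarith)]
  · intro η η' hη hηη x
    have hmp : MeasurePreserving (fun y : G n => mul (inv y) x) volume volume :=
      (mp_mul_right (n := n) x).comp mp_inv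
    have h := integral_map (μ := (volume : Measure (G n))) hmp.measurable.aemeasurable
      (hmF η η').aestronglyMeasurable
    rw [hmp.map_eq, hcan η η' hη hηη] at h
    exact h.symm
  · intro η η' hη hηη y
    have hmp : MeasurePreserving (fun x : G n => mul (inv (n := n) y) x) volume volume :=
      mp_mul_left _
    have h := integral_map (μ := (volume : Measure (G n))) hmp.measurable.aemeasurable
      (hmF η η').aestronglyMeasurable
    rw [hmp.map_eq, hcan η η' hη hηη] at h
    exact h.symm

end GA7
end QHeis

/-! ### `A_p` weights and Morrey norms on the group -/

namespace QHeis
section GA8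

variable {n : ℕ}

lemma ball_vol (g : G n) {r : ℝ} (hr : 0 < r) :
    volume (QHeis.ball g r) ≠ 0 ∧ volume (QHeis.ball g r) ≠ ⊤ := by
  have h := (hg_reg (n := n)).vol g r hr
  have h0 := (hg_reg (n := n)).pos g hr
  refine ⟨h0.ne', ?_⟩
  change volume (QHeis.ball g r) = _ at h
  rw [h]; exact ENNReal.ofReal_ne_top

lemma measurableSet_ball' (g : G n) (r : ℝ) : MeasurableSet (QHeis.ball g r) :=
  measurableSet_ball (α := HG n) (x := g) (ε := r)

/-- Either an `A_p` weight is positive almost everywhere, or it vanishes almost everywhere. -/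
lemma weight_dichotomy {p : ℝ} (hp : 1 < p) {w : G n → ℝ} (hwm : Measurable w)
    (hw : IsApGt1 p w) :
    (∀ᵐ x, ENNReal.ofReal (w x) ≠ 0) ∨ ∀ᵐ x, ENNReal.ofReal (w x) = 0 := by
  by_cases h : ∀ᵐ x, ENNReal.ofReal (w x) ≠ 0
  · exact Or.inl h
  right
  obtain ⟨C, hC⟩ := hw
  have hwm' : Measurable fun x => ENNReal.ofReal (w x) := hwm.ennreal_ofReal
  set Z : Set (G n) := {x | ENNReal.ofReal (w x) = 0} with hZ
  have hZm : MeasurableSet Z := hwm' (measurableSet_singleton 0)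
  have hZ0 : volume Z ≠ 0 := by
    intro h0
    apply h
    rw [ae_iff]
    simpa only [ne_eq, not_not] using h0
  have hcov : ∀ s : Set (G n), s = ⋃ N : ℕ, s ∩ QHeis.ball 0 (N+1) := by
    intro s
    refine Set.Subset.antisymm (fun x hx => ?_) (Set.iUnion_subset fun N => Set.inter_subset_left)
    obtain ⟨N, hN⟩ := exists_nat_gt (rho x 0)
    exact Set.mem_iUnion.2 ⟨N, hx, show rho x 0 < N + 1 by linarith⟩
  obtain ⟨N, hN⟩ : ∃ N : ℕ, volume (Z ∩ QHeis.ball 0 (N+1)) ≠ 0 := by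
    by_contra! h0
    apply hZ0
    rw [hcov Z]
    exact measure_iUnion_null h0
  -- on every ball containing this one the dual weight has infinite mass
  have hbig : ∀ M : ℕ, N ≤ M → wInt w (QHeis.ball 0 (M+1)) = 0 := by
    intro M hM
    have hr : (0:ℝ) < M + 1 := by positivity
    obtain ⟨hV0, hVt⟩ := ball_vol (0 : G n) hr
    have hsub : Z ∩ QHeis.ball 0 (N+1) ⊆ QHeis.ball (0 : G n) (M+1) := by
      rintro x ⟨-, hx⟩
      have hx' : rho x 0 < N + 1 := hx
      have : (N:ℝ) ≤ M := by exact_mod_cast hM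
      exact show rho x 0 < M + 1 by linarith
    have hinf : ∫⁻ x in QHeis.ball (0 : G n) (M+1), ENNReal.ofReal (w x) ^ (-(1/(p-1))) = ⊤ := by
      rw [eq_top_iff]
      calc (⊤:ℝ≥0∞) = ⊤ * volume (Z ∩ QHeis.ball 0 (N+1)) := (ENNReal.top_mul hN).symm
        _ = ∫⁻ x in Z ∩ QHeis.ball 0 (N+1), ⊤ := (setLIntegral_const _ _).symm
        _ = ∫⁻ x in Z ∩ QHeis.ball 0 (N+1), ENNReal.ofReal (w x) ^ (-(1/(p-1))) := by
            refine setLIntegral_congr_fun (hZm.inter (measurableSet_ball' _ _)) fun x hx => ?_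
            have hx0 : ENNReal.ofReal (w x) = 0 := hx.1
            rw [hx0, ENNReal.zero_rpow_of_neg]
            have : 0 < 1/(p-1) := one_div_pos.2 (by linarith)
            linarith
        _ ≤ _ := lintegral_mono_set hsub
    have h1 := hC 0 (M+1) hr
    rw [hinf, ENNReal.top_div_of_ne_top hVt, ENNReal.top_rpow_of_pos (by linarith)] at h1
    by_contra hne
    rw [ENNReal.mul_top (ENNReal.div_pos hne hVt).ne'] at h1
    exact ENNReal.ofReal_ne_top (top_le_iff.1 h1)
  have hz : ∀ M : ℕ, volume ({x | ENNReal.ofReal (w x) ≠ 0} ∩ QHeis.ball 0 (M+1)) = 0 := by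
    intro M
    have h1 := hbig (max N M) (le_max_left _ _)
    rw [wInt, lintegral_eq_zero_iff hwm'] at h1
    have h2 := (ae_restrict_iff' (measurableSet_ball' _ _)).1 h1
    refine measure_mono_null ?_ h2
    rintro x ⟨hx, hxb⟩
    have hxb' : rho x 0 < M + 1 := hxb
    have hm : (M:ℝ) ≤ (max N M : ℕ) := by exact_mod_cast le_max_right _ _
    intro hc
    exact hx (hc (show rho x 0 < (max N M : ℕ) + 1 by linarith))
  rw [ae_iff, hcov {x | ¬ ENNReal.ofReal (w x) = 0}]
  exact measure_iUnion_null hz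

lemma isAp_ap {p : ℝ} (hp : 1 < p) {w : G n → ℝ} (hwm : Measurable w)
    (hwf : ∀ (g : G n) (r : ℝ), 0 < r → wInt w (QHeis.ball g r) < ⊤)
    (hw : IsApGt1 p w) (h0 : ∀ᵐ x, ENNReal.ofReal (w x) ≠ 0) :
    ∃ C, CZ.Ap (volume : Measure (HG n)) p (fun x : HG n => ENNReal.ofReal (w x)) C := by
  obtain ⟨C, hC⟩ := hw
  refine ⟨ENNReal.ofReal C, ?_⟩
  constructor
  · exact hwm.ennreal_ofReal
  · exact h0
  · exact ae_of_all _ fun x => ENNReal.ofReal_ne_top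
  · intro x r
    rcases le_or_gt r 0 with hr | hr
    · rw [Metric.ball_eq_empty.2 hr]; simp
    · exact hwf x r hr
  · intro x r hr
    obtain ⟨hV0, hVt⟩ := ball_vol x hr
    have h := hC x r hr
    have key : ∀ a S V D : ℝ≥0∞, V ≠ 0 → V ≠ ⊤ → a / V * (S / V) ^ (p-1) ≤ D →
        a * S ^ (p-1) ≤ D * V ^ p := by
      intro a S V D hV0 hVt h
      have e1 : a = a / V * V := (ENNReal.div_mul_cancel hV0 hVt).symm
      have e2 : S ^ (p-1) = (S / V) ^ (p-1) * V ^ (p-1) := by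
        rw [← ENNReal.mul_rpow_of_nonneg _ _ (by linarith), ENNReal.div_mul_cancel hV0 hVt]
      have e3 : V ^ p = V * V ^ (p-1) := by
        conv_rhs => rw [← ENNReal.rpow_one V, ← ENNReal.rpow_mul, one_mul,
          ← ENNReal.rpow_add _ _ hV0 hVt]
        congr 1; ring
      calc a * S ^ (p-1) = (a / V * V) * ((S / V) ^ (p-1) * V ^ (p-1)) := by rw [← e1, ← e2]
        _ = (a / V * (S / V) ^ (p-1)) * (V * V ^ (p-1)) := by ring
        _ ≤ D * (V * V ^ (p-1)) := by gcongr
        _ = D * V ^ p := by rw [e3]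
    exact key _ _ _ _ hV0 hVt h
  · exact ENNReal.ofReal_ne_top

lemma morreyNormE_zero {p κ : ℝ} (hp : 1 < p) {w : G n → ℝ}
    (h0 : ∀ᵐ x, ENNReal.ofReal (w x) = 0) (F : G n → ℝ≥0∞) : morreyNormE p κ w F = 0 := by
  rw [morreyNormE]
  simp only [ENNReal.iSup_eq_zero]
  intro g r hr
  have : ∫⁻ x in QHeis.ball g r, F x ^ p * ENNReal.ofReal (w x) = 0 := by
    rw [lintegral_congr_ae (g := fun _ => 0), lintegral_zero]
    refine ae_restrict_of_ae (h0.mono fun x hx => ?_)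
    simp only [hx, mul_zero]
  rw [this, ENNReal.zero_div, ENNReal.zero_rpow_of_pos (by positivity)]

lemma morreyNormE_le {p κ : ℝ} (hp : 1 < p) {w : G n → ℝ} {F : G n → ℝ≥0∞} {N : ℝ≥0∞}
    (h : CZ.MB (volume : Measure (HG n)) p κ (fun x : HG n => ENNReal.ofReal (w x)) N F) :
    morreyNormE p κ w F ≤ N ^ (1/p) := by
  refine iSup_le fun g => iSup_le fun r => iSup_le fun hr => ?_
  refine ENNReal.rpow_le_rpow ?_ (by positivity)
  exact ENNReal.div_le_of_le_mul (h g r hr)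

lemma mb_of_morreyNormE {p κ : ℝ} (hp : 1 < p) (hκ : 0 < κ) {w : G n → ℝ} (hwm : Measurable w)
    (hwf : ∀ (g : G n) (r : ℝ), 0 < r → wInt w (QHeis.ball g r) < ⊤)
    (h0 : ∀ᵐ x, ENNReal.ofReal (w x) ≠ 0) (F : G n → ℝ≥0∞) :
    CZ.MB (volume : Measure (HG n)) p κ (fun x : HG n => ENNReal.ofReal (w x))
      (morreyNormE p κ w F ^ p) F := by
  intro g r hr
  have hne : wInt w (QHeis.ball (n := n) g r) ≠ 0 := by
    intro h
    rw [wInt, lintegral_eq_zero_iff hwm.ennreal_ofReal] at h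
    have h1 := (ae_restrict_iff' (measurableSet_ball' (n := n) g r)).1 h
    refine (ball_vol (n := n) g hr).1 (measure_mono_null (fun x hx => ?_)
      (ae_iff.1 (h1.and h0)))
    rintro ⟨h2, h3⟩
    exact h3 (h2 hx)
  have hb0 : wInt w (QHeis.ball (n := n) g r) ^ κ ≠ 0 := by
    rw [Ne, ENNReal.rpow_eq_zero_iff_of_pos hκ]; exact hne
  have hbt : wInt w (QHeis.ball (n := n) g r) ^ κ ≠ ⊤ :=
    ENNReal.rpow_ne_top_of_nonneg hκ.le (hwf g r hr).ne
  have h1 : ((∫⁻ x in QHeis.ball (n := n) g r, F x ^ p * ENNReal.ofReal (w x))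
      / wInt w (QHeis.ball (n := n) g r) ^ κ) ^ (1/p) ≤ morreyNormE p κ w F :=
    le_iSup_of_le g (le_iSup_of_le r (le_iSup_of_le hr le_rfl))
  have h2 := ENNReal.rpow_le_rpow h1 (z := p) (by linarith)
  rw [← ENNReal.rpow_mul, one_div_mul_cancel (by linarith), ENNReal.rpow_one,
    ENNReal.div_le_iff hb0 hbt] at h2
  exact h2

/-- The quaternion-valued maximal truncation is controlled by the four scalar ones. -/
lemma CstarE_le (c : ℝ) (φ : ℝ → ℝ) (f : G n → ℝ) (x : G n) :
    CstarE c φ f x ≤ ∑ i, CZ.Tst (volume : Measure (HG n)) (kη c φ i) f x := by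
  refine iSup_le fun η => iSup_le fun hη => ?_
  have h1 : ∀ i, ‖cp i (Ceta c φ η f x)‖ₑ ≤ CZ.Tst (volume : Measure (HG n)) (kη c φ i) f x := by
    intro i
    by_cases hI : Integrable fun h : G n => (φ (rho x h / η) * f h) • Kker2 c x h
    · have e : cp i (Ceta c φ η f x) = CZ.op (volume : Measure (HG n)) (kη c φ i η) f x := by
        rw [Ceta, ← ContinuousLinearMap.integral_comp_comm _ hI]
        refine integral_congr_ae (ae_of_all _ fun h => ?_)
        have e2 : Kker2 c x h = c • Fk (2*(n-1)) (toQ (mul (inv h) x)) := rfl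
        simp only [e2, map_smul, smul_eq_mul]
        change φ (rho x h / η) * f h * (c * kc (2*(n-1)) i (mul (inv h) x))
          = φ (rho x h / η) * (c * kc (2*(n-1)) i (mul (inv h) x)) * f h
        ring
      rw [e]
      exact CZ.le_Tst _ _ _ _ hη
    · rw [Ceta, integral_undef hI, map_zero, enorm_zero]; exact zero_le
  calc ENNReal.ofReal ‖Ceta c φ η f x‖ ≤ ENNReal.ofReal (∑ i, |cp i (Ceta c φ η f x)|) :=
        ENNReal.ofReal_le_ofReal (norm_le_sum_cp _)
    _ = ∑ i, ‖cp i (Ceta c φ η f x)‖ₑ := by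
        rw [ENNReal.ofReal_sum_of_nonneg fun i _ => abs_nonneg _]
        simp only [Real.enorm_eq_ofReal_abs]
    _ ≤ _ := Finset.sum_le_sum fun i _ => h1 i

/-- Boundedness of both maximal operators, with a constant in `[0, ∞]`. -/
lemma main_ennreal (hn : 2 ≤ n) {p κ : ℝ} (hp : 1 < p) (hκ0 : 0 < κ) (hκ1 : κ < 1)
    {w : G n → ℝ} (hwm : Measurable w)
    (hwf : ∀ (g : G n) (r : ℝ), 0 < r → wInt w (QHeis.ball g r) < ⊤)
    (hw : IsApGt1 p w) {c : ℝ} (hc : c ≠ 0) {φ : ℝ → ℝ} (hφs : ContDiff ℝ (⊤ : ℕ∞) φ)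
    (hφ0 : ∀ t : ℝ, t ≤ 1/2 → φ t = 0) (hφ1 : ∀ t : ℝ, 1 ≤ t → φ t = 1)
    (hφr : ∀ t : ℝ, 0 ≤ φ t ∧ φ t ≤ 1) :
    ∃ D : ℝ≥0∞, D ≠ ⊤ ∧ ∀ f : G n → ℝ, MemMorrey p κ w f →
      morreyNormE p κ w (CstarE c φ f) + morreyNormE p κ w (maxFunE f) ≤ D * morreyNorm p κ w f := by
  rcases weight_dichotomy hp hwm hw with h0 | h0
  swap
  · exact ⟨0, by simp, fun f _ => by
      rw [morreyNormE_zero hp h0, morreyNormE_zero hp h0, add_zero]; exact zero_le⟩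
  have hp0 : 0 < p := by linarith
  obtain ⟨C, hW⟩ := isAp_ap hp hwm hwf hw h0
  have hT : ∀ i, ∃ C' : ℝ≥0∞, C' ≠ ⊤ ∧ ∀ f : HG n → ℝ, Measurable f → ∀ N : ℝ≥0∞, N ≠ ⊤ →
      CZ.MB volume p κ (fun x : HG n => ENNReal.ofReal (w x)) N (fun y => ‖f y‖ₑ) →
      CZ.MM volume p κ (fun x : HG n => ENNReal.ofReal (w x)) (C' * N)
        (CZ.Tst volume (kη c φ i) f) := by
    intro i
    obtain ⟨A, hA⟩ := czf hn hc hφs hφ0 hφ1 hφr i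
    exact hA.morrey hg_reg hp hκ0 hκ1 hW
  choose T hTt hT using hT
  obtain ⟨D, hDt, hD⟩ := CZ.maxFn_morrey hg_reg hp hκ0 hκ1 hW
  set b : ℝ≥0∞ := 2^(p-1) with hb
  have hbt : b ≠ ⊤ := ENNReal.rpow_ne_top_of_nonneg (by linarith) (by simp)
  set E : ℝ≥0∞ := b * (b * (b * (T 0 + T 1) + T 2) + T 3) with hE
  have hEt : E ≠ ⊤ := by
    have := hTt 0; have := hTt 1; have := hTt 2; have := hTt 3
    finiteness
  refine ⟨E ^ (1/p) + D ^ (1/p), ?_, fun f hf => ?_⟩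
  · exact ENNReal.add_ne_top.2 ⟨ENNReal.rpow_ne_top_of_nonneg (by positivity) hEt,
      ENNReal.rpow_ne_top_of_nonneg (by positivity) hDt⟩
  obtain ⟨hfm, hft⟩ := hf
  set S := morreyNorm p κ w f with hS
  have hSt : S ^ p ≠ ⊤ := ENNReal.rpow_ne_top_of_nonneg hp0.le hft.ne
  have hmb := mb_of_morreyNormE hp hκ0 hwm hwf h0 (fun x => ENNReal.ofReal |f x|)
  have hroot : ∀ X : ℝ≥0∞, (X * S ^ p) ^ (1/p) = X ^ (1/p) * S := by
    intro X
    rw [ENNReal.mul_rpow_of_nonneg _ _ (by positivity), ← ENNReal.rpow_mul,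
      mul_one_div_cancel hp0.ne', ENNReal.rpow_one]
  have hmb' : CZ.MB (volume : Measure (HG n)) p κ (fun x : HG n => ENNReal.ofReal (w x)) (S ^ p)
      (fun y => ‖f y‖ₑ) := by
    simp only [Real.enorm_eq_ofReal_abs]
    exact hmb
  have hMM := fun i => hT i f hfm (S ^ p) hSt hmb'
  have hsum := (((hMM 0).add hp.le hW.meas (hMM 1)).add hp.le hW.meas (hMM 2)).add
    hp.le hW.meas (hMM 3)
  have hC : CZ.MB (volume : Measure (HG n)) p κ (fun x : HG n => ENNReal.ofReal (w x))
      (E * S ^ p) (CstarE c φ f) := by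
    have e : E * S ^ p = b * (b * (b * (T 0 * S ^ p + T 1 * S ^ p) + T 2 * S ^ p)
        + T 3 * S ^ p) := by rw [hE]; ring
    rw [e]
    refine (hsum.mono fun y => ?_).mb hp0
    refine (CstarE_le c φ f y).trans_eq ?_
    rw [Fin.sum_univ_four]
  have hM : CZ.MB (volume : Measure (HG n)) p κ (fun x : HG n => ENNReal.ofReal (w x))
      (D * S ^ p) (maxFunE f) := hD _ hfm.norm.ennreal_ofReal (S ^ p) hmb
  calc _ ≤ (E * S ^ p) ^ (1/p) + (D * S ^ p) ^ (1/p) :=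
        add_le_add (morreyNormE_le hp hC) (morreyNormE_le hp hM)
    _ = (E ^ (1/p) + D ^ (1/p)) * S := by rw [hroot, hroot, add_mul]

end GA8
end QHeis

open QHeis MeasureTheory in
/-- for `p ∈ (1,∞)`, `κ ∈ (0,1)`, `w ∈ A_p(𝓗^{n-1})`, the maximal
truncated Cauchy–Szegő operator `𝒞_*` and the Hardy–Littlewood maximal operator `M`
are bounded on the weighted Morrey space `L^{p,κ}_w(𝓗^{n-1})`:
`‖𝒞_* f‖ + ‖Mf‖ ≤ C ‖f‖`. -/
theorem maximal_operators_bounded_on_weighted_morrey (n : ℕ) (hn : 2 ≤ n)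
    (p κ : ℝ) (hp : 1 < p) (hκ0 : 0 < κ) (hκ1 : κ < 1)
    (w : G n → ℝ) (hw : IsAp p w)
    (c : ℝ) (hc : c ≠ 0)
    (φ : ℝ → ℝ) (hφs : ContDiff ℝ (⊤ : ℕ∞) φ)
    (hφ0 : ∀ t : ℝ, t ≤ 1/2 → φ t = 0) (hφ1 : ∀ t : ℝ, 1 ≤ t → φ t = 1)
    (hφr : ∀ t : ℝ, 0 ≤ φ t ∧ φ t ≤ 1) :
    ∃ C : ℝ, 0 < C ∧ ∀ f : G n → ℝ, MemMorrey p κ w f →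
      morreyNormE p κ w (CstarE c φ f) + morreyNormE p κ w (maxFunE f)
        ≤ ENNReal.ofReal C * morreyNorm p κ w f := by
  obtain ⟨hwm, -, hwf, h | ⟨-, hA⟩⟩ := hw
  · exact absurd h.1 hp.ne'
  obtain ⟨D, hD, h⟩ := main_ennreal hn hp hκ0 hκ1 hwm hwf hA hc hφs hφ0 hφ1 hφr
  -- `D` may vanish, while the constant has to be positive
  refine ⟨D.toReal + 1, by positivity, fun f hf => (h f hf).trans ?_⟩
  gcongr
  exact (ENNReal.ofReal_toReal hD).symm.le.trans (ENNReal.ofReal_le_ofReal (by linarith))
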